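/- Let (X,d,m) be a compact normalized metric measure space which is a CD(K,∞) space for some K ∈ ℝ, and let μ ∈ D(Ent_m). Then there exists a unique gradient flow (in the Energy Dissipation Equality sense) of Ent_m in the metric space (P(X),W₂) starting from μ. -/

import Mathlib

open Filter Topology Set MeasureTheory
open scoped ENNReal NNReal

/-- `γ` is a coupling (admissible transport plan) between `μ` and `ν`. -/
def IsCoupling {X : Type*} [MeasurableSpace X]
    (μ ν : MeasureTheory.Measure X) (γ : MeasureTheory.Measure (X × X)) : Prop :=
  MeasureTheory.IsProbabilityMeasure γ ∧
    γ.map Prod.fst = μ ∧ γ.map Prod.snd = ν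

/-- The quadratic Wasserstein distance
`W₂(μ,ν) = ( inf { ∫ d²(x,y) dγ : γ coupling of (μ,ν) } )^{1/2}`. -/
noncomputable def W2 {X : Type*} [MetricSpace X] [MeasurableSpace X]
    (μ ν : MeasureTheory.Measure X) : ℝ :=
  Real.sqrt (sInf {c : ℝ | ∃ γ : MeasureTheory.Measure (X × X),
    IsCoupling μ ν γ ∧ c = ∫ p, dist p.1 p.2 ^ 2 ∂γ})

/-- The metric speed `|μ̇_t|` of a curve of measures w.r.t. `W₂`, written as a `limsup`
(for an `AC²` curve the limit exists for a.e. `t` and coincides with it). -/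
noncomputable def W2speed {X : Type*} [MetricSpace X] [MeasurableSpace X]
    (μ : ℝ → MeasureTheory.Measure X) (t : ℝ) : ℝ :=
  limsup (fun h => W2 (μ (t + h)) (μ t) / |h|) (𝓝[≠] (0 : ℝ))

/-- The nonnegative integrand `z log z - z + 1 ≥ 0` used to define the relative entropy:
for probability measures `ρ = f·σ` one has `∫ (f log f - f + 1) dσ = ∫ f log f dσ`. -/
noncomputable def entFun (z : ℝ) : ℝ := z * Real.log z - z + 1

open scoped Classical in
/-- The relative entropy `Ent_σ(ρ) = ∫ f log f dσ` if `ρ = f·σ ≪ σ`, and `+∞` otherwise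
(for probability measures `ρ, σ` this agrees with `∫⁻ (f log f - f + 1) dσ ∈ [0,∞]`). -/
noncomputable def Ent {X : Type*} [MeasurableSpace X]
    (σ ρ : MeasureTheory.Measure X) : ℝ≥0∞ :=
  if ρ ≪ σ then ∫⁻ x, ENNReal.ofReal (entFun ((ρ.rnDeriv σ x).toReal)) ∂σ else ⊤

/-- Push-forward of `μ` via the plan `γ` (Definition 5.3):
`γ_♯μ := π²_♯ γ_μ`, where `dγ_μ(x,y) = (dμ/d(π¹_♯γ))(x) dγ(x,y)`. -/
noncomputable def planPush {X : Type*} [MeasurableSpace X]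
    (γ : MeasureTheory.Measure (X × X)) (μ : MeasureTheory.Measure X) :
    MeasureTheory.Measure X :=
  (γ.withDensity (fun p => μ.rnDeriv (γ.map Prod.fst) p.1)).map Prod.snd

/-- The punctured `W₂`-neighborhood filter of `μ` within the probability measures:
the basis sets are `{ν : 0 < W₂(μ,ν) < ε}`, `ε > 0`. -/
noncomputable def W2nbhd {X : Type*} [MetricSpace X] [MeasurableSpace X]
    (μ : MeasureTheory.Measure X) : Filter (MeasureTheory.Measure X) :=
  ⨅ ε ∈ Set.Ioi (0 : ℝ),
    𝓟 {ν | MeasureTheory.IsProbabilityMeasure ν ∧ 0 < W2 μ ν ∧ W2 μ ν < ε}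

/-- The descending slope of the entropy,
`|D⁻Ent_m|(μ) = limsup_{ν → μ} (Ent_m(μ) - Ent_m(ν))⁺ / W₂(μ,ν)`
(the truncated subtraction in `ℝ≥0∞` is exactly the positive part). -/
noncomputable def entSlope {X : Type*} [MetricSpace X] [MeasurableSpace X]
    (m μ : MeasureTheory.Measure X) : ℝ≥0∞ :=
  limsup (fun ν => (Ent m μ - Ent m ν) / ENNReal.ofReal (W2 μ ν)) (W2nbhd μ)

/-- `ν` is a gradient flow of `Ent_m` in the Energy Dissipation Equality (EDE) sense in
`(P(X),W₂)` starting from `μ`: a `W₂`-continuous curve of probability measures in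
`D(Ent_m)` starting at `μ`, locally absolutely continuous in `(0,∞)`, such that
`Ent_m(ν_t) = Ent_m(ν_s) + ½∫_t^s |ν̇_r|² dr + ½∫_t^s |D⁻Ent_m|²(ν_r) dr` for all
`0 ≤ t ≤ s`. -/
def IsEntGradientFlow {X : Type*} [MetricSpace X] [MeasurableSpace X]
    (m : MeasureTheory.Measure X) (ν : ℝ → MeasureTheory.Measure X)
    (μ : MeasureTheory.Measure X) : Prop :=
  (∀ t : ℝ, 0 ≤ t → MeasureTheory.IsProbabilityMeasure (ν t)) ∧
  ν 0 = μ ∧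
  (∀ t : ℝ, 0 ≤ t → Ent m (ν t) < ⊤) ∧
  (∀ t : ℝ, 0 ≤ t → ∀ ε : ℝ, 0 < ε → ∃ δ : ℝ, 0 < δ ∧
    ∀ s : ℝ, 0 ≤ s → |s - t| < δ → W2 (ν s) (ν t) < ε) ∧
  (∀ a b : ℝ, 0 < a → a ≤ b → ∃ g : ℝ → ℝ, (∀ r, 0 ≤ g r) ∧
    MeasureTheory.IntegrableOn g (Set.Icc a b) ∧
    ∀ t s : ℝ, a ≤ t → t ≤ s → s ≤ b → W2 (ν t) (ν s) ≤ ∫ r in t..s, g r) ∧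
  (∀ t s : ℝ, 0 ≤ t → t ≤ s →
    Ent m (ν t) = Ent m (ν s)
      + (∫⁻ r in Set.Ioc t s, ENNReal.ofReal ((W2speed ν r) ^ 2)) / 2
      + (∫⁻ r in Set.Ioc t s, (entSlope m (ν r)) ^ 2) / 2)

/-- `(X,d,m)` is a `CD(K,∞)` space: the entropy `Ent_m` is `K`-geodesically convex in
`(P(X),W₂)`, i.e. any two measures in `D(Ent_m)` are joined by a constant speed `W₂`-geodesic
along which `Ent_m(μ_t) ≤ (1-t)Ent_m(μ₀) + tEnt_m(μ₁) - (K/2)t(1-t)W₂²(μ₀,μ₁)`. -/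
def IsCDKinf {X : Type*} [MetricSpace X] [MeasurableSpace X]
    (m : MeasureTheory.Measure X) (K : ℝ) : Prop :=
  ∀ μ₀ μ₁ : MeasureTheory.Measure X,
    MeasureTheory.IsProbabilityMeasure μ₀ → MeasureTheory.IsProbabilityMeasure μ₁ →
    Ent m μ₀ < ⊤ → Ent m μ₁ < ⊤ →
    ∃ μ : ℝ → MeasureTheory.Measure X,
      (∀ t ∈ Set.Icc (0 : ℝ) 1, MeasureTheory.IsProbabilityMeasure (μ t)) ∧
      μ 0 = μ₀ ∧ μ 1 = μ₁ ∧
      (∀ s ∈ Set.Icc (0 : ℝ) 1, ∀ t ∈ Set.Icc (0 : ℝ) 1,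
        W2 (μ s) (μ t) = |s - t| * W2 μ₀ μ₁) ∧
      (∀ t ∈ Set.Icc (0 : ℝ) 1, Ent m (μ t) ≠ ⊤ ∧
        (Ent m (μ t)).toReal ≤ (1 - t) * (Ent m μ₀).toReal + t * (Ent m μ₁).toReal
          - K / 2 * t * (1 - t) * (W2 μ₀ μ₁) ^ 2)

/-- The descending slope of a functional on a metric space. -/
noncomputable def descSlope {Y : Type*} [MetricSpace Y] (E : Y → ℝ≥0∞) (y : Y) : ℝ≥0∞ :=
  limsup (fun z => (E y - E z) / ENNReal.ofReal (dist y z)) (𝓝[≠] y)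

/-- The metric speed of a curve, as a `limsup` of difference quotients. -/
noncomputable def metricSpeed {Y : Type*} [MetricSpace Y] (y : ℝ → Y) (t : ℝ) : ℝ :=
  limsup (fun h => dist (y (t + h)) (y t) / |h|) (𝓝[≠] (0 : ℝ))

/-- `K`-convexity of a functional along at least one geodesic between any two points of its
domain. -/
def IsGeodesicallyConvex {Y : Type*} [MetricSpace Y] (E : Y → ℝ≥0∞) (K : ℝ) : Prop :=
  ∀ x z : Y, E x < ⊤ → E z < ⊤ → ∃ γ : ℝ → Y, γ 0 = x ∧ γ 1 = z ∧
    (∀ s ∈ Icc (0 : ℝ) 1, ∀ t ∈ Icc (0 : ℝ) 1, dist (γ s) (γ t) = |s - t| * dist x z) ∧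
    (∀ t ∈ Icc (0 : ℝ) 1, E (γ t) ≠ ⊤ ∧
      (E (γ t)).toReal ≤ (1 - t) * (E x).toReal + t * (E z).toReal
        - K / 2 * t * (1 - t) * (dist x z) ^ 2)

section Slope

variable {Y : Type*} [MetricSpace Y] {E : Y → ℝ≥0∞} {K : ℝ}

lemma IsGeodesicallyConvex.le_descSlope (hE : IsGeodesicallyConvex E K) {x z : Y} (hx : E x < ⊤)
    (hz : E z < ⊤) (hxz : x ≠ z) :
    ENNReal.ofReal (((E x).toReal - (E z).toReal) / dist x z + K / 2 * dist x z)
      ≤ descSlope E x := by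
  obtain ⟨γ, h0, -, hd, hc⟩ := hE x z hx hz
  have hpos : 0 < dist x z := dist_pos.2 hxz
  have hdist : ∀ t ∈ Icc (0 : ℝ) 1, dist x (γ t) = t * dist x z := fun t ht => by
    rw [← h0, hd 0 (by simp) t ht, h0, zero_sub, abs_neg, abs_of_nonneg ht.1]
  have hIcc : ∀ᶠ t in 𝓝[>] (0 : ℝ), t ∈ Ioc (0 : ℝ) 1 := Ioc_mem_nhdsGT one_pos
  have hγ : Tendsto γ (𝓝[>] 0) (𝓝[≠] x) := by
    refine tendsto_nhdsWithin_iff.2 ⟨?_, ?_⟩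
    · rw [tendsto_iff_dist_tendsto_zero]
      have : Tendsto (fun t : ℝ => t * dist x z) (𝓝[>] 0) (𝓝 0) := by
        have h : Tendsto (fun t : ℝ => t * dist x z) (𝓝 0) (𝓝 (0 * dist x z)) :=
          (continuous_id.mul continuous_const).tendsto 0
        rw [zero_mul] at h
        exact h.mono_left nhdsWithin_le_nhds
      refine this.congr' ?_
      filter_upwards [hIcc] with t ht
      rw [dist_comm (γ t), hdist t ⟨ht.1.le, ht.2⟩]
    · filter_upwards [hIcc] with t ht
      have := hdist t ⟨ht.1.le, ht.2⟩
      intro h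
      rw [mem_singleton_iff.1 h, dist_self] at this
      have := mul_pos ht.1 hpos
      linarith
  let q : ℝ → ℝ := fun t =>
    ((E x).toReal - (E z).toReal) / dist x z + K / 2 * (1 - t) * dist x z
  have hq : Tendsto (fun t => ENNReal.ofReal (q t)) (𝓝[>] 0)
      (𝓝 (ENNReal.ofReal (((E x).toReal - (E z).toReal) / dist x z + K / 2 * dist x z))) := by
    have hcont : Continuous fun t => ENNReal.ofReal (q t) :=
      ENNReal.continuous_ofReal.comp (by fun_prop)
    have h := (hcont.tendsto 0).mono_left (nhdsWithin_le_nhds (s := Ioi (0 : ℝ)))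
    simpa [q] using h
  rw [← hq.limsup_eq]
  calc limsup (fun t => ENNReal.ofReal (q t)) (𝓝[>] 0)
      ≤ limsup (fun t => (E x - E (γ t)) / ENNReal.ofReal (dist x (γ t))) (𝓝[>] 0) := by
        refine limsup_le_limsup ?_
        filter_upwards [hIcc] with t ht
        have ht' : t ∈ Icc (0 : ℝ) 1 := ⟨ht.1.le, ht.2⟩
        obtain ⟨htop, hle⟩ := hc t ht'
        have htd : 0 < t * dist x z := mul_pos ht.1 hpos
        rw [hdist t ht', ← ENNReal.ofReal_toReal hx.ne, ← ENNReal.ofReal_toReal htop,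
          ← ENNReal.ofReal_sub _ ENNReal.toReal_nonneg, ← ENNReal.ofReal_div_of_pos htd]
        refine ENNReal.ofReal_le_ofReal ?_
        rw [le_div_iff₀ htd]
        have : q t * (t * dist x z) = t * ((E x).toReal - (E z).toReal)
            + K / 2 * t * (1 - t) * dist x z ^ 2 := by
          simp only [q]; field_simp
        rw [this]
        linarith
    _ = limsup (fun z => (E x - E z) / ENNReal.ofReal (dist x z)) (map γ (𝓝[>] 0)) := rfl
    _ ≤ descSlope E x := limsup_le_limsup_of_le hγ

lemma IsGeodesicallyConvex.sub_le_descSlope_mul (hE : IsGeodesicallyConvex E K) {x z : Y}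
    (hx : E x < ⊤) (hz : E z < ⊤) (hS : descSlope E x ≠ ⊤) :
    (E x).toReal - (E z).toReal
      ≤ (descSlope E x).toReal * dist x z + |K| / 2 * dist x z ^ 2 := by
  rcases eq_or_ne x z with rfl | hxz
  · simp
  have hpos : 0 < dist x z := dist_pos.2 hxz
  have h := (ENNReal.ofReal_le_iff_le_toReal hS).1 (hE.le_descSlope hx hz hxz)
  have h2 : ((E x).toReal - (E z).toReal) ≤
      ((descSlope E x).toReal - K / 2 * dist x z) * dist x z := by
    rw [← div_le_iff₀ hpos]; linarith
  have : -K * dist x z ^ 2 ≤ |K| * dist x z ^ 2 :=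
    mul_le_mul_of_nonneg_right (neg_le_abs K) (by positivity)
  nlinarith

lemma IsGeodesicallyConvex.eventually_lt_descSlope (hE : IsGeodesicallyConvex E K)
    (hlsc : LowerSemicontinuous E) {x : Y} (hx : E x < ⊤) {c : ℝ≥0∞} (hc : c < descSlope E x) :
    ∀ᶠ w in 𝓝 x, E w < ⊤ → c < descSlope E w := by
  obtain ⟨b, hcb, hbS⟩ := ENNReal.lt_iff_exists_nnreal_btwn.1 hc
  obtain ⟨a, hca, hab⟩ := ENNReal.lt_iff_exists_nnreal_btwn.1 hcb
  have hab' : (a : ℝ) < b := by exact_mod_cast hab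
  have hfreq := frequently_lt_of_lt_limsup (by isBoundedDefault) hbS
  have hnear : ∀ᶠ z in 𝓝[≠] x, z ≠ x ∧ |K| / 2 * dist x z < b - a := by
    refine eventually_mem_nhdsWithin.and (eventually_nhdsWithin_of_eventually_nhds ?_)
    have hcont : Continuous fun z => |K| / 2 * dist x z := by fun_prop
    refine (hcont.tendsto x).eventually_lt_const ?_
    simpa using hab'
  obtain ⟨z, hz1, hzx, hz2⟩ := (hfreq.and_eventually hnear).exists
  have hpos : 0 < dist x z := dist_pos.2 hzx.symm
  have hsub : E x - E z ≠ 0 := by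
    intro h; rw [h] at hz1; simp at hz1
  have hzE : E z < ⊤ := lt_of_le_of_lt (by
    by_contra hlt; exact hsub (tsub_eq_zero_of_le (not_le.1 hlt).le)) hx
  have hq : (b : ℝ) < ((E x).toReal - (E z).toReal) / dist x z := by
    rw [← ENNReal.ofReal_toReal hx.ne, ← ENNReal.ofReal_toReal hzE.ne,
      ← ENNReal.ofReal_sub _ ENNReal.toReal_nonneg, ← ENNReal.ofReal_div_of_pos hpos,
      ← ENNReal.ofReal_coe_nnreal] at hz1
    exact (ENNReal.ofReal_lt_ofReal_iff_of_nonneg b.2).1 hz1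
  have hq2 : (a : ℝ) < ((E x).toReal - (E z).toReal) / dist x z + K / 2 * dist x z := by
    have : -|K| * dist x z ≤ K * dist x z :=
      mul_le_mul_of_nonneg_right (neg_abs_le K) hpos.le
    linarith
  -- leave room for a small decrease of the energy
  obtain ⟨ε, hε, hqε⟩ : ∃ ε > 0,
      (a : ℝ) < ((E x).toReal - ε - (E z).toReal) / dist x z + K / 2 * dist x z := by
    have hcont : ContinuousAt (fun ε : ℝ =>
        ((E x).toReal - ε - (E z).toReal) / dist x z + K / 2 * dist x z) 0 := by
      fun_prop (disch := exact hpos.ne')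
    have hev := hcont.eventually (lt_mem_nhds (by simpa using hq2))
    obtain ⟨ε, h1, h2⟩ := ((eventually_nhdsWithin_of_eventually_nhds hev).and
      (eventually_mem_nhdsWithin (a := (0 : ℝ)) (s := Ioi 0))).exists
    exact ⟨ε, h2, h1⟩
  have hev1 : ∀ᶠ w in 𝓝 x,
      (a : ℝ) < ((E x).toReal - ε - (E z).toReal) / dist w z + K / 2 * dist w z := by
    have hcont : ContinuousAt (fun w : Y =>
        ((E x).toReal - ε - (E z).toReal) / dist w z + K / 2 * dist w z) x := by
      fun_prop (disch := exact hpos.ne')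
    exact hcont.eventually (lt_mem_nhds hqε)
  have hev2 : ∀ᶠ w in 𝓝 x, E w < ⊤ → (E x).toReal - ε < (E w).toReal := by
    rcases lt_or_ge ((E x).toReal - ε) 0 with hneg | hnn
    · exact Eventually.of_forall fun w _ => hneg.trans_le ENNReal.toReal_nonneg
    have : ENNReal.ofReal ((E x).toReal - ε) < E x := by
      rw [ENNReal.ofReal_lt_iff_lt_toReal hnn hx.ne]; linarith
    filter_upwards [hlsc x _ this] with w hw hwt
    exact (ENNReal.ofReal_lt_iff_lt_toReal hnn hwt.ne).1 hw
  filter_upwards [hev1, hev2, isOpen_ne.mem_nhds hzx.symm] with w h1 h2 hwz hwt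
  have hwpos : 0 < dist w z := dist_pos.2 hwz
  refine lt_of_lt_of_le ?_ (hE.le_descSlope hwt hzE hwz)
  refine hca.trans ?_
  rw [← ENNReal.ofReal_coe_nnreal]
  refine (ENNReal.ofReal_lt_ofReal_iff_of_nonneg a.2).2 ?_
  refine h1.trans_le ?_
  have := h2 hwt
  gcongr

lemma exists_isMinOn_moreauYosida [CompactSpace Y] (hlsc : LowerSemicontinuous E) (τ : ℝ) (y : Y) :
    ∃ z, ∀ w, E z + ENNReal.ofReal (dist z y ^ 2 / (2 * τ))
      ≤ E w + ENNReal.ofReal (dist w y ^ 2 / (2 * τ)) := by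
  have hl : LowerSemicontinuous fun z => E z + ENNReal.ofReal (dist z y ^ 2 / (2 * τ)) := by
    refine hlsc.add (Continuous.lowerSemicontinuous ?_)
    exact ENNReal.continuous_ofReal.comp (by fun_prop)
  obtain ⟨z, -, hz⟩ := (hl.lowerSemicontinuousOn univ).exists_isMinOn ⟨y, mem_univ y⟩
    isCompact_univ
  exact ⟨z, fun w => hz (mem_univ w)⟩

lemma IsGeodesicallyConvex.exists_resolvent [CompactSpace Y] (hE : IsGeodesicallyConvex E K)
    (hlsc : LowerSemicontinuous E) {τ : ℝ} (hτ : 0 < τ) {y : Y} (hy : E y < ⊤) :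
    ∃ z, E z < ⊤ ∧ descSlope E z ≤ ENNReal.ofReal (dist y z / τ) ∧
      (E z).toReal + (1 + K * τ / 2) * (dist y z ^ 2 / τ) ≤ (E y).toReal := by
  obtain ⟨z, hz⟩ := exists_isMinOn_moreauYosida hlsc τ y
  have hzE : E z < ⊤ := by
    refine lt_of_le_of_lt le_self_add ((hz y).trans_lt ?_)
    simpa using hy
  have hreal : ∀ w, E w < ⊤ → (E z).toReal + dist z y ^ 2 / (2 * τ)
      ≤ (E w).toReal + dist w y ^ 2 / (2 * τ) := fun w hw => by
    have h := hz w
    have h1 : 0 ≤ dist z y ^ 2 / (2 * τ) := by positivity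
    have h2 : 0 ≤ dist w y ^ 2 / (2 * τ) := by positivity
    rw [← ENNReal.ofReal_toReal hzE.ne, ← ENNReal.ofReal_toReal hw.ne,
      ← ENNReal.ofReal_add ENNReal.toReal_nonneg h1,
      ← ENNReal.ofReal_add ENNReal.toReal_nonneg h2] at h
    exact (ENNReal.ofReal_le_ofReal_iff (by positivity)).1 h
  refine ⟨z, hzE, ?_, ?_⟩
  · have hlim : Tendsto (fun w => ENNReal.ofReal ((dist w y + dist z y) / (2 * τ))) (𝓝[≠] z)
        (𝓝 (ENNReal.ofReal (dist y z / τ))) := by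
      have hcont : Continuous fun w => ENNReal.ofReal ((dist w y + dist z y) / (2 * τ)) :=
        ENNReal.continuous_ofReal.comp (by fun_prop)
      have h := (hcont.tendsto z).mono_left (nhdsWithin_le_nhds (s := {z}ᶜ))
      convert h using 3
      rw [dist_comm]; field_simp; ring
    rcases (𝓝[≠] z).eq_or_neBot with hbot | hne
    · simp [descSlope, hbot]
    rw [← hlim.limsup_eq]
    refine limsup_le_limsup ?_
    filter_upwards [eventually_mem_nhdsWithin] with w hw
    have hpos : 0 < dist z w := dist_pos.2 (Ne.symm hw)
    rcases eq_or_ne (E w) ⊤ with htop | htop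
    · simp [htop]
    rw [← ENNReal.ofReal_toReal hzE.ne, ← ENNReal.ofReal_toReal htop,
      ← ENNReal.ofReal_sub _ ENNReal.toReal_nonneg, ← ENNReal.ofReal_div_of_pos hpos]
    refine ENNReal.ofReal_le_ofReal ?_
    rw [div_le_iff₀ hpos]
    have h1 := hreal w htop.lt_top
    have h2 : (E z).toReal - (E w).toReal ≤
        (dist w y - dist z y) * (dist w y + dist z y) / (2 * τ) := by
      have : (dist w y - dist z y) * (dist w y + dist z y) / (2 * τ) =
        dist w y ^ 2 / (2 * τ) - dist z y ^ 2 / (2 * τ) := by ring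
      linarith
    refine h2.trans ?_
    have h3 : dist w y - dist z y ≤ dist z w := by
      have := dist_triangle w z y
      rw [dist_comm w z] at this; linarith
    calc (dist w y - dist z y) * (dist w y + dist z y) / (2 * τ)
        ≤ dist z w * (dist w y + dist z y) / (2 * τ) := by gcongr
      _ = (dist w y + dist z y) / (2 * τ) * dist z w := by ring
  · obtain ⟨γ, h0, h1, hd, hc⟩ := hE z y hzE hy
    set d := dist z y with hdd
    have key : ∀ t ∈ Ioc (0 : ℝ) 1,
        (E z).toReal + (d ^ 2 / (2 * τ) * (2 - t) + K / 2 * (1 - t) * d ^ 2) ≤ (E y).toReal := by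
      intro t ht
      have ht' : t ∈ Icc (0 : ℝ) 1 := ⟨ht.1.le, ht.2⟩
      obtain ⟨htop, hle⟩ := hc t ht'
      have hmin := hreal (γ t) htop.lt_top
      have hdt : dist (γ t) y = (1 - t) * d := by
        rw [← h1, hd t ht' 1 (by simp), abs_sub_comm, abs_of_nonneg (by linarith [ht.2])]
      rw [hdt] at hmin
      have : t * ((E z).toReal + (d ^ 2 / (2 * τ) * (2 - t) + K / 2 * (1 - t) * d ^ 2))
          ≤ t * (E y).toReal := by
        have e : ((1 - t) * d) ^ 2 / (2 * τ) = d ^ 2 / (2 * τ) * (1 - t) ^ 2 := by ring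
        rw [e] at hmin
        nlinarith
      exact le_of_mul_le_mul_left this ht.1
    have hcont : Continuous fun t : ℝ =>
        (E z).toReal + (d ^ 2 / (2 * τ) * (2 - t) + K / 2 * (1 - t) * d ^ 2) := by fun_prop
    have hlim := (hcont.tendsto 0).mono_left (nhdsWithin_le_nhds (s := Ioi (0 : ℝ)))
    have hle := le_of_tendsto hlim (by
      filter_upwards [Ioc_mem_nhdsGT one_pos] with t ht using key t ht)
    refine le_trans (le_of_eq ?_) hle
    rw [dist_comm y z, ← hdd]; field_simp; ring

end Slope

section UpperGradient

lemma integral_sub_comp_add_right_eq {f : ℝ → ℝ} {T h : ℝ}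
    (hf0 : IntervalIntegrable f volume 0 h) (hf1 : IntervalIntegrable f volume h T)
    (hf2 : IntervalIntegrable f volume T (T + h)) :
    ∫ r in (0 : ℝ)..T, (f r - f (r + h)) = (∫ r in (0 : ℝ)..h, f r) - ∫ r in T..(T + h), f r := by
  have h3 : IntervalIntegrable f volume (0 + h) (T + h) := by
    rw [zero_add]; exact hf1.trans hf2
  rw [intervalIntegral.integral_sub (hf0.trans hf1),
    intervalIntegral.integral_comp_add_right, zero_add,
    ← intervalIntegral.integral_add_adjacent_intervals hf0 hf1,
    ← intervalIntegral.integral_add_adjacent_intervals hf1 hf2]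
  · ring
  · have := h3.comp_add_right h
    simpa using this

/-- Integrated form of the upper gradient inequality: a one-sided estimate of the increments of
`φ` from almost every point bounds the total decrease of `φ`. -/
lemma sub_le_of_ae_increment_le {φ A G : ℝ → ℝ} {T C : ℝ} (hT : 0 < T)
    (hφ : IntervalIntegrable φ volume 0 T) (hA : MonotoneOn A (Icc 0 T))
    (hG : IntervalIntegrable G volume 0 T)
    (hinc : ∀ᵐ r ∂(volume.restrict (Ioc 0 T)), ∀ t ∈ Icc r T, ∀ h : ℝ, 0 < h → t - r ≤ h →
      φ r - φ t ≤ h / 2 * G r + (1 / 2 + C * h) * (A t - A r)) (hC : 0 ≤ C)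
    (hlsc : ∀ ε > 0, ∃ δ > 0, ∀ r, 0 ≤ r → r < δ → φ 0 - ε ≤ φ r) :
    φ 0 - φ T ≤ (∫ r in (0 : ℝ)..T, G r) / 2 + (A T - A 0) / 2 := by
  have hintegral : ∀ f : ℝ → ℝ, IntervalIntegrable f volume 0 T → ∀ h, 0 < h → h ≤ T →
      IntervalIntegrable (fun r => f (min r T)) volume 0 h ∧
      IntervalIntegrable (fun r => f (min r T)) volume h T ∧
      IntervalIntegrable (fun r => f (min r T)) volume T (T + h) := by
    intro f hf h hh hhT
    have h1 : IntervalIntegrable (fun r => f (min r T)) volume 0 T := by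
      refine hf.congr ?_
      intro r hr
      rw [uIoc_of_le hT.le] at hr
      simp [hr.2]
    refine ⟨h1.mono_set ?_, h1.mono_set ?_, ?_⟩
    · rw [uIcc_of_le hh.le, uIcc_of_le hT.le]; exact Icc_subset_Icc_right hhT
    · rw [uIcc_of_le hhT, uIcc_of_le hT.le]; exact Icc_subset_Icc_left hh.le
    · refine (intervalIntegrable_const (c := f T)).congr ?_
      intro r hr
      rw [uIoc_of_le (by linarith)] at hr
      simp [hr.1.le]
  have hAint : IntervalIntegrable A volume 0 T := by
    apply MonotoneOn.intervalIntegrable; rwa [uIcc_of_le hT.le]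
  have key : ∀ h, 0 < h → h ≤ T → (∫ r in (0 : ℝ)..h, φ (min r T)) - h * φ T
      ≤ h * ((∫ r in (0 : ℝ)..T, G r) / 2) + h * ((1 / 2 + C * h) * (A T - A 0)) := by
    intro h hh hhT
    obtain ⟨hφ0, hφ1, hφ2⟩ := hintegral φ hφ h hh hhT
    obtain ⟨hA0, hA1, hA2⟩ := hintegral A hAint h hh hhT
    have hconst : ∀ f : ℝ → ℝ, ∫ r in T..(T + h), f (min r T) = h * f T := by
      intro f
      have : ∫ r in T..(T + h), f (min r T) = ∫ _r in T..(T + h), f T := by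
        refine intervalIntegral.integral_congr fun r hr => ?_
        rw [uIcc_of_le (by linarith)] at hr
        simp [hr.1]
      rw [this, intervalIntegral.integral_const]; simp
    have e1 := integral_sub_comp_add_right_eq hφ0 hφ1 hφ2
    have e2 := integral_sub_comp_add_right_eq hA0 hA1 hA2
    rw [hconst] at e1 e2
    have hsub : ∀ f : ℝ → ℝ, IntervalIntegrable (fun r => f (min r T)) volume 0 h →
        IntervalIntegrable (fun r => f (min r T)) volume h T →
        IntervalIntegrable (fun r => f (min r T)) volume T (T + h) →
        IntervalIntegrable (fun r => f (min r T) - f (min (r + h) T)) volume 0 T := by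
      intro f h0 h1 h2
      refine (h0.trans h1).sub ?_
      have h3 : IntervalIntegrable (fun r => f (min r T)) volume (0 + h) (T + h) := by
        rw [zero_add]; exact h1.trans h2
      simpa using h3.comp_add_right h
    have hmono : ∫ r in (0 : ℝ)..T, (φ (min r T) - φ (min (r + h) T)) ≤
        ∫ r in (0 : ℝ)..T, (h / 2 * G r
          - (1 / 2 + C * h) * (A (min r T) - A (min (r + h) T))) := by
      refine intervalIntegral.integral_mono_ae_restrict hT.le (hsub φ hφ0 hφ1 hφ2)
        ((hG.const_mul _).sub ((hsub A hA0 hA1 hA2).const_mul _)) ?_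
      rw [← restrict_Ioc_eq_restrict_Icc]
      filter_upwards [hinc, ae_restrict_mem measurableSet_Ioc] with r hr hrT
      have := hr (min (r + h) T) ⟨le_min (by linarith) hrT.2, min_le_right _ _⟩ h hh
        (by linarith [min_le_left (r + h) T])
      rw [min_eq_left hrT.2]
      linarith
    rw [e1, intervalIntegral.integral_sub (hG.const_mul _) ((hsub A hA0 hA1 hA2).const_mul _),
      intervalIntegral.integral_const_mul, intervalIntegral.integral_const_mul, e2] at hmono
    have hA0h : h * A 0 ≤ ∫ r in (0 : ℝ)..h, A (min r T) := by
      have : ∫ _r in (0 : ℝ)..h, A 0 ≤ ∫ r in (0 : ℝ)..h, A (min r T) := by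
        refine intervalIntegral.integral_mono_on hh.le intervalIntegrable_const hA0 ?_
        intro r hr
        exact hA ⟨le_rfl, hT.le⟩ ⟨le_min hr.1 hT.le, min_le_right _ _⟩ (le_min hr.1 hT.le)
      rw [intervalIntegral.integral_const] at this
      simpa using this
    have hCh : 0 ≤ 1 / 2 + C * h := by positivity
    nlinarith
  have hlim : ∀ ε > 0, φ 0 - φ T - ε ≤ (∫ r in (0 : ℝ)..T, G r) / 2 + (A T - A 0) / 2 := by
    intro ε hε
    obtain ⟨δ, hδ, hδ'⟩ := hlsc ε hε
    have hev : ∀ᶠ h in 𝓝[>] (0 : ℝ), φ 0 - φ T - ε ≤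
        (∫ r in (0 : ℝ)..T, G r) / 2 + (1 / 2 + C * h) * (A T - A 0) := by
      filter_upwards [Ioo_mem_nhdsGT (lt_min hδ hT)] with h hh
      have hhT : h ≤ T := hh.2.le.trans (min_le_right _ _)
      have hhδ : h < δ := hh.2.trans_le (min_le_left _ _)
      have h1 : h * (φ 0 - ε) ≤ ∫ r in (0 : ℝ)..h, φ (min r T) := by
        have : ∫ _r in (0 : ℝ)..h, (φ 0 - ε) ≤ ∫ r in (0 : ℝ)..h, φ (min r T) := by
          refine intervalIntegral.integral_mono_on hh.1.le intervalIntegrable_const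
            (hintegral φ hφ h hh.1 hhT).1 ?_
          intro r hr
          exact hδ' _ (le_min hr.1 hT.le) ((min_le_left _ _).trans_lt (hr.2.trans_lt hhδ))
        rw [intervalIntegral.integral_const] at this
        simpa using this
      have h2 := key h hh.1 hhT
      refine le_of_mul_le_mul_left ?_ hh.1
      linarith
    have hcont : Continuous fun h : ℝ =>
        (∫ r in (0 : ℝ)..T, G r) / 2 + (1 / 2 + C * h) * (A T - A 0) := by fun_prop
    have := ge_of_tendsto ((hcont.tendsto 0).mono_left (nhdsWithin_le_nhds (s := Ioi (0 : ℝ)))) hev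
    linarith
  refine le_of_forall_pos_le_add fun ε hε => ?_
  linarith [hlim ε hε]

/-- Young's inequality in the form used for upper gradients. -/
lemma increment_le_of_dist_sq_le {x g D C h τ a : ℝ} (hx : x ≤ g * D + C * D ^ 2)
    (hD : D ^ 2 ≤ τ * a) (ha : 0 ≤ a) (hC : 0 ≤ C) (hh : 0 < h) (hτ : τ ≤ h) :
    x ≤ h / 2 * g ^ 2 + (1 / 2 + C * h) * a := by
  have hD' : D ^ 2 ≤ h * a := hD.trans (mul_le_mul_of_nonneg_right hτ ha)
  have h1 : g * D ≤ h / 2 * g ^ 2 + a / 2 := by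
    have h2 : 2 * h * (g * D) ≤ h ^ 2 * g ^ 2 + D ^ 2 := by nlinarith [sq_nonneg (h * g - D)]
    have h3 : h * (2 * (g * D)) ≤ h * (h * g ^ 2 + a) := by nlinarith
    have := le_of_mul_le_mul_left h3 hh
    linarith
  nlinarith [mul_le_mul_of_nonneg_left hD' hC]

end UpperGradient

section Speed

variable {Y : Type*} [MetricSpace Y] {y : ℝ → Y}

lemma metricSpeed_nonneg_of_isBoundedUnder {r : ℝ}
    (hb : IsBoundedUnder (· ≤ ·) (𝓝[≠] (0 : ℝ)) fun h => dist (y (r + h)) (y r) / |h|) :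
    0 ≤ metricSpeed y r :=
  le_limsup_of_frequently_le (Frequently.of_forall fun h => by positivity) hb

lemma metricSpeed_le_of_tendsto {r c : ℝ} {q : ℝ → ℝ} (hq : Tendsto q (𝓝[≠] 0) (𝓝 c))
    (hle : ∀ᶠ h in 𝓝[≠] (0 : ℝ), dist (y (r + h)) (y r) / |h| ≤ q h) : metricSpeed y r ≤ c := by
  rw [← hq.limsup_eq]
  refine limsup_le_limsup hle ?_ hq.isBoundedUnder_le
  exact IsBoundedUnder.isCoboundedUnder_le
    (isBoundedUnder_of ⟨0, fun h => by positivity⟩)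

lemma abs_deriv_dist_le_metricSpeed {r : ℝ} (x : Y)
    (hd : DifferentiableAt ℝ (fun r => dist x (y r)) r)
    (hb : IsBoundedUnder (· ≤ ·) (𝓝[≠] (0 : ℝ)) fun h => dist (y (r + h)) (y r) / |h|) :
    |deriv (fun r => dist x (y r)) r| ≤ metricSpeed y r := by
  have h1 := hd.hasDerivAt.tendsto_slope_zero.abs
  rw [← h1.limsup_eq]
  refine limsup_le_limsup ?_ h1.isCoboundedUnder_le hb
  refine Eventually.of_forall fun h => ?_
  simp only [smul_eq_mul, abs_mul, abs_inv]
  rw [div_eq_inv_mul]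
  gcongr
  rw [abs_le]
  constructor
  · linarith [dist_triangle x (y (r + h)) (y r)]
  · linarith [dist_triangle x (y r) (y (r + h)), dist_comm (y r) (y (r + h))]

lemma AbsolutelyContinuousOnInterval.dist_left {s t : ℝ}
    (hac : AbsolutelyContinuousOnInterval y s t) (x : Y) :
    AbsolutelyContinuousOnInterval (fun r => dist x (y r)) s t := by
  refine squeeze_zero (fun _ => Finset.sum_nonneg fun i _ => dist_nonneg)
    (fun I => Finset.sum_le_sum fun i _ => ?_) hac
  simp only [Real.dist_eq]
  rw [dist_comm x (y _), dist_comm x (y _)]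
  exact abs_dist_sub_le _ _ _

lemma ofReal_dist_le_lintegral_metricSpeed {s t : ℝ} (hst : s ≤ t)
    (hac : AbsolutelyContinuousOnInterval y s t)
    (hb : ∀ᵐ r ∂(volume.restrict (Ioc s t)),
      IsBoundedUnder (· ≤ ·) (𝓝[≠] (0 : ℝ)) fun h => dist (y (r + h)) (y r) / |h|) :
    ENNReal.ofReal (dist (y s) (y t)) ≤ ∫⁻ r in Ioc s t, ENNReal.ofReal (metricSpeed y r) := by
  have hf := hac.dist_left (y s)
  have hftc := hf.integral_deriv_eq_sub
  rw [dist_self, sub_zero, intervalIntegral.integral_of_le hst] at hftc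
  have hdiff := hf.ae_differentiableAt
  rw [uIcc_of_le hst] at hdiff
  calc ENNReal.ofReal (dist (y s) (y t))
      = ENNReal.ofReal (∫ r in Ioc s t, deriv (fun r => dist (y s) (y r)) r) := by rw [hftc]
    _ ≤ ‖∫ r in Ioc s t, deriv (fun r => dist (y s) (y r)) r‖ₑ := Real.ofReal_le_enorm _
    _ ≤ ∫⁻ r in Ioc s t, ‖deriv (fun r => dist (y s) (y r)) r‖ₑ :=
        enorm_integral_le_lintegral_enorm _
    _ ≤ ∫⁻ r in Ioc s t, ENNReal.ofReal (metricSpeed y r) := by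
        refine lintegral_mono_ae ?_
        filter_upwards [hb, ae_restrict_of_ae hdiff, ae_restrict_mem measurableSet_Ioc]
          with r hr hd hrm
        rw [Real.enorm_eq_ofReal_abs]
        exact ENNReal.ofReal_le_ofReal
          (abs_deriv_dist_le_metricSpeed _ (hd ⟨hrm.1.le, hrm.2⟩) hr)

/-- Cauchy–Schwarz for the lower integral, without measurability. -/
lemma ofReal_sq_le_of_le_lintegral {d s t : ℝ} {v : ℝ → ℝ} (hd : 0 ≤ d) (hst : s < t)
    (h : ENNReal.ofReal d ≤ ∫⁻ r in Ioc s t, ENNReal.ofReal (v r)) :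
    ENNReal.ofReal (d ^ 2) ≤
      ENNReal.ofReal (t - s) * ∫⁻ r in Ioc s t, ENNReal.ofReal (v r ^ 2) := by
  set I := ∫⁻ r in Ioc s t, ENNReal.ofReal (v r ^ 2) with hI
  have hts : 0 < t - s := sub_pos.2 hst
  rcases eq_or_ne I ⊤ with htop | htop
  · rw [htop, ENNReal.mul_top (by simpa using hst)]; exact le_top
  rcases hd.eq_or_lt with rfl | hd
  · simp
  set c := d / (t - s) with hc
  have hcpos : 0 < c := by positivity
  have h1 : ∫⁻ r in Ioc s t, ENNReal.ofReal (v r) ≤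
      ENNReal.ofReal (c / 2) * ENNReal.ofReal (t - s) + ENNReal.ofReal (1 / (2 * c)) * I := by
    calc ∫⁻ r in Ioc s t, ENNReal.ofReal (v r)
        ≤ ∫⁻ r in Ioc s t, (ENNReal.ofReal (c / 2)
            + ENNReal.ofReal (1 / (2 * c)) * ENNReal.ofReal (v r ^ 2)) := by
          refine lintegral_mono fun r => ?_
          rw [← ENNReal.ofReal_mul (by positivity), ← ENNReal.ofReal_add (by positivity)
            (by positivity)]
          refine ENNReal.ofReal_le_ofReal ?_
          have : c / 2 + 1 / (2 * c) * v r ^ 2 - v r = (c - v r) ^ 2 / (2 * c) := by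
            field_simp; ring
          have h2 : 0 ≤ (c - v r) ^ 2 / (2 * c) := by positivity
          linarith
      _ = _ := by
          rw [lintegral_add_left measurable_const, lintegral_const_mul' _ _ ENNReal.ofReal_ne_top,
            lintegral_const, Measure.restrict_apply_univ, Real.volume_Ioc]
  have h2 := h.trans h1
  rw [← ENNReal.ofReal_toReal htop] at h2 ⊢
  have hI0 : 0 ≤ I.toReal := ENNReal.toReal_nonneg
  rw [← ENNReal.ofReal_mul (by positivity), ← ENNReal.ofReal_mul (by positivity),
    ← ENNReal.ofReal_add (by positivity) (by positivity),
    ENNReal.ofReal_le_ofReal_iff (by positivity)] at h2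
  rw [← ENNReal.ofReal_mul hts.le]
  refine ENNReal.ofReal_le_ofReal ?_
  have e1 : c / 2 * (t - s) = d / 2 := by rw [hc]; field_simp
  have e2 : 1 / (2 * c) * I.toReal = (t - s) * I.toReal / (2 * d) := by rw [hc]; field_simp
  rw [e1, e2] at h2
  have h3 : d / 2 ≤ (t - s) * I.toReal / (2 * d) := by linarith
  rw [le_div_iff₀ (by positivity)] at h3
  nlinarith

/-- A curve controlled by the integral of an integrable function is absolutely continuous, with
almost everywhere bounded difference quotients. -/
lemma absolutelyContinuousOnInterval_of_dist_le_integral {g : ℝ → ℝ} {a b : ℝ} (hab : a ≤ b)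
    (hg : IntegrableOn g (Icc a b))
    (h : ∀ t s, a ≤ t → t ≤ s → s ≤ b → dist (y t) (y s) ≤ ∫ r in t..s, g r) :
    AbsolutelyContinuousOnInterval y a b ∧
    ∀ᵐ r ∂(volume.restrict (Ioc a b)),
      IsBoundedUnder (· ≤ ·) (𝓝[≠] (0 : ℝ)) fun h => dist (y (r + h)) (y r) / |h| := by
  have hgi : IntervalIntegrable g volume a b :=
    (intervalIntegrable_iff_integrableOn_Icc_of_le hab).2 hg
  set G : ℝ → ℝ := fun x => ∫ r in a..x, g r with hG
  have hsubG : ∀ t s, a ≤ t → t ≤ s → s ≤ b → ∫ r in t..s, g r = G s - G t := by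
    intro t s h1 h2 h3
    have hi : ∀ u, a ≤ u → u ≤ b → IntervalIntegrable g volume a u := fun u hu hub => by
      refine hgi.mono_set ?_
      rw [uIcc_of_le hu, uIcc_of_le hab]; exact Icc_subset_Icc_right hub
    rw [hG]
    exact (intervalIntegral.integral_interval_sub_left (hi s (h1.trans h2) h3)
      (hi t h1 (h2.trans h3))).symm
  have hdist : ∀ t ∈ Icc a b, ∀ s ∈ Icc a b, dist (y t) (y s) ≤ dist (G t) (G s) := by
    have hle : ∀ t ∈ Icc a b, ∀ s ∈ Icc a b, t ≤ s → dist (y t) (y s) ≤ dist (G t) (G s) := by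
      intro t ht s hs hts
      refine (h t s ht.1 hts hs.2).trans ?_
      rw [hsubG t s ht.1 hts hs.2, dist_comm, Real.dist_eq]
      exact le_abs_self _
    intro t ht s hs
    rcases le_total t s with hts | hts
    · exact hle t ht s hs hts
    · rw [dist_comm, dist_comm (G t)]; exact hle s hs t ht hts
  constructor
  · have hGac : AbsolutelyContinuousOnInterval G a b :=
      hgi.absolutelyContinuousOnInterval_intervalIntegral (by simp)
    refine tendsto_of_tendsto_of_tendsto_of_le_of_le' tendsto_const_nhds hGac
      (Eventually.of_forall fun _ => Finset.sum_nonneg fun i _ => dist_nonneg) ?_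
    refine eventually_inf_principal.2 (Eventually.of_forall fun I hI => ?_)
    refine Finset.sum_le_sum fun i hi => ?_
    have := hI.1 i hi
    rw [uIcc_of_le hab] at this
    exact hdist _ this.1 _ this.2
  · have hder := hgi.ae_hasDerivAt_integral
    have hb : ∀ᵐ r : ℝ, r ≠ b := by simp [ae_iff, measure_singleton]
    filter_upwards [ae_restrict_of_ae hder, ae_restrict_of_ae hb, ae_restrict_mem measurableSet_Ioc]
      with r hr hrb hrm
    rw [uIcc_of_le hab] at hr
    have hd : HasDerivAt G (g r) r := hr ⟨hrm.1.le, hrm.2⟩ a ⟨le_rfl, hab⟩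
    refine (hd.tendsto_slope_zero.abs.isBoundedUnder_le).mono_le ?_
    have hnear : ∀ᶠ h in 𝓝[≠] (0 : ℝ), r + h ∈ Icc a b := by
      refine eventually_nhdsWithin_of_eventually_nhds ?_
      have hc : ContinuousAt (fun h : ℝ => r + h) 0 := by fun_prop
      refine hc.eventually_mem ?_
      simpa using Icc_mem_nhds hrm.1 (lt_of_le_of_ne hrm.2 hrb)
    filter_upwards [hnear] with h hh
    simp only [smul_eq_mul, abs_mul, abs_inv]
    rw [div_eq_inv_mul]
    gcongr
    exact hdist _ hh _ ⟨hrm.1.le, hrm.2⟩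

end Speed

section MinimizingMovement

variable {Y : Type*} [MetricSpace Y] {E : Y → ℝ≥0∞} {K : ℝ}

/-- `u` is a sequence of implicit Euler steps of size `τ` for `E`. -/
structure IsMinimizingMovement (E : Y → ℝ≥0∞) (K τ : ℝ) (u : ℕ → Y) : Prop where
  lt_top : ∀ k, E (u k) < ⊤
  slope_le : ∀ k, descSlope E (u (k + 1)) ≤ ENNReal.ofReal (dist (u k) (u (k + 1)) / τ)
  step_le : ∀ k, (E (u (k + 1))).toReal + (1 + K * τ / 2) * (dist (u k) (u (k + 1)) ^ 2 / τ)
    ≤ (E (u k)).toReal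

lemma IsGeodesicallyConvex.exists_isMinimizingMovement [CompactSpace Y]
    (hE : IsGeodesicallyConvex E K) (hlsc : LowerSemicontinuous E) {τ : ℝ} (hτ : 0 < τ) {y₀ : Y}
    (hy₀ : E y₀ < ⊤) : ∃ u : ℕ → Y, u 0 = y₀ ∧ IsMinimizingMovement E K τ u := by
  choose! f hf using fun y (hy : E y < ⊤) => hE.exists_resolvent hlsc hτ hy
  have hfin : ∀ k, E (f^[k] y₀) < ⊤ := by
    intro k
    induction k with
    | zero => exact hy₀
    | succ k ih => rw [Function.iterate_succ_apply']; exact (hf _ ih).1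
  refine ⟨fun k => f^[k] y₀, rfl, hfin, fun k => ?_, fun k => ?_⟩
  · simp only [Function.iterate_succ_apply']
    exact (hf _ (hfin k)).2.1
  · simp only [Function.iterate_succ_apply']
    exact (hf _ (hfin k)).2.2

namespace IsMinimizingMovement

variable {τ κ : ℝ} {u : ℕ → Y}

lemma antitone (hu : IsMinimizingMovement E K τ u) (hτ : 0 < τ) (hκ : 0 < κ)
    (hκK : κ ≤ 1 + K * τ / 2) : Antitone fun k => (E (u k)).toReal := by
  refine antitone_nat_of_succ_le fun k => ?_
  have h1 := hu.step_le k
  have : 0 ≤ (1 + K * τ / 2) * (dist (u k) (u (k + 1)) ^ 2 / τ) :=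
    mul_nonneg (hκ.le.trans hκK) (by positivity)
  linarith

lemma sum_sq_le (hu : IsMinimizingMovement E K τ u) (hτ : 0 < τ)
    (hκK : κ ≤ 1 + K * τ / 2) {i j : ℕ} (hij : i ≤ j) :
    κ * ∑ k ∈ Finset.Ico i j, dist (u k) (u (k + 1)) ^ 2
      ≤ τ * ((E (u i)).toReal - (E (u j)).toReal) := by
  rw [Finset.mul_sum, ← neg_sub, ← Finset.sum_Ico_sub (fun k => (E (u k)).toReal) hij,
    mul_neg, Finset.mul_sum, ← Finset.sum_neg_distrib]
  refine Finset.sum_le_sum fun k _ => ?_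
  have h1 := hu.step_le k
  have h2 : κ * (dist (u k) (u (k + 1)) ^ 2 / τ) ≤
      (1 + K * τ / 2) * (dist (u k) (u (k + 1)) ^ 2 / τ) :=
    mul_le_mul_of_nonneg_right hκK (by positivity)
  have h3 : κ * dist (u k) (u (k + 1)) ^ 2 = τ * (κ * (dist (u k) (u (k + 1)) ^ 2 / τ)) := by
    field_simp
  rw [h3, ← mul_neg]
  exact mul_le_mul_of_nonneg_left (by linarith) hτ.le

lemma dist_sq_le_sum (u : ℕ → Y) {i j : ℕ} (hij : i ≤ j) :
    dist (u i) (u j) ^ 2 ≤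
      ((j : ℝ) - i) * ∑ k ∈ Finset.Ico i j, dist (u k) (u (k + 1)) ^ 2 := by
  calc dist (u i) (u j) ^ 2 ≤ (∑ k ∈ Finset.Ico i j, dist (u k) (u (k + 1))) ^ 2 := by
        gcongr
        exact dist_le_Ico_sum_dist u hij
    _ ≤ _ := by
        refine sq_sum_le_card_mul_sum_sq.trans_eq ?_
        rw [Nat.card_Ico, Nat.cast_sub hij]

lemma dist_sq_le (hu : IsMinimizingMovement E K τ u) (hτ : 0 < τ) (hκ : 0 < κ)
    (hκK : κ ≤ 1 + K * τ / 2) {i j : ℕ} (hij : i ≤ j) :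
    κ * dist (u i) (u j) ^ 2 ≤ ((j : ℝ) - i) * τ * ((E (u i)).toReal - (E (u j)).toReal) := by
  have hn : (0 : ℝ) ≤ (j : ℝ) - i := sub_nonneg.2 (by exact_mod_cast hij)
  calc κ * dist (u i) (u j) ^ 2
      ≤ κ * (((j : ℝ) - i) * ∑ k ∈ Finset.Ico i j, dist (u k) (u (k + 1)) ^ 2) :=
        mul_le_mul_of_nonneg_left (dist_sq_le_sum u hij) hκ.le
    _ = ((j : ℝ) - i) * (κ * ∑ k ∈ Finset.Ico i j, dist (u k) (u (k + 1)) ^ 2) := by ring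
    _ ≤ ((j : ℝ) - i) * (τ * ((E (u i)).toReal - (E (u j)).toReal)) :=
        mul_le_mul_of_nonneg_left (hu.sum_sq_le hτ hκK hij) hn
    _ = _ := by ring

lemma dist_sq_add_le (hu : IsMinimizingMovement E K τ u) (hτ : 0 < τ) (hκ : 0 < κ)
    (hκK : κ ≤ 1 + K * τ / 2) {i j : ℕ} (hij : i ≤ j) {c : ℝ} (hc : 0 ≤ c)
    (hslope : ∀ k, i < k → k ≤ j → ENNReal.ofReal c ≤ descSlope E (u k)) :
    κ * (dist (u i) (u j) ^ 2 + (((j : ℝ) - i) * τ) ^ 2 * c ^ 2)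
      ≤ 2 * (((j : ℝ) - i) * τ) * ((E (u i)).toReal - (E (u j)).toReal) := by
  have hn : (0 : ℝ) ≤ (j : ℝ) - i := sub_nonneg.2 (by exact_mod_cast hij)
  have h1 := hu.dist_sq_le hτ hκ hκK hij
  have h2 := hu.sum_sq_le hτ hκK hij
  have h3 : ((j : ℝ) - i) * (τ * c) ^ 2 ≤
      ∑ k ∈ Finset.Ico i j, dist (u k) (u (k + 1)) ^ 2 := by
    calc ((j : ℝ) - i) * (τ * c) ^ 2 = ∑ k ∈ Finset.Ico i j, (τ * c) ^ 2 := by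
          rw [Finset.sum_const, Nat.card_Ico, nsmul_eq_mul, Nat.cast_sub hij]
      _ ≤ _ := by
          refine Finset.sum_le_sum fun k hk => ?_
          rw [Finset.mem_Ico] at hk
          have h4 := (hslope (k + 1) (by omega) (by omega)).trans (hu.slope_le k)
          rw [ENNReal.ofReal_le_ofReal_iff (by positivity), le_div_iff₀ hτ] at h4
          have : τ * c ≤ dist (u k) (u (k + 1)) := by linarith
          gcongr
  have h4 := mul_le_mul_of_nonneg_left h3 hκ.le
  have h5 : ((j : ℝ) - i) * (κ * (((j : ℝ) - i) * (τ * c) ^ 2)) ≤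
      ((j : ℝ) - i) * (τ * ((E (u i)).toReal - (E (u j)).toReal)) :=
    mul_le_mul_of_nonneg_left (h4.trans h2) hn
  nlinarith

end IsMinimizingMovement

lemma IsGeodesicallyConvex.exists_limit_curve [CompactSpace Y]
    (hE : IsGeodesicallyConvex E K) (hlsc : LowerSemicontinuous E) {y₀ : Y} (hy₀ : E y₀ < ⊤) :
    ∃ (y : ℝ → Y) (e : ℝ → ℝ), y 0 = y₀ ∧ e 0 = (E y₀).toReal ∧
      (∀ t, 0 ≤ t → E (y t) ≤ ENNReal.ofReal (e t) ∧ 0 ≤ e t) ∧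
      (∀ s t, 0 ≤ s → s ≤ t → e t ≤ e s ∧ dist (y s) (y t) ^ 2 ≤ (t - s) * (e s - e t)) ∧
      (∀ r, 0 ≤ r → ∀ c, 0 ≤ c → ENNReal.ofReal c < descSlope E (y r) → ∃ δ > 0,
        ∀ s t, 0 ≤ s → r - δ < s → s ≤ t → t < r + δ →
          dist (y s) (y t) ^ 2 + (t - s) ^ 2 * c ^ 2 ≤ 2 * (t - s) * (e s - e t)) := by
  set τ : ℕ → ℝ := fun n => 1 / ((n : ℝ) + 1) with hτdef
  have hτ : ∀ n, 0 < τ n := fun n => by positivity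
  have hτ0 : Tendsto τ atTop (𝓝 0) := tendsto_one_div_add_atTop_nhds_zero_nat
  choose u hu0 hu using fun n => hE.exists_isMinimizingMovement hlsc (hτ n) hy₀
  set U : Ultrafilter ℕ := hyperfilter ℕ
  have hU : (U : Filter ℕ) ≤ atTop := Nat.hyperfilter_le_atTop
  set κ : ℕ → ℝ := fun n => 1 + K * τ n / 2 with hκdef
  have hκ1 : Tendsto κ U (𝓝 1) := by
    have : Tendsto (fun n => 1 + K * τ n / 2) atTop (𝓝 (1 + K * 0 / 2)) :=
      tendsto_const_nhds.add ((tendsto_const_nhds.mul hτ0).div_const 2)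
    simpa using this.mono_left hU
  have hκhalf : ∀ᶠ n in (U : Filter ℕ), 1 / 2 < κ n := hκ1.eventually_const_lt (by norm_num)
  set N : ℝ → ℕ → ℕ := fun t n => ⌊t / τ n⌋₊ with hN
  have hNle : ∀ t n, 0 ≤ t → (N t n : ℝ) * τ n ≤ t := fun t n ht => by
    rw [← le_div_iff₀ (hτ n)]; exact Nat.floor_le (div_nonneg ht (hτ n).le)
  have hNlt : ∀ t n, t < ((N t n : ℝ) + 1) * τ n := fun t n => by
    rw [← div_lt_iff₀ (hτ n)]; exact Nat.lt_floor_add_one _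
  have hNlim : ∀ t, 0 ≤ t → Tendsto (fun n => (N t n : ℝ) * τ n) U (𝓝 t) := fun t ht => by
    have h1 : Tendsto (fun n => t - τ n) U (𝓝 t) := by
      simpa using (tendsto_const_nhds (x := t)).sub (hτ0.mono_left hU)
    refine tendsto_of_tendsto_of_tendsto_of_le_of_le h1 tendsto_const_nhds (fun n => ?_)
      (fun n => hNle t n ht)
    have := hNlt t n
    simp only
    linarith
  have hNmono : ∀ s t n, s ≤ t → N s n ≤ N t n := fun s t n hst =>
    Nat.floor_mono (div_le_div_of_nonneg_right hst (hτ n).le)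
  set M := (E y₀).toReal with hM
  have hanti : ∀ᶠ n in (U : Filter ℕ), Antitone fun k => (E (u n k)).toReal :=
    hκhalf.mono fun n hn => (hu n).antitone (hτ n) (by linarith : 0 < κ n) le_rfl
  have hleM : ∀ᶠ n in (U : Filter ℕ), ∀ k, (E (u n k)).toReal ≤ M := by
    filter_upwards [hanti] with n hn k
    have := hn (Nat.zero_le k)
    simpa [hu0] using this
  have hy : ∀ t, ∃ z, Tendsto (fun n => u n (N t n)) U (𝓝 z) := fun t =>
    ⟨_, (U.map fun n => u n (N t n)).le_nhds_lim⟩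
  choose y hy using hy
  have he : ∀ t, ∃ x ∈ Icc 0 M, Tendsto (fun n => (E (u n (N t n))).toReal) U (𝓝 x) := fun t => by
    refine isCompact_Icc.ultrafilter_le_nhds (U.map fun n => (E (u n (N t n))).toReal) ?_
    rw [le_principal_iff, Ultrafilter.coe_map, mem_map]
    filter_upwards [hleM] with n hn
    exact ⟨ENNReal.toReal_nonneg, hn _⟩
  choose e heI he using he
  have hEle : ∀ t, E (y t) ≤ ENNReal.ofReal (e t) := fun t => by
    refine le_of_forall_lt fun a ha => ?_
    obtain ⟨a', haa', ha'⟩ := exists_between ha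
    have h2 := (hy t).eventually (hlsc (y t) a' ha')
    have h3 : Tendsto (fun n => E (u n (N t n))) U (𝓝 (ENNReal.ofReal (e t))) := by
      refine (ENNReal.continuous_ofReal.tendsto _ |>.comp (he t)).congr fun n => ?_
      exact ENNReal.ofReal_toReal ((hu n).lt_top _).ne
    exact haa'.trans_le (ge_of_tendsto h3 (h2.mono fun n hn => hn.le))
  refine ⟨y, e, ?_, ?_, fun t ht => ⟨?_, (heI t).1⟩, fun s t hs hst => ⟨?_, ?_⟩, ?_⟩
  · refine tendsto_nhds_unique (hy 0) ?_
    simp [hN, hu0]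
  · refine tendsto_nhds_unique (he 0) ?_
    simp [hN, hu0, hM]
  · exact hEle t
  · refine le_of_tendsto_of_tendsto (he t) (he s) ?_
    filter_upwards [hanti] with n hn
    exact hn (hNmono s t n hst)
  · have hd := (hy s).dist (hy t)
    have hleft := hκ1.mul (hd.pow 2)
    have hright := ((hNlim t (hs.trans hst)).sub (hNlim s hs)).mul ((he s).sub (he t))
    rw [one_mul] at hleft
    refine le_of_tendsto_of_tendsto hleft hright ?_
    filter_upwards [hκhalf] with n hn
    have := (hu n).dist_sq_le (hτ n) (by linarith : 0 < κ n) le_rfl (hNmono s t n hst)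
    simpa [sub_mul] using this
  · intro r hr c hc hcs
    have hev := hE.eventually_lt_descSlope hlsc ((hEle r).trans_lt ENNReal.ofReal_lt_top) hcs
    obtain ⟨ρ, hρ, hball⟩ := Metric.eventually_nhds_iff_ball.1 hev
    have hM0 : 0 ≤ M := ENNReal.toReal_nonneg
    refine ⟨(ρ / 2) ^ 2 / (4 * (M + 1)), by positivity, fun s t hs hrs hst htr => ?_⟩
    set δ := (ρ / 2) ^ 2 / (4 * (M + 1)) with hδ
    have hδ0 : 0 < δ := by positivity
    have hd := (hy s).dist (hy t)
    have hD := (hNlim t (hs.trans hst)).sub (hNlim s hs)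
    have hleft := hκ1.mul ((hd.pow 2).add ((hD.pow 2).mul_const (c ^ 2)))
    have hright := (hD.const_mul 2).mul ((he s).sub (he t))
    rw [one_mul] at hleft
    refine le_of_tendsto_of_tendsto hleft hright ?_
    have hclose : ∀ᶠ n in (U : Filter ℕ), dist (u n (N r n)) (y r) < ρ / 2 :=
      (hy r).eventually (Metric.ball_mem_nhds _ (half_pos hρ))
    have hτδ : ∀ᶠ n in (U : Filter ℕ), τ n < δ := (hτ0.mono_left hU).eventually_lt_const hδ0
    filter_upwards [hκhalf, hclose, hτδ, hleM] with n hn hcl hτn hMn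
    have hκn : 0 < κ n := by linarith
    have hdistk : ∀ i j : ℕ, i ≤ j → ((j : ℝ) - i) * τ n ≤ 2 * δ →
        dist (u n i) (u n j) < ρ / 2 := by
      intro i j hij hle
      have h1 := (hu n).dist_sq_le (hτ n) hκn le_rfl hij
      have hn0 : (0 : ℝ) ≤ (j : ℝ) - i := sub_nonneg.2 (by exact_mod_cast hij)
      have h2 : ((j : ℝ) - i) * τ n * ((E (u n i)).toReal - (E (u n j)).toReal) ≤
          2 * δ * M := by
        have : (E (u n i)).toReal - (E (u n j)).toReal ≤ M := by
          have := hMn i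
          have : 0 ≤ (E (u n j)).toReal := ENNReal.toReal_nonneg
          linarith
        calc _ ≤ ((j : ℝ) - i) * τ n * M :=
              mul_le_mul_of_nonneg_left this (mul_nonneg hn0 (hτ n).le)
          _ ≤ _ := mul_le_mul_of_nonneg_right hle hM0
      have h3 : 1 / 2 * dist (u n i) (u n j) ^ 2 ≤ κ n * dist (u n i) (u n j) ^ 2 := by
        gcongr
      have h4 : 4 * δ * (M + 1) = (ρ / 2) ^ 2 := by rw [hδ]; field_simp
      have h5 : dist (u n i) (u n j) ^ 2 < (ρ / 2) ^ 2 := by nlinarith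
      exact lt_of_pow_lt_pow_left₀ 2 (by positivity) h5
    have hslope : ∀ k, N s n < k → k ≤ N t n → ENNReal.ofReal c ≤ descSlope E (u n k) := by
      intro k hsk hkt
      refine (hball (u n k) ?_ ((hu n).lt_top k)).le
      have hk1 : (k : ℝ) * τ n < r + δ := by
        refine lt_of_le_of_lt ?_ htr
        refine le_trans ?_ (hNle t n (hs.trans hst))
        exact mul_le_mul_of_nonneg_right (by exact_mod_cast hkt) (hτ n).le
      have hk2 : r - δ < (k : ℝ) * τ n := by
        refine hrs.trans ((hNlt s n).trans_le ?_)
        exact mul_le_mul_of_nonneg_right (by exact_mod_cast hsk) (hτ n).le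
      have hk3 := hNle r n hr
      have hk4 := hNlt r n
      have hd : dist (u n k) (u n (N r n)) < ρ / 2 := by
        rcases le_total k (N r n) with hle | hle
        · exact hdistk _ _ hle (by nlinarith)
        · rw [dist_comm]; exact hdistk _ _ hle (by nlinarith)
      rw [Metric.mem_ball]
      linarith [dist_triangle (u n k) (u n (N r n)) (y r)]
    have := (hu n).dist_sq_add_le (hτ n) hκn le_rfl (hNmono s t n hst) hc hslope
    simpa [sub_mul] using this

end MinimizingMovement

section Antitone

lemma sum_dist_le_of_antitone {e : ℝ → ℝ} (he : Antitone e) {a b : ℝ} (hab : a ≤ b)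
    {I : ℕ × (ℕ → ℝ × ℝ)} (hI : I ∈ AbsolutelyContinuousOnInterval.disjWithin a b) :
    ∑ i ∈ Finset.range I.1, dist (e (I.2 i).1) (e (I.2 i).2) ≤ e a - e b := by
  have hdisj : (Finset.range I.1 : Set ℕ).PairwiseDisjoint
      fun i => uIoc (e (I.2 i).1) (e (I.2 i).2) := by
    intro i hi j hj hij
    have h := hI.2 hi hj hij
    refine Set.disjoint_left.2 fun x hxi hxj => ?_
    have key : ∀ p q x : ℝ, x ∈ uIoc (e p) (e q) → e (max p q) < x ∧ x ≤ e (min p q) := by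
      intro p q x hx
      rcases le_total p q with hpq | hpq
      · rw [uIoc_of_ge (he hpq)] at hx
        rwa [max_eq_right hpq, min_eq_left hpq]
      · rw [uIoc_of_le (he hpq)] at hx
        rwa [max_eq_left hpq, min_eq_right hpq]
    have hi' := key _ _ _ hxi
    have hj' := key _ _ _ hxj
    have h1 := he.reflect_lt (hi'.1.trans_le hj'.2)
    have h2 := he.reflect_lt (hj'.1.trans_le hi'.2)
    have h3 := he.reflect_lt (hi'.1.trans_le hi'.2)
    have h4 := he.reflect_lt (hj'.1.trans_le hj'.2)
    exact Set.disjoint_left.1 h (show min (max (I.2 i).1 (I.2 i).2) (max (I.2 j).1 (I.2 j).2) ∈ _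
      from ⟨lt_min h3 h2, min_le_left _ _⟩) ⟨lt_min h1 h4, min_le_right _ _⟩
  have hsub : (⋃ i ∈ Finset.range I.1, uIoc (e (I.2 i).1) (e (I.2 i).2)) ⊆ Icc (e b) (e a) := by
    refine iUnion₂_subset fun i hi => ?_
    have := hI.1 i hi
    rw [uIcc_of_le hab] at this
    refine uIoc_subset_uIcc.trans (uIcc_subset_Icc ?_ ?_)
    · exact ⟨he this.1.2, he this.1.1⟩
    · exact ⟨he this.2.2, he this.2.1⟩
  have hvol := measure_mono (μ := volume) hsub
  rw [measure_biUnion_finset hdisj (fun _ _ => measurableSet_uIoc), Real.volume_Icc] at hvol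
  have heq : ∀ i, volume (uIoc (e (I.2 i).1) (e (I.2 i).2)) =
      ENNReal.ofReal (dist (e (I.2 i).1) (e (I.2 i).2)) := fun i => by
    rw [Real.volume_uIoc, dist_comm, Real.dist_eq]
  simp only [heq] at hvol
  rwa [← ENNReal.ofReal_sum_of_nonneg (fun _ _ => dist_nonneg),
    ENNReal.ofReal_le_ofReal_iff (sub_nonneg.2 (he hab))] at hvol

lemma absolutelyContinuousOnInterval_of_dist_sq_le {Y : Type*} [MetricSpace Y] {y : ℝ → Y}
    {e : ℝ → ℝ} (he : Antitone e)
    (h : ∀ s t, s ≤ t → dist (y s) (y t) ^ 2 ≤ (t - s) * (e s - e t)) {a b : ℝ} (hab : a ≤ b) :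
    AbsolutelyContinuousOnInterval y a b := by
  have h' : ∀ s t, dist (y s) (y t) ^ 2 ≤ dist s t * dist (e s) (e t) := by
    have hle : ∀ s t, s ≤ t → dist (y s) (y t) ^ 2 ≤ dist s t * dist (e s) (e t) := by
      intro s t hst
      rw [dist_comm s, Real.dist_eq, Real.dist_eq, abs_of_nonneg (sub_nonneg.2 hst),
        abs_of_nonneg (sub_nonneg.2 (he hst))]
      exact h s t hst
    intro s t
    rcases le_total s t with hst | hst
    · exact hle s t hst
    · rw [dist_comm, dist_comm s, dist_comm (e s)]; exact hle t s hst
  rw [absolutelyContinuousOnInterval_iff]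
  intro ε hε
  set D := e a - e b with hD
  have hD0 : 0 ≤ D := sub_nonneg.2 (he hab)
  set l := ε / (2 * (D + 1)) with hl
  have hl0 : 0 < l := by positivity
  refine ⟨l * ε, by positivity, fun I hI hsum => ?_⟩
  have hbound : ∀ s t, dist (y s) (y t) ≤ 1 / (2 * l) * dist s t + l / 2 * dist (e s) (e t) := by
    intro s t
    refine abs_le_of_sq_le_sq' ?_ (by positivity) |>.2
    refine (h' s t).trans ?_
    have : (1 / (2 * l) * dist s t + l / 2 * dist (e s) (e t)) ^ 2 - dist s t * dist (e s) (e t)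
        = (1 / (2 * l) * dist s t - l / 2 * dist (e s) (e t)) ^ 2 := by
      field_simp; ring
    nlinarith [sq_nonneg (1 / (2 * l) * dist s t - l / 2 * dist (e s) (e t))]
  calc ∑ i ∈ Finset.range I.1, dist (y (I.2 i).1) (y (I.2 i).2)
      ≤ ∑ i ∈ Finset.range I.1, (1 / (2 * l) * dist (I.2 i).1 (I.2 i).2
          + l / 2 * dist (e (I.2 i).1) (e (I.2 i).2)) :=
        Finset.sum_le_sum fun i _ => hbound _ _
    _ = 1 / (2 * l) * ∑ i ∈ Finset.range I.1, dist (I.2 i).1 (I.2 i).2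
          + l / 2 * ∑ i ∈ Finset.range I.1, dist (e (I.2 i).1) (e (I.2 i).2) := by
        rw [Finset.sum_add_distrib, ← Finset.mul_sum, ← Finset.mul_sum]
    _ < 1 / (2 * l) * (l * ε) + l / 2 * (D + 1) := by
        refine add_lt_add_of_lt_of_le (mul_lt_mul_of_pos_left hsum (by positivity)) ?_
        refine mul_le_mul_of_nonneg_left ?_ (by positivity)
        linarith [sum_dist_le_of_antitone he hab hI]
    _ ≤ ε := by
        have h1 : 1 / (2 * l) * (l * ε) = ε / 2 := by field_simp
        have h2 : l / 2 * (D + 1) = ε / 4 := by rw [hl]; field_simp; ring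
        rw [h1, h2]; linarith

/-- The absolutely continuous part of the decrease of an antitone function. -/
lemma lintegral_neg_deriv_le_of_antitone {e : ℝ → ℝ} (he : Antitone e) {a b : ℝ} (hab : a ≤ b) :
    IntegrableOn (deriv e) (Ioc a b) ∧
    ∫⁻ r in Ioc a b, ENNReal.ofReal (-deriv e r) ≤ ENNReal.ofReal (e a - e b) := by
  have hm : Monotone (-e) := he.neg
  have hd : deriv (-e) = fun r => -deriv e r := by ext r; exact deriv.neg
  have hi := (hm.monotoneOn (uIcc a b)).intervalIntegrable_deriv
  have hmem := (hm.monotoneOn (uIcc a b)).intervalIntegral_deriv_mem_uIcc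
  have hle : 0 ≤ (-e) b - (-e) a := sub_nonneg.2 (hm hab)
  rw [uIcc_of_le hle] at hmem
  rw [hd] at hi hmem
  have hii := (intervalIntegrable_iff_integrableOn_Ioc_of_le hab).1 hi
  refine ⟨by simpa using hii.neg, ?_⟩
  rw [← ofReal_integral_eq_lintegral_ofReal hii, ← intervalIntegral.integral_of_le hab]
  · refine ENNReal.ofReal_le_ofReal (hmem.2.trans_eq ?_)
    simp [add_comm, sub_eq_add_neg]
  · exact Eventually.of_forall fun r => (hm.deriv_nonneg (x := r)).trans_eq (congrFun hd r)

end Antitone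

section EnergyDissipation

variable {Y : Type*} [MetricSpace Y] {E : Y → ℝ≥0∞} {K : ℝ} {y : ℝ → Y}

/-- A continuous curve which is locally absolutely continuous on `(0, ∞)`. -/
structure IsACCurve (y : ℝ → Y) : Prop where
  continuous : Continuous y
  exists_integrable : ∀ a b : ℝ, 0 < a → a ≤ b → ∃ g : ℝ → ℝ, (∀ r, 0 ≤ g r) ∧
    IntegrableOn g (Icc a b) ∧
    ∀ t s : ℝ, a ≤ t → t ≤ s → s ≤ b → dist (y t) (y s) ≤ ∫ r in t..s, g r

/-- The action of a curve on `(0, t]`. -/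
noncomputable def curveAction (y : ℝ → Y) (t : ℝ) : ℝ≥0∞ :=
  ∫⁻ r in Ioc 0 t, ENNReal.ofReal (metricSpeed y r ^ 2)

/-- The squared slope of `E` integrated along a curve on `(0, t]`. -/
noncomputable def slopeAction (E : Y → ℝ≥0∞) (y : ℝ → Y) (t : ℝ) : ℝ≥0∞ :=
  ∫⁻ r in Ioc 0 t, descSlope E (y r) ^ 2

lemma lintegral_Ioc_add {f : ℝ → ℝ≥0∞} {a b c : ℝ} (hab : a ≤ b) (hbc : b ≤ c) :
    ∫⁻ r in Ioc a c, f r = (∫⁻ r in Ioc a b, f r) + ∫⁻ r in Ioc b c, f r := by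
  rw [← Ioc_union_Ioc_eq_Ioc hab hbc, lintegral_union measurableSet_Ioc
    (Ioc_disjoint_Ioc_of_le le_rfl)]

lemma IsACCurve.ofReal_dist_sq_le (hy : IsACCurve y) {s t : ℝ} (hs : 0 ≤ s) (hst : s < t) :
    ENNReal.ofReal (dist (y s) (y t) ^ 2) ≤
      ENNReal.ofReal (t - s) * ∫⁻ r in Ioc s t, ENNReal.ofReal (metricSpeed y r ^ 2) := by
  have hpos : ∀ a, 0 < a → a < t → ENNReal.ofReal (dist (y a) (y t) ^ 2) ≤
      ENNReal.ofReal (t - a) * ∫⁻ r in Ioc a t, ENNReal.ofReal (metricSpeed y r ^ 2) := by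
    intro a ha hat
    obtain ⟨g, -, hg, hgd⟩ := hy.exists_integrable a t ha hat.le
    have hac := absolutelyContinuousOnInterval_of_dist_le_integral hat.le hg hgd
    exact ofReal_sq_le_of_le_lintegral dist_nonneg hat
      (ofReal_dist_le_lintegral_metricSpeed hat.le hac.1 hac.2)
  have hlim : Tendsto (fun a => ENNReal.ofReal (dist (y a) (y t) ^ 2)) (𝓝[>] s)
      (𝓝 (ENNReal.ofReal (dist (y s) (y t) ^ 2))) := by
    have hc := hy.continuous
    have : Continuous fun a => ENNReal.ofReal (dist (y a) (y t) ^ 2) :=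
      ENNReal.continuous_ofReal.comp (by fun_prop)
    exact (this.tendsto s).mono_left nhdsWithin_le_nhds
  refine le_of_tendsto hlim ?_
  filter_upwards [Ioo_mem_nhdsGT hst] with a ha
  refine (hpos a (hs.trans_lt ha.1) ha.2).trans ?_
  gcongr
  · exact ha.1.le
  · exact ha.1.le

lemma IsACCurve.dist_sq_le (hy : IsACCurve y) {s t : ℝ} (hs : 0 ≤ s) (hst : s ≤ t)
    (hfin : curveAction y t ≠ ⊤) : dist (y s) (y t) ^ 2 ≤
      (t - s) * ((curveAction y t).toReal - (curveAction y s).toReal) := by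
  rcases hst.eq_or_lt with rfl | hlt
  · simp
  have hadd : curveAction y t = curveAction y s
      + ∫⁻ r in Ioc s t, ENNReal.ofReal (metricSpeed y r ^ 2) := lintegral_Ioc_add hs hst
  rw [hadd] at hfin ⊢
  rw [ENNReal.add_ne_top] at hfin
  rw [ENNReal.toReal_add hfin.1 hfin.2, add_sub_cancel_left]
  have h := hy.ofReal_dist_sq_le hs hlt
  rw [← ENNReal.ofReal_toReal hfin.2, ← ENNReal.ofReal_mul (sub_nonneg.2 hst)] at h
  exact (ENNReal.ofReal_le_ofReal_iff
    (mul_nonneg (sub_nonneg.2 hst) ENNReal.toReal_nonneg)).1 h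

lemma curveAction_mono (y : ℝ → Y) : Monotone (curveAction y) := fun _ _ hst =>
  lintegral_mono_set (Ioc_subset_Ioc_right hst)

lemma monotoneOn_toReal_curveAction {T : ℝ} (hT : curveAction y T ≠ ⊤) :
    MonotoneOn (fun t => (curveAction y t).toReal) (Icc 0 T) := fun _ _ _ ht hst =>
  ENNReal.toReal_mono (ne_top_of_le_ne_top hT (curveAction_mono y ht.2)) (curveAction_mono y hst)

lemma IsGeodesicallyConvex.measurable_descSlope_comp (hE : IsGeodesicallyConvex E K)
    (hlsc : LowerSemicontinuous E) (hy : Continuous y) (hfin : ∀ t, E (y t) < ⊤) :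
    Measurable fun r => descSlope E (y r) := by
  refine LowerSemicontinuous.measurable fun r c hc => ?_
  filter_upwards [hy.continuousAt.eventually (hE.eventually_lt_descSlope hlsc (hfin r) hc)]
    with s hs using hs (hfin s)

lemma intervalIntegrable_toReal_of_lsc (hlsc : LowerSemicontinuous E) (hy : Continuous y)
    {M : ℝ≥0∞} (hM : M ≠ ⊤) (T : ℝ) (hle : ∀ t, E (y t) ≤ M) :
    IntervalIntegrable (fun t => (E (y t)).toReal) volume 0 T := by
  refine (intervalIntegrable_const (c := M.toReal)).mono_fun ?_ ?_
  · have h : LowerSemicontinuous fun t => E (y t) := fun t a ha =>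
      hy.continuousAt.eventually (hlsc (y t) a ha)
    exact h.measurable.ennreal_toReal.aestronglyMeasurable
  · refine Eventually.of_forall fun t => ?_
    simp only [Real.norm_of_nonneg ENNReal.toReal_nonneg]
    exact ENNReal.toReal_mono hM (hle t)

lemma exists_forall_sub_le_toReal_of_lsc (hlsc : LowerSemicontinuous E) (hy : Continuous y)
    (hfin : ∀ t, E (y t) < ⊤) : ∀ ε > 0, ∃ δ > 0, ∀ r, 0 ≤ r → r < δ →
      (E (y 0)).toReal - ε ≤ (E (y r)).toReal := by
  intro ε hε
  rcases lt_or_ge ((E (y 0)).toReal - ε) 0 with h0 | h0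
  · exact ⟨1, one_pos, fun r _ _ => h0.le.trans ENNReal.toReal_nonneg⟩
  have hlt : ENNReal.ofReal ((E (y 0)).toReal - ε) < E (y 0) := by
    rw [ENNReal.ofReal_lt_iff_lt_toReal h0 (hfin 0).ne]; linarith
  have hev := hy.continuousAt.eventually (hlsc (y 0) _ hlt)
  obtain ⟨δ, hδ, hb⟩ := Metric.eventually_nhds_iff.1 hev
  refine ⟨δ, hδ, fun r hr hrδ => ?_⟩
  have := hb (y := r) (by rwa [Real.dist_eq, sub_zero, abs_of_nonneg hr])
  exact (ENNReal.ofReal_le_iff_le_toReal (hfin r).ne).1 (le_of_lt this)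

lemma integrableOn_sq_toReal_descSlope (hE : IsGeodesicallyConvex E K)
    (hlsc : LowerSemicontinuous E) (hy : Continuous y) (hfin : ∀ t, E (y t) < ⊤) {T : ℝ}
    (hS : slopeAction E y T ≠ ⊤) :
    IntegrableOn (fun r => (descSlope E (y r)).toReal ^ 2) (Ioc 0 T) ∧
    ∫ r in Ioc 0 T, (descSlope E (y r)).toReal ^ 2 = (slopeAction E y T).toReal ∧
    ∀ᵐ r ∂volume.restrict (Ioc 0 T), descSlope E (y r) ≠ ⊤ := by
  have hmeas := (hE.measurable_descSlope_comp hlsc hy hfin).pow_const 2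
  have hae := ae_lt_top hmeas hS
  simp only [← ENNReal.toReal_pow]
  refine ⟨integrable_toReal_of_lintegral_ne_top hmeas.aemeasurable hS,
    integral_toReal hmeas.aemeasurable hae, ?_⟩
  filter_upwards [hae] with r hr h
  simp [h] at hr

/-- The descending slope is an upper gradient along absolutely continuous curves. -/
lemma IsGeodesicallyConvex.le_add_half_action (hE : IsGeodesicallyConvex E K)
    (hlsc : LowerSemicontinuous E) (hy : IsACCurve y) {M : ℝ≥0∞} (hM : M ≠ ⊤)
    (hle : ∀ t, E (y t) ≤ M) {T : ℝ} (hT : 0 < T) (hA : curveAction y T ≠ ⊤)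
    (hS : slopeAction E y T ≠ ⊤) :
    E (y 0) ≤ E (y T) + curveAction y T / 2 + slopeAction E y T / 2 := by
  have hfin : ∀ t, E (y t) < ⊤ := fun t => (hle t).trans_lt hM.lt_top
  obtain ⟨hGi, hGint, hGfin⟩ := integrableOn_sq_toReal_descSlope hE hlsc hy.continuous hfin hS
  have key := sub_le_of_ae_increment_le (C := |K| / 2) hT
    (intervalIntegrable_toReal_of_lsc hlsc hy.continuous hM T hle)
    (monotoneOn_toReal_curveAction hA)
    ((intervalIntegrable_iff_integrableOn_Ioc_of_le hT.le).2 hGi) ?_ (by positivity)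
    (exists_forall_sub_le_toReal_of_lsc hlsc hy.continuous hfin)
  · rw [intervalIntegral.integral_of_le hT.le, hGint] at key
    have hA0 : (curveAction y 0).toReal = 0 := by simp [curveAction]
    rw [hA0, sub_zero] at key
    have e1 : curveAction y T / 2 = ENNReal.ofReal ((curveAction y T).toReal / 2) := by
      rw [ENNReal.ofReal_div_of_pos two_pos, ENNReal.ofReal_toReal hA, ENNReal.ofReal_ofNat]
    have e2 : slopeAction E y T / 2 = ENNReal.ofReal ((slopeAction E y T).toReal / 2) := by
      rw [ENNReal.ofReal_div_of_pos two_pos, ENNReal.ofReal_toReal hS, ENNReal.ofReal_ofNat]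
    rw [e1, e2, ← ENNReal.ofReal_toReal (hfin T).ne, ← ENNReal.ofReal_toReal (hfin 0).ne,
      ← ENNReal.ofReal_add ENNReal.toReal_nonneg (by positivity),
      ← ENNReal.ofReal_add (by positivity) (by positivity)]
    exact ENNReal.ofReal_le_ofReal (by linarith)
  · filter_upwards [hGfin, ae_restrict_mem measurableSet_Ioc] with r hr hrm t ht h hh hth
    refine increment_le_of_dist_sq_le (hE.sub_le_descSlope_mul (hfin r) (hfin t) hr)
      (hy.dist_sq_le hrm.1.le ht.1 (ne_top_of_le_ne_top hA (curveAction_mono y ht.2))) ?_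
      (by positivity) hh hth
    exact sub_nonneg.2 (monotoneOn_toReal_curveAction hA ⟨hrm.1.le, hrm.2⟩
      ⟨hrm.1.le.trans ht.1, ht.2⟩ ht.1)

/-- A gradient flow in the energy dissipation sense, extended constantly to negative times. -/
structure IsEDEFlow (E : Y → ℝ≥0∞) (y : ℝ → Y) : Prop extends IsACCurve y where
  lt_top : ∀ t, E (y t) < ⊤
  eq_zero_of_nonpos : ∀ t ≤ 0, y t = y 0
  energy_eq : ∀ t s, 0 ≤ t → t ≤ s → E (y t) = E (y s)
    + (∫⁻ r in Ioc t s, ENNReal.ofReal (metricSpeed y r ^ 2)) / 2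
    + (∫⁻ r in Ioc t s, descSlope E (y r) ^ 2) / 2

end EnergyDissipation

section Existence

variable {Y : Type*} [MetricSpace Y] {E : Y → ℝ≥0∞} {K : ℝ} {y : ℝ → Y} {e : ℝ → ℝ}

lemma tendsto_sub_div_of_differentiableAt {r : ℝ} (hd : DifferentiableAt ℝ e r) :
    Tendsto (fun h => (e r - e (r + h)) / h) (𝓝[≠] 0) (𝓝 (-deriv e r)) := by
  refine hd.hasDerivAt.tendsto_slope_zero.neg.congr fun h => ?_
  rw [smul_eq_mul, ← mul_neg, neg_sub, div_eq_inv_mul]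

lemma isBoundedUnder_of_dist_sq_le
    (h : ∀ s t, s ≤ t → dist (y s) (y t) ^ 2 ≤ (t - s) * (e s - e t)) {r : ℝ}
    (hd : DifferentiableAt ℝ e r) :
    IsBoundedUnder (· ≤ ·) (𝓝[≠] (0 : ℝ)) (fun h => dist (y (r + h)) (y r) / |h|) ∧
    metricSpeed y r ≤ √(-deriv e r) := by
  have hq := (tendsto_sub_div_of_differentiableAt hd).sqrt
  have hle : ∀ᶠ h in 𝓝[≠] (0 : ℝ), dist (y (r + h)) (y r) / |h| ≤ √((e r - e (r + h)) / h) := by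
    filter_upwards [self_mem_nhdsWithin] with δ hδ
    have hδ : δ ≠ 0 := hδ
    refine Real.le_sqrt_of_sq_le ?_
    rw [div_pow, sq_abs, div_le_iff₀ (by positivity)]
    have e1 : (e r - e (r + δ)) / δ * δ ^ 2 = δ * (e r - e (r + δ)) := by field_simp
    rw [e1]
    rcases le_total 0 δ with hpos | hneg
    · have := h r (r + δ) (by linarith)
      rw [dist_comm]; simpa using this
    · have := h (r + δ) r (by linarith)
      linarith
  exact ⟨hq.isBoundedUnder_le.mono_le hle, metricSpeed_le_of_tendsto hq hle⟩

lemma metricSpeed_sq_add_le {r c : ℝ}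
    (hloc : ∃ δ > 0, ∀ s t, r - δ < s → s ≤ t → t < r + δ →
      dist (y s) (y t) ^ 2 + (t - s) ^ 2 * c ^ 2 ≤ 2 * (t - s) * (e s - e t))
    (h0 : 0 ≤ metricSpeed y r)
    (hd : DifferentiableAt ℝ e r) : metricSpeed y r ^ 2 + c ^ 2 ≤ -2 * deriv e r := by
  obtain ⟨δ, hδ, hloc⟩ := hloc
  have hq0 : Tendsto (fun h => 2 * ((e r - e (r + h)) / h) - c ^ 2) (𝓝[≠] 0)
      (𝓝 (2 * -deriv e r - c ^ 2)) :=
    ((tendsto_sub_div_of_differentiableAt hd).const_mul 2).sub_const _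
  have hsq : ∀ᶠ h in 𝓝[≠] (0 : ℝ), (dist (y (r + h)) (y r) / |h|) ^ 2 ≤
      2 * ((e r - e (r + h)) / h) - c ^ 2 := by
    have hnear : ∀ᶠ h in 𝓝[≠] (0 : ℝ), h ∈ Ioo (-δ) δ :=
      eventually_nhdsWithin_of_eventually_nhds (Ioo_mem_nhds (by linarith) hδ)
    filter_upwards [self_mem_nhdsWithin, hnear] with η hη hηδ
    have hη : η ≠ 0 := hη
    rw [div_pow, sq_abs, div_le_iff₀ (by positivity)]
    have e1 : (2 * ((e r - e (r + η)) / η) - c ^ 2) * η ^ 2 =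
      2 * η * (e r - e (r + η)) - η ^ 2 * c ^ 2 := by field_simp
    rw [e1]
    rcases le_total 0 η with hpos | hneg
    · have := hloc r (r + η) (by linarith) (by linarith) (by linarith [hηδ.2])
      rw [dist_comm]
      simp only [add_sub_cancel_left] at this
      linarith
    · have := hloc (r + η) r (by linarith [hηδ.1]) (by linarith) (by linarith)
      simp only [sub_add_cancel_left] at this
      linarith [neg_sq η ▸ this]
  have hnn : 0 ≤ 2 * -deriv e r - c ^ 2 :=
    ge_of_tendsto hq0 (hsq.mono fun h hh => (sq_nonneg _).trans hh)
  have hsp : metricSpeed y r ≤ √(2 * -deriv e r - c ^ 2) :=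
    metricSpeed_le_of_tendsto hq0.sqrt (hsq.mono fun h hh => Real.le_sqrt_of_sq_le hh)
  have := pow_le_pow_left₀ h0 hsp 2
  rw [Real.sq_sqrt hnn] at this
  linarith

lemma integrableOn_sqrt_neg_deriv (he : Antitone e) {a b : ℝ} (hab : a ≤ b) :
    IntegrableOn (fun r => √(-deriv e r)) (Ioc a b) := by
  have hi := (lintegral_neg_deriv_le_of_antitone he hab).1
  refine Integrable.mono' ((integrable_const (1 : ℝ)).add hi.norm) ?_ ?_
  · exact ((measurable_deriv e).neg.sqrt).aestronglyMeasurable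
  · refine Eventually.of_forall fun r => ?_
    simp only [Pi.add_apply]
    rw [Real.norm_of_nonneg (Real.sqrt_nonneg _), Real.sqrt_le_left (by positivity),
      Real.norm_eq_abs]
    nlinarith [neg_le_abs (deriv e r), sq_nonneg (deriv e r), abs_nonneg (deriv e r)]

lemma isACCurve_of_dist_sq_le (he : Antitone e)
    (h : ∀ s t, s ≤ t → dist (y s) (y t) ^ 2 ≤ (t - s) * (e s - e t)) (hM : ∃ M, ∀ t, |e t| ≤ M) :
    IsACCurve y := by
  obtain ⟨M, hM⟩ := hM
  have haed : ∀ᵐ r : ℝ, DifferentiableAt ℝ e r := by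
    filter_upwards [he.neg.ae_differentiableAt] with r hr
    simpa using hr.neg
  refine ⟨?_, fun a b ha hab => ?_⟩
  · have hM0 : 0 ≤ M := (abs_nonneg _).trans (hM 0)
    have hbd : ∀ s t, dist (y s) (y t) ^ 2 ≤ |t - s| * (2 * M) := by
      have : ∀ s t, s ≤ t → dist (y s) (y t) ^ 2 ≤ |t - s| * (2 * M) := by
        intro s t hst
        refine (h s t hst).trans ?_
        rw [abs_of_nonneg (sub_nonneg.2 hst)]
        refine mul_le_mul_of_nonneg_left ?_ (sub_nonneg.2 hst)
        linarith [(abs_le.1 (hM s)).2, (abs_le.1 (hM t)).1]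
      intro s t
      rcases le_total s t with hst | hst
      · exact this s t hst
      · rw [dist_comm, abs_sub_comm]; exact this t s hst
    refine continuous_iff_continuousAt.2 fun t => ?_
    refine tendsto_iff_dist_tendsto_zero.2 ?_
    have hc : Continuous fun s : ℝ => √(|t - s| * (2 * M)) := by fun_prop
    have hlim := hc.tendsto t
    simp only [sub_self, abs_zero, zero_mul, Real.sqrt_zero] at hlim
    refine squeeze_zero (fun _ => dist_nonneg) (fun s => ?_) hlim
    exact Real.le_sqrt_of_sq_le (hbd s t)
  · refine ⟨fun r => √(-deriv e r), fun r => Real.sqrt_nonneg _, ?_, fun t s hat hts hsb => ?_⟩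
    · rw [integrableOn_Icc_iff_integrableOn_Ioc]
      exact integrableOn_sqrt_neg_deriv he hab
    · have hac := absolutelyContinuousOnInterval_of_dist_sq_le he h hts
      have hae := ae_restrict_of_ae (s := Ioc t s) haed
      have hd := ofReal_dist_le_lintegral_metricSpeed hts hac
        (hae.mono fun r hr => (isBoundedUnder_of_dist_sq_le h hr).1)
      rw [intervalIntegral.integral_of_le hts]
      have hintegral : 0 ≤ ∫ r in Ioc t s, √(-deriv e r) :=
        integral_nonneg fun r => Real.sqrt_nonneg _
      rw [← ENNReal.ofReal_le_ofReal_iff hintegral]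
      refine hd.trans ?_
      rw [ofReal_integral_eq_lintegral_ofReal (integrableOn_sqrt_neg_deriv he hts)
        (Eventually.of_forall fun r => Real.sqrt_nonneg _)]
      refine lintegral_mono_ae (hae.mono fun r hr => ?_)
      exact ENNReal.ofReal_le_ofReal (isBoundedUnder_of_dist_sq_le h hr).2

lemma ofReal_metricSpeed_sq_add_le
    (h : ∀ s t, s ≤ t → dist (y s) (y t) ^ 2 ≤ (t - s) * (e s - e t)) {r : ℝ}
    (hloc : ∀ c, 0 ≤ c → ENNReal.ofReal c < descSlope E (y r) → ∃ δ > 0, ∀ s t, r - δ < s →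
      s ≤ t → t < r + δ →
      dist (y s) (y t) ^ 2 + (t - s) ^ 2 * c ^ 2 ≤ 2 * (t - s) * (e s - e t))
    (he : Antitone e) (hd : DifferentiableAt ℝ e r) :
    ENNReal.ofReal (metricSpeed y r ^ 2) + descSlope E (y r) ^ 2 ≤
      ENNReal.ofReal (2 * -deriv e r) := by
  obtain ⟨hb, hle⟩ := isBoundedUnder_of_dist_sq_le h hd
  have h0 := metricSpeed_nonneg_of_isBoundedUnder hb
  have hder : 0 ≤ -deriv e r := by
    have hm : Monotone (-e) := he.neg
    have := hm.deriv_nonneg (x := r)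
    rwa [show deriv (-e) r = -deriv e r from deriv.neg] at this
  have hsq : metricSpeed y r ^ 2 ≤ -deriv e r := by
    have := pow_le_pow_left₀ h0 hle 2
    rwa [Real.sq_sqrt hder] at this
  have hnn : 0 ≤ 2 * -deriv e r - metricSpeed y r ^ 2 := by linarith
  have hslope : descSlope E (y r) ≤ ENNReal.ofReal √(2 * -deriv e r - metricSpeed y r ^ 2) := by
    refine le_of_forall_lt_imp_le_of_dense fun c hc => ?_
    have hctop : c ≠ ⊤ := hc.ne_top
    rw [← ENNReal.ofReal_toReal hctop] at hc ⊢
    refine ENNReal.ofReal_le_ofReal (Real.le_sqrt_of_sq_le ?_)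
    linarith [metricSpeed_sq_add_le
      (hloc _ ENNReal.toReal_nonneg hc) h0 hd]
  calc ENNReal.ofReal (metricSpeed y r ^ 2) + descSlope E (y r) ^ 2
      ≤ ENNReal.ofReal (metricSpeed y r ^ 2)
        + ENNReal.ofReal √(2 * -deriv e r - metricSpeed y r ^ 2) ^ 2 := by gcongr
    _ = ENNReal.ofReal (2 * -deriv e r) := by
        rw [← ENNReal.ofReal_pow (Real.sqrt_nonneg _), Real.sq_sqrt hnn,
          ← ENNReal.ofReal_add (by positivity) hnn]
        congr 1; ring

/-- Existence of gradient flows in the energy dissipation sense for geodesically convex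
functionals on compact spaces. -/
theorem IsGeodesicallyConvex.exists_isEDEFlow [CompactSpace Y]
    (hE : IsGeodesicallyConvex E K) (hlsc : LowerSemicontinuous E) {y₀ : Y} (hy₀ : E y₀ < ⊤) :
    ∃ y : ℝ → Y, IsEDEFlow E y ∧ y 0 = y₀ := by
  obtain ⟨z, f, hz0, hf0, hfin, hmono, hloc⟩ := hE.exists_limit_curve hlsc hy₀
  set y : ℝ → Y := fun t => z (max t 0) with hy
  set e : ℝ → ℝ := fun t => f (max t 0) with he
  have heanti : Antitone e := fun s t hst =>
    (hmono _ _ (le_max_right s 0) (max_le_max_right 0 hst)).1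
  have hdist : ∀ s t, s ≤ t → dist (y s) (y t) ^ 2 ≤ (t - s) * (e s - e t) := by
    intro s t hst
    have h1 := hmono _ _ (le_max_right s 0) (max_le_max_right 0 hst)
    refine h1.2.trans (mul_le_mul_of_nonneg_right ?_ (sub_nonneg.2 h1.1))
    rcases le_total s 0 with hs | hs <;> rcases le_total t 0 with ht | ht <;>
      simp [hs, ht] <;> linarith
  have he0 : ∀ t, 0 ≤ e t := fun t => (hfin _ (le_max_right t 0)).2
  have hele : ∀ t, e t ≤ e 0 := fun t => by
    have := (hmono 0 _ le_rfl (le_max_right t 0)).1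
    simpa [he] using this
  have hEe : ∀ t, E (y t) ≤ ENNReal.ofReal (e t) := fun t => (hfin _ (le_max_right t 0)).1
  have hE0 : E (y 0) = ENNReal.ofReal (e 0) := by
    simp [hy, he, hz0, hf0, ENNReal.ofReal_toReal hy₀.ne]
  have hEM : ∀ t, E (y t) ≤ ENNReal.ofReal (e 0) := fun t =>
    (hEe t).trans (ENNReal.ofReal_le_ofReal (hele t))
  have hEfin : ∀ t, E (y t) < ⊤ := fun t => (hEM t).trans_lt ENNReal.ofReal_lt_top
  have hac : IsACCurve y := isACCurve_of_dist_sq_le heanti hdist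
    ⟨e 0, fun t => by rw [abs_of_nonneg (he0 t)]; exact hele t⟩
  have haed : ∀ᵐ r : ℝ, DifferentiableAt ℝ e r := by
    filter_upwards [heanti.neg.ae_differentiableAt] with r hr
    simpa using hr.neg
  have hpt : ∀ T : ℝ, ∀ᵐ r ∂volume.restrict (Ioc 0 T),
      ENNReal.ofReal (metricSpeed y r ^ 2) + descSlope E (y r) ^ 2 ≤
        ENNReal.ofReal (2 * -deriv e r) := by
    intro T
    filter_upwards [ae_restrict_of_ae haed, ae_restrict_mem measurableSet_Ioc] with r hr hrm
    refine ofReal_metricSpeed_sq_add_le hdist (fun c hc hcs => ?_) heanti hr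
    have hyr : y r = z r := by simp [hy, hrm.1.le]
    rw [hyr] at hcs
    obtain ⟨δ, hδ, h⟩ := hloc r hrm.1.le c hc hcs
    refine ⟨min δ r, lt_min hδ hrm.1, fun s t hrs hst htr => ?_⟩
    have hs : 0 ≤ s := by linarith [min_le_right δ r]
    have := h s t hs (by linarith [min_le_left δ r]) hst (by linarith [min_le_left δ r])
    simpa [hy, he, hs, hs.trans hst] using this
  have hmeas : Measurable fun r => descSlope E (y r) ^ 2 :=
    (hE.measurable_descSlope_comp hlsc hac.continuous hEfin).pow_const 2
  have hsum : ∀ T, 0 ≤ T → curveAction y T + slopeAction E y T ≤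
      2 * ENNReal.ofReal (e 0 - e T) := by
    intro T hT
    rw [curveAction, slopeAction, ← lintegral_add_right _ hmeas]
    refine (lintegral_mono_ae (hpt T)).trans ?_
    simp only [ENNReal.ofReal_mul zero_le_two, ENNReal.ofReal_ofNat]
    rw [lintegral_const_mul' _ _ (by simp)]
    gcongr
    exact (lintegral_neg_deriv_le_of_antitone heanti hT).2
  have hfinsum : ∀ T, 0 ≤ T → curveAction y T ≠ ⊤ ∧ slopeAction E y T ≠ ⊤ := fun T hT =>
    ENNReal.add_ne_top.1 (ne_top_of_le_ne_top
      (ENNReal.mul_ne_top (by simp) ENNReal.ofReal_ne_top) (hsum T hT))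
  have hede : ∀ T, 0 ≤ T → E (y 0) = E (y T) + curveAction y T / 2 + slopeAction E y T / 2 := by
    intro T hT
    refine le_antisymm ?_ ?_
    · rcases hT.eq_or_lt with rfl | hT'
      · rw [add_assoc]; exact le_self_add
      · exact hE.le_add_half_action hlsc hac ENNReal.ofReal_ne_top hEM hT' (hfinsum T hT).1
          (hfinsum T hT).2
    · rw [add_assoc, ← ENNReal.add_div, hE0]
      calc E (y T) + (curveAction y T + slopeAction E y T) / 2
          ≤ ENNReal.ofReal (e T) + (2 * ENNReal.ofReal (e 0 - e T)) / 2 := by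
            gcongr
            · exact hEe T
            · exact hsum T hT
        _ = ENNReal.ofReal (e T) + ENNReal.ofReal (e 0 - e T) := by
            rw [mul_comm, ENNReal.mul_div_cancel_right (by simp) (by simp)]
        _ = ENNReal.ofReal (e 0) := by
            rw [← ENNReal.ofReal_add (he0 T) (sub_nonneg.2 (hele T))]; congr 1; ring
  refine ⟨y, ⟨hac, hEfin, fun t ht => by simp [hy, ht], fun t s ht hts => ?_⟩, by simp [hy, hz0]⟩
  have h1 := hede t ht
  have h2 := hede s (ht.trans hts)
  have hA : curveAction y s = _ := lintegral_Ioc_add ht hts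
  have hS : slopeAction E y s = _ := lintegral_Ioc_add ht hts
  rw [hA, hS, h1] at h2
  obtain ⟨hAt, hSt⟩ := hfinsum t ht
  have hne : curveAction y t / 2 + slopeAction E y t / 2 ≠ ⊤ :=
    ENNReal.add_ne_top.2 ⟨(ENNReal.div_lt_top hAt (by simp)).ne,
      (ENNReal.div_lt_top hSt (by simp)).ne⟩
  refine (ENNReal.add_left_inj hne).1 ?_
  rw [← add_assoc, h2, ENNReal.add_div, ENNReal.add_div]
  simp only [curveAction, slopeAction]
  ring

end Existence

section Uniqueness

variable {Y : Type*} [MetricSpace Y] {E : Y → ℝ≥0∞} {K : ℝ} {u v : ℝ → Y}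

namespace IsEDEFlow

lemma energy_le (hu : IsEDEFlow E u) (t : ℝ) : E (u t) ≤ E (u 0) := by
  rcases le_total t 0 with ht | ht
  · rw [hu.eq_zero_of_nonpos t ht]
  · rw [hu.energy_eq 0 t le_rfl ht, add_assoc]; exact le_self_add

lemma action_ne_top (hu : IsEDEFlow E u) {T : ℝ} (hT : 0 ≤ T) :
    curveAction u T ≠ ⊤ ∧ slopeAction E u T ≠ ⊤ := by
  have h := (hu.lt_top 0).ne
  rw [hu.energy_eq 0 T le_rfl hT, ENNReal.add_ne_top, ENNReal.add_ne_top] at h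
  constructor
  · rintro htop
    exact h.1.2 (by rw [show (∫⁻ r in Ioc 0 T, ENNReal.ofReal (metricSpeed u r ^ 2)) = ⊤ from htop]
                    exact ENNReal.top_div_of_ne_top (by simp))
  · rintro htop
    exact h.2 (by rw [show (∫⁻ r in Ioc 0 T, descSlope E (u r) ^ 2) = ⊤ from htop]
                  exact ENNReal.top_div_of_ne_top (by simp))

lemma toReal_energy_eq (hu : IsEDEFlow E u) {T : ℝ} (hT : 0 ≤ T) :
    (E (u 0)).toReal = (E (u T)).toReal + (curveAction u T).toReal / 2
      + (slopeAction E u T).toReal / 2 := by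
  obtain ⟨hA, hS⟩ := hu.action_ne_top hT
  have h := hu.energy_eq 0 T le_rfl hT
  change E (u 0) = E (u T) + curveAction u T / 2 + slopeAction E u T / 2 at h
  have hA' := (ENNReal.div_lt_top hA (by simp : (2 : ℝ≥0∞) ≠ 0)).ne
  have hS' := (ENNReal.div_lt_top hS (by simp : (2 : ℝ≥0∞) ≠ 0)).ne
  rw [h, ENNReal.toReal_add (ENNReal.add_ne_top.2 ⟨(hu.lt_top T).ne, hA'⟩) hS',
    ENNReal.toReal_add (hu.lt_top T).ne hA', ENNReal.toReal_div, ENNReal.toReal_div,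
    ENNReal.toReal_ofNat]

/-- Uniqueness of gradient flows, given an averaging operation which contracts the squared
distance, along which the energy is strictly convex and the squared slope is convex. -/
theorem eq_of_average (hE : IsGeodesicallyConvex E K) (hlsc : LowerSemicontinuous E)
    (avg : Y → Y → Y) (hself : ∀ a, avg a a = a)
    (hdist : ∀ a b a' b', dist (avg a b) (avg a' b') ^ 2 ≤ (dist a a' ^ 2 + dist b b' ^ 2) / 2)
    (hconv : ∀ a b, E a < ⊤ → E b < ⊤ → E (avg a b) < ⊤ ∧
      (E (avg a b)).toReal ≤ ((E a).toReal + (E b).toReal) / 2)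
    (hstrict : ∀ a b, E a < ⊤ → E b < ⊤ → a ≠ b →
      (E (avg a b)).toReal < ((E a).toReal + (E b).toReal) / 2)
    (hslope : ∀ a b z, E a < ⊤ → E b < ⊤ → E z < ⊤ → descSlope E a ≠ ⊤ → descSlope E b ≠ ⊤ →
      (E (avg a b)).toReal - (E z).toReal ≤
        √(((descSlope E a).toReal ^ 2 + (descSlope E b).toReal ^ 2) / 2) * dist (avg a b) z
          + |K| / 2 * dist (avg a b) z ^ 2)
    (hu : IsEDEFlow E u) (hv : IsEDEFlow E v) (h0 : u 0 = v 0) {T : ℝ} (hT : 0 ≤ T) :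
    u T = v T := by
  by_contra hne
  have hT : 0 < T := by
    refine hT.lt_of_ne ?_
    rintro rfl
    exact hne h0
  set σ : ℝ → Y := fun t => avg (u t) (v t) with hσ
  have hσfin : ∀ t, E (σ t) < ⊤ := fun t => (hconv _ _ (hu.lt_top t) (hv.lt_top t)).1
  have hσle : ∀ t, E (σ t) ≤ E (u 0) := by
    intro t
    rw [← ENNReal.toReal_le_toReal (hσfin t).ne (hu.lt_top 0).ne]
    have h1 := (hconv _ _ (hu.lt_top t) (hv.lt_top t)).2
    have h2 := ENNReal.toReal_mono (hu.lt_top 0).ne (hu.energy_le t)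
    have h3 := ENNReal.toReal_mono (hv.lt_top 0).ne (hv.energy_le t)
    rw [← h0] at h3
    linarith
  have hσcont : Continuous σ := by
    refine continuous_iff_continuousAt.2 fun t => tendsto_iff_dist_tendsto_zero.2 ?_
    have hcu := hu.continuous
    have hcv := hv.continuous
    have hc : Continuous fun s => √((dist (u s) (u t) ^ 2 + dist (v s) (v t) ^ 2) / 2) := by
      fun_prop
    have hlim := hc.tendsto t
    simp only [dist_self, ne_eq, OfNat.ofNat_ne_zero, not_false_eq_true, zero_pow, add_zero,
      zero_div, Real.sqrt_zero] at hlim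
    exact squeeze_zero (fun _ => dist_nonneg) (fun s => Real.le_sqrt_of_sq_le (hdist _ _ _ _)) hlim
  obtain ⟨hAu, hSu⟩ := hu.action_ne_top hT.le
  obtain ⟨hAv, hSv⟩ := hv.action_ne_top hT.le
  obtain ⟨hGu, hGuint, hGufin⟩ :=
    integrableOn_sq_toReal_descSlope hE hlsc hu.continuous hu.lt_top hSu
  obtain ⟨hGv, hGvint, hGvfin⟩ :=
    integrableOn_sq_toReal_descSlope hE hlsc hv.continuous hv.lt_top hSv
  have hGi : IntegrableOn (fun r => ((descSlope E (u r)).toReal ^ 2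
      + (descSlope E (v r)).toReal ^ 2) / 2) (Ioc 0 T) := (Integrable.add hGu hGv).div_const 2
  have hmu := monotoneOn_toReal_curveAction hAu
  have hmv := monotoneOn_toReal_curveAction hAv
  have key := sub_le_of_ae_increment_le (C := |K| / 2)
    (A := fun t => ((curveAction u t).toReal + (curveAction v t).toReal) / 2)
    (G := fun r => ((descSlope E (u r)).toReal ^ 2 + (descSlope E (v r)).toReal ^ 2) / 2) hT
    (intervalIntegrable_toReal_of_lsc hlsc hσcont (hu.lt_top 0).ne T hσle)
    (fun s hs t ht hst => by linarith [hmu hs ht hst, hmv hs ht hst])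
    ((intervalIntegrable_iff_integrableOn_Ioc_of_le hT.le).2 hGi) ?_
    (by positivity) (exists_forall_sub_le_toReal_of_lsc hlsc hσcont hσfin)
  · rw [intervalIntegral.integral_of_le hT.le, integral_div, integral_add hGu hGv, hGuint,
      hGvint] at key
    have e0 : (curveAction u 0).toReal = 0 ∧ (curveAction v 0).toReal = 0 := by simp [curveAction]
    have e1 := hu.toReal_energy_eq hT.le
    have e2 := hv.toReal_energy_eq hT.le
    have e3 : σ 0 = u 0 := by rw [hσ]; simp only [← h0, hself]
    rw [e3, e0.1, e0.2] at key
    rw [← h0] at e2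
    have := hstrict _ _ (hu.lt_top T) (hv.lt_top T) hne
    change (E (σ T)).toReal < _ at this
    linarith
  · filter_upwards [hGufin, hGvfin, ae_restrict_mem measurableSet_Ioc]
      with r hru hrv hrm t ht h hh hth
    have hG : ((descSlope E (u r)).toReal ^ 2 + (descSlope E (v r)).toReal ^ 2) / 2 =
        √(((descSlope E (u r)).toReal ^ 2 + (descSlope E (v r)).toReal ^ 2) / 2) ^ 2 :=
      (Real.sq_sqrt (by positivity)).symm
    have hr' : r ∈ Icc 0 T := ⟨hrm.1.le, hrm.2⟩
    have ht' : t ∈ Icc 0 T := ⟨hrm.1.le.trans ht.1, ht.2⟩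
    rw [hG]
    refine increment_le_of_dist_sq_le
      (hslope _ _ (σ t) (hu.lt_top r) (hv.lt_top r) (hσfin t) hru hrv)
      (D := dist (σ r) (σ t)) (τ := t - r) ?_ ?_ (by positivity) hh hth
    · have d1 := hu.dist_sq_le hrm.1.le ht.1 (hu.action_ne_top ht'.1).1
      have d2 := hv.dist_sq_le hrm.1.le ht.1 (hv.action_ne_top ht'.1).1
      have d3 : dist (σ r) (σ t) ^ 2 ≤ _ := hdist (u r) (v r) (u t) (v t)
      linarith
    · linarith [hmu hr' ht' ht.1, hmv hr' ht' ht.1]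

end IsEDEFlow

end Uniqueness

section Coupling

variable {X : Type*} [MeasurableSpace X]

lemma isCoupling_prod (μ ν : Measure X) [IsProbabilityMeasure μ] [IsProbabilityMeasure ν] :
    IsCoupling μ ν (μ.prod ν) :=
  ⟨inferInstance, by simp [Measure.map_fst_prod], by simp [Measure.map_snd_prod]⟩

lemma IsCoupling.swap {μ ν : Measure X} {γ : Measure (X × X)} (hγ : IsCoupling μ ν γ) :
    IsCoupling ν μ (γ.map Prod.swap) := by
  obtain ⟨hp, h1, h2⟩ := hγ
  refine ⟨Measure.isProbabilityMeasure_map measurable_swap.aemeasurable, ?_, ?_⟩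
  · rw [Measure.map_map measurable_fst measurable_swap]; exact h2
  · rw [Measure.map_map measurable_snd measurable_swap]; exact h1

lemma IsCoupling.isProbabilityMeasure {μ ν : Measure X} {γ : Measure (X × X)}
    (hγ : IsCoupling μ ν γ) : IsProbabilityMeasure μ ∧ IsProbabilityMeasure ν := by
  obtain ⟨hp, rfl, rfl⟩ := hγ
  exact ⟨Measure.isProbabilityMeasure_map measurable_fst.aemeasurable,
    Measure.isProbabilityMeasure_map measurable_snd.aemeasurable⟩

end Coupling

section Wasserstein

variable {X : Type*} [MetricSpace X] [MeasurableSpace X]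

lemma W2_nonneg (μ ν : Measure X) : 0 ≤ W2 μ ν := Real.sqrt_nonneg _

lemma sInf_cost_nonneg (μ ν : Measure X) : 0 ≤ sInf {c : ℝ | ∃ γ : Measure (X × X),
    IsCoupling μ ν γ ∧ c = ∫ p, dist p.1 p.2 ^ 2 ∂γ} := by
  refine Real.sInf_nonneg ?_
  rintro c ⟨γ, -, rfl⟩
  exact integral_nonneg fun p => by positivity

lemma W2_sq_le {μ ν : Measure X} {γ : Measure (X × X)} (hγ : IsCoupling μ ν γ) :
    W2 μ ν ^ 2 ≤ ∫ p, dist p.1 p.2 ^ 2 ∂γ := by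
  rw [W2, Real.sq_sqrt (sInf_cost_nonneg μ ν)]
  refine csInf_le ⟨0, ?_⟩ ⟨γ, hγ, rfl⟩
  rintro c ⟨γ, -, rfl⟩
  exact integral_nonneg fun p => by positivity

lemma exists_isCoupling_lt {μ ν : Measure X} [IsProbabilityMeasure μ] [IsProbabilityMeasure ν]
    {c : ℝ} (hc : W2 μ ν ^ 2 < c) :
    ∃ γ, IsCoupling μ ν γ ∧ ∫ p, dist p.1 p.2 ^ 2 ∂γ < c := by
  rw [W2, Real.sq_sqrt (sInf_cost_nonneg μ ν)] at hc
  obtain ⟨_, ⟨γ, hγ, rfl⟩, hlt⟩ := exists_lt_of_csInf_lt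
    (s := {c : ℝ | ∃ γ : Measure (X × X), IsCoupling μ ν γ ∧ c = ∫ p, dist p.1 p.2 ^ 2 ∂γ})
    ⟨_, _, isCoupling_prod μ ν, rfl⟩ hc
  exact ⟨γ, hγ, hlt⟩

variable [CompactSpace X] [BorelSpace X]

lemma integrable_of_continuous_of_compactSpace {Z : Type*} [MetricSpace Z] [CompactSpace Z]
    [MeasurableSpace Z] [BorelSpace Z] (μ : Measure Z) [IsFiniteMeasure μ] {f : Z → ℝ}
    (hf : Continuous f) : Integrable f μ := by
  rw [← integrableOn_univ]
  exact hf.continuousOn.integrableOn_compact isCompact_univ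

lemma integrable_dist_sq (γ : Measure (X × X)) [IsFiniteMeasure γ] :
    Integrable (fun p : X × X => dist p.1 p.2 ^ 2) γ :=
  integrable_of_continuous_of_compactSpace γ (by fun_prop)

lemma ofReal_cost_eq (γ : Measure (X × X)) [IsFiniteMeasure γ] :
    ENNReal.ofReal (∫ p, dist p.1 p.2 ^ 2 ∂γ) = ∫⁻ p, ENNReal.ofReal (dist p.1 p.2 ^ 2) ∂γ :=
  ofReal_integral_eq_lintegral_ofReal (integrable_dist_sq γ)
    (Eventually.of_forall fun p => by positivity)

lemma W2_sq_le_of_lintegral_le {μ ν : Measure X} {γ : Measure (X × X)} (hγ : IsCoupling μ ν γ)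
    {c : ℝ} (hc : 0 ≤ c) (h : ∫⁻ p, ENNReal.ofReal (dist p.1 p.2 ^ 2) ∂γ ≤ ENNReal.ofReal c) :
    W2 μ ν ^ 2 ≤ c := by
  have := hγ.1
  rw [← ofReal_cost_eq, ENNReal.ofReal_le_ofReal_iff hc] at h
  exact (W2_sq_le hγ).trans h

lemma cost_swap (γ : Measure (X × X)) :
    ∫ p, dist p.1 p.2 ^ 2 ∂(γ.map Prod.swap) = ∫ p, dist p.1 p.2 ^ 2 ∂γ := by
  rw [integral_map measurable_swap.aemeasurable
    (Continuous.aestronglyMeasurable (by fun_prop))]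
  simp [dist_comm]

lemma W2_comm (μ ν : Measure X) : W2 μ ν = W2 ν μ := by
  unfold W2
  congr 2
  ext c
  constructor <;>
  · rintro ⟨γ, hγ, rfl⟩
    exact ⟨_, hγ.swap, (cost_swap γ).symm⟩

lemma W2_self (μ : Measure X) [IsProbabilityMeasure μ] : W2 μ μ = 0 := by
  have hm : Measurable fun x : X => (x, x) := by fun_prop
  have hc : IsCoupling μ μ (μ.map fun x => (x, x)) := by
    refine ⟨Measure.isProbabilityMeasure_map hm.aemeasurable, ?_, ?_⟩
    · rw [Measure.map_map measurable_fst hm]; exact Measure.map_id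
    · rw [Measure.map_map measurable_snd hm]; exact Measure.map_id
  have h := W2_sq_le hc
  rw [integral_map hm.aemeasurable (Continuous.aestronglyMeasurable (by fun_prop))] at h
  simp only [dist_self, ne_eq, OfNat.ofNat_ne_zero, not_false_eq_true, zero_pow,
    integral_zero] at h
  exact pow_eq_zero_iff (two_ne_zero) |>.1 (le_antisymm h (sq_nonneg _))

/-- Convergence in `W2` controls the integrals of continuous functions. -/
lemma exists_abs_integral_sub_le {f : X → ℝ} (hf : Continuous f) {ε : ℝ} (hε : 0 < ε) :
    ∃ C : ℝ, 0 ≤ C ∧ ∀ μ ν : Measure X, IsProbabilityMeasure μ → IsProbabilityMeasure ν →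
      |∫ x, f x ∂μ - ∫ x, f x ∂ν| ≤ ε + C * W2 μ ν ^ 2 := by
  obtain ⟨δ, hδ, hδf⟩ := Metric.uniformContinuous_iff.1
    (CompactSpace.uniformContinuous_of_continuous hf) ε hε
  obtain ⟨B, hB⟩ := isCompact_univ.exists_bound_of_continuousOn hf.continuousOn
  have hB0 : ∀ x, |f x| ≤ |B| := fun x => (hB x (mem_univ x)).trans (le_abs_self B)
  refine ⟨2 * |B| / δ ^ 2, by positivity, fun μ ν hμ hν => ?_⟩
  set C := 2 * |B| / δ ^ 2 with hC
  have hC0 : 0 ≤ C := by positivity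
  have hpt : ∀ p : X × X, |f p.1 - f p.2| ≤ ε + C * dist p.1 p.2 ^ 2 := by
    intro p
    rcases lt_or_ge (dist p.1 p.2) δ with h | h
    · have h1 := (hδf h).le
      rw [Real.dist_eq] at h1
      have : 0 ≤ C * dist p.1 p.2 ^ 2 := by positivity
      linarith
    · have h1 : |f p.1 - f p.2| ≤ 2 * |B| :=
        (abs_sub _ _).trans (by linarith [hB0 p.1, hB0 p.2])
      have h2 : 2 * |B| = C * δ ^ 2 := by rw [hC]; field_simp
      have h3 : C * δ ^ 2 ≤ C * dist p.1 p.2 ^ 2 := by gcongr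
      linarith
  have hγle : ∀ γ, IsCoupling μ ν γ →
      |∫ x, f x ∂μ - ∫ x, f x ∂ν| ≤ ε + C * ∫ p, dist p.1 p.2 ^ 2 ∂γ := by
    rintro γ ⟨hγ, h1, h2⟩
    have i1 : Integrable (fun p : X × X => f p.1) γ :=
      integrable_of_continuous_of_compactSpace γ (by fun_prop)
    have i2 : Integrable (fun p : X × X => f p.2) γ :=
      integrable_of_continuous_of_compactSpace γ (by fun_prop)
    rw [← h1, ← h2, integral_map measurable_fst.aemeasurable hf.aestronglyMeasurable,
      integral_map measurable_snd.aemeasurable hf.aestronglyMeasurable, ← integral_sub i1 i2]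
    refine (abs_integral_le_integral_abs).trans ?_
    calc ∫ p, |f p.1 - f p.2| ∂γ ≤ ∫ p, (ε + C * dist p.1 p.2 ^ 2) ∂γ :=
          integral_mono (i1.sub i2).abs
            ((integrable_const ε).add ((integrable_dist_sq γ).const_mul C)) hpt
      _ = _ := by
          rw [integral_add (integrable_const ε) ((integrable_dist_sq γ).const_mul C),
            integral_const_mul]
          simp
  refine le_of_forall_pos_le_add fun η hη => ?_
  obtain ⟨γ, hγ, hlt⟩ := exists_isCoupling_lt (μ := μ) (ν := ν)
    (c := W2 μ ν ^ 2 + η / (C + 1)) (by linarith [show 0 < η / (C + 1) by positivity])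
  have h1 := mul_le_mul_of_nonneg_left hlt.le hC0
  have h2 : C * (η / (C + 1)) ≤ η := by
    rw [mul_div_assoc', div_le_iff₀ (by positivity)]; nlinarith
  linarith [hγle γ hγ]

lemma eq_of_W2_eq_zero {μ ν : Measure X} [IsProbabilityMeasure μ] [IsProbabilityMeasure ν]
    (h : W2 μ ν = 0) : μ = ν := by
  refine ext_of_forall_integral_eq_of_IsFiniteMeasure fun f => ?_
  refine eq_of_abs_sub_le_all fun ε hε => ?_
  obtain ⟨C, -, hC⟩ := exists_abs_integral_sub_le f.continuous hε
  have := hC μ ν inferInstance inferInstance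
  rw [h] at this
  simpa using this

lemma le_add_of_forall_sq_le {x a b : ℝ} (ha : 0 < a) (hb : 0 < b)
    (h : ∀ l > 0, x ^ 2 ≤ (1 + l) * a ^ 2 + (1 + 1 / l) * b ^ 2) : x ≤ a + b := by
  refine abs_le_of_sq_le_sq' ?_ (by positivity) |>.2
  refine (h (b / a) (by positivity)).trans_eq ?_
  field_simp
  ring

open ProbabilityTheory in
/-- Gluing of couplings. -/
lemma IsCoupling.exists_glue [Nonempty X] {μ ν ρ : Measure X} {γ γ' : Measure (X × X)}
    (hγ : IsCoupling μ ν γ) (hγ' : IsCoupling ν ρ γ') {l : ℝ} (hl : 0 < l) :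
    ∃ γ'', IsCoupling μ ρ γ'' ∧ ∫ p, dist p.1 p.2 ^ 2 ∂γ'' ≤
      (1 + l) * ∫ p, dist p.1 p.2 ^ 2 ∂γ + (1 + 1 / l) * ∫ p, dist p.1 p.2 ^ 2 ∂γ' := by
  obtain ⟨hν, -⟩ := hγ'.isProbabilityMeasure
  have hs := hγ.swap
  set γs := γ.map Prod.swap with hγs
  have hps : IsProbabilityMeasure γs := hs.1
  have hp' : IsProbabilityMeasure γ' := hγ'.1
  set η : Measure (X × (X × X)) := ν ⊗ₘ (γs.condKernel ×ₖ γ'.condKernel) with hη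
  have e1 : η.map (fun p => (p.1, p.2.1)) = γs := by
    conv_rhs => rw [← γs.disintegrate γs.condKernel]
    rw [Measure.fst, hs.2.1, hη]
    ext s hs
    have hm : Measurable fun p : X × (X × X) => (p.1, p.2.1) := by fun_prop
    rw [Measure.map_apply hm hs, Measure.compProd_apply (hm hs), Measure.compProd_apply hs]
    refine lintegral_congr fun x => ?_
    have : Prod.mk x ⁻¹' ((fun p : X × (X × X) => (p.1, p.2.1)) ⁻¹' s) =
      (Prod.mk x ⁻¹' s) ×ˢ univ := by ext p; simp
    rw [this, Kernel.prod_apply, Measure.prod_prod, measure_univ, mul_one]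
  have e2 : η.map (fun p => (p.1, p.2.2)) = γ' := by
    conv_rhs => rw [← γ'.disintegrate γ'.condKernel]
    rw [Measure.fst, hγ'.2.1, hη]
    ext s hs
    have hm : Measurable fun p : X × (X × X) => (p.1, p.2.2) := by fun_prop
    rw [Measure.map_apply hm hs, Measure.compProd_apply (hm hs), Measure.compProd_apply hs]
    refine lintegral_congr fun x => ?_
    have : Prod.mk x ⁻¹' ((fun p : X × (X × X) => (p.1, p.2.2)) ⁻¹' s) =
      univ ×ˢ (Prod.mk x ⁻¹' s) := by ext p; simp
    rw [this, Kernel.prod_apply, Measure.prod_prod, measure_univ, one_mul]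
  have hintegral : ∀ f : X × (X × X) → ℝ, Continuous f → Integrable f η := fun f hf =>
    integrable_of_continuous_of_compactSpace η hf
  refine ⟨η.map Prod.snd, ⟨Measure.isProbabilityMeasure_map measurable_snd.aemeasurable,
    ?_, ?_⟩, ?_⟩
  · rw [← hs.2.2, ← e1, Measure.map_map measurable_fst measurable_snd,
      Measure.map_map measurable_snd (by fun_prop)]
    rfl
  · rw [← hγ'.2.2, ← e2, Measure.map_map measurable_snd measurable_snd,
      Measure.map_map measurable_snd (by fun_prop)]
    rfl
  · rw [← cost_swap γ, ← hγs, ← e1, ← e2, integral_map measurable_snd.aemeasurable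
        (Continuous.aestronglyMeasurable (by fun_prop)),
      integral_map (by fun_prop) (Continuous.aestronglyMeasurable (by fun_prop)),
      integral_map (by fun_prop) (Continuous.aestronglyMeasurable (by fun_prop)),
      ← integral_const_mul, ← integral_const_mul,
      ← integral_add (hintegral _ (by fun_prop)) (hintegral _ (by fun_prop))]
    refine integral_mono (hintegral _ (by fun_prop)) (hintegral _ (by fun_prop)) fun p => ?_
    simp only
    have ht : dist p.2.1 p.2.2 ≤ dist p.1 p.2.1 + dist p.1 p.2.2 := dist_triangle_left _ _ _
    set a := dist p.1 p.2.1
    set b := dist p.1 p.2.2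
    have h1 : dist p.2.1 p.2.2 ^ 2 ≤ (a + b) ^ 2 := by gcongr
    have h2 : (1 + l) * a ^ 2 + (1 + 1 / l) * b ^ 2 - (a + b) ^ 2 = (l * a - b) ^ 2 / l := by
      field_simp; ring
    have h3 : 0 ≤ (l * a - b) ^ 2 / l := by positivity
    linarith

lemma W2_triangle [Nonempty X] (μ ν ρ : Measure X) [IsProbabilityMeasure μ]
    [IsProbabilityMeasure ν] [IsProbabilityMeasure ρ] : W2 μ ρ ≤ W2 μ ν + W2 ν ρ := by
  refine le_of_forall_pos_le_add fun ε hε => ?_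
  have h1 := W2_nonneg μ ν
  have h2 := W2_nonneg ν ρ
  obtain ⟨γ, hγ, hlt⟩ := exists_isCoupling_lt (μ := μ) (ν := ν) (c := (W2 μ ν + ε / 2) ^ 2)
    (by nlinarith)
  obtain ⟨γ', hγ', hlt'⟩ := exists_isCoupling_lt (μ := ν) (ν := ρ) (c := (W2 ν ρ + ε / 2) ^ 2)
    (by nlinarith)
  have := le_add_of_forall_sq_le (x := W2 μ ρ) (a := W2 μ ν + ε / 2) (b := W2 ν ρ + ε / 2)
    (by linarith) (by linarith) fun l hl => ?_
  · linarith
  · obtain ⟨γ'', hγ'', hle⟩ := hγ.exists_glue hγ' hl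
    refine (W2_sq_le hγ'').trans (hle.trans ?_)
    gcongr

/-- Joint convexity of the squared Wasserstein distance. -/
lemma W2_sq_half_add_le (μ₀ μ₁ ν₀ ν₁ : Measure X) [IsProbabilityMeasure μ₀]
    [IsProbabilityMeasure μ₁] [IsProbabilityMeasure ν₀] [IsProbabilityMeasure ν₁] :
    W2 ((2 : ℝ≥0∞)⁻¹ • (μ₀ + μ₁)) ((2 : ℝ≥0∞)⁻¹ • (ν₀ + ν₁)) ^ 2 ≤
      (W2 μ₀ ν₀ ^ 2 + W2 μ₁ ν₁ ^ 2) / 2 := by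
  refine le_of_forall_pos_le_add fun ε hε => ?_
  obtain ⟨γ₀, hγ₀, hlt₀⟩ := exists_isCoupling_lt (μ := μ₀) (ν := ν₀) (c := W2 μ₀ ν₀ ^ 2 + ε)
    (by linarith)
  obtain ⟨γ₁, hγ₁, hlt₁⟩ := exists_isCoupling_lt (μ := μ₁) (ν := ν₁) (c := W2 μ₁ ν₁ ^ 2 + ε)
    (by linarith)
  have hp₀ := hγ₀.1
  have hp₁ := hγ₁.1
  have hc : IsCoupling ((2 : ℝ≥0∞)⁻¹ • (μ₀ + μ₁)) ((2 : ℝ≥0∞)⁻¹ • (ν₀ + ν₁))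
      ((2 : ℝ≥0∞)⁻¹ • (γ₀ + γ₁)) := by
    refine ⟨⟨?_⟩, ?_, ?_⟩
    · simp only [Measure.smul_apply, Measure.add_apply, measure_univ, smul_eq_mul]
      rw [one_add_one_eq_two, ENNReal.inv_mul_cancel (by simp) (by simp)]
    · rw [Measure.map_smul, Measure.map_add _ _ measurable_fst, hγ₀.2.1, hγ₁.2.1]
    · rw [Measure.map_smul, Measure.map_add _ _ measurable_snd, hγ₀.2.2, hγ₁.2.2]
  refine (W2_sq_le hc).trans ?_
  rw [integral_smul_measure, integral_add_measure (integrable_dist_sq γ₀) (integrable_dist_sq γ₁)]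
  simp only [ENNReal.toReal_inv, ENNReal.toReal_ofNat, smul_eq_mul]
  linarith

end Wasserstein

/-- A finite continuous partition of unity subordinate to small balls. -/
lemma exists_partition_of_unity_ball {X : Type*} [MetricSpace X] [CompactSpace X]
    {ε : ℝ} (hε : 0 < ε) :
    ∃ (t : Finset X) (φ : X → X → ℝ), (∀ i, Continuous (φ i)) ∧ (∀ i x, 0 ≤ φ i x) ∧
      (∀ x, ∑ i ∈ t, φ i x = 1) ∧ ∀ i x, φ i x ≠ 0 → dist x i ≤ ε := by
  obtain ⟨t, -, ht⟩ := isCompact_univ.elim_nhds_subcover (fun x : X => Metric.ball x ε)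
    fun x _ => Metric.ball_mem_nhds x hε
  have hpos : ∀ x, 0 < ∑ j ∈ t, max 0 (ε - dist x j) := by
    intro x
    obtain ⟨i, hi, hxi⟩ := mem_iUnion₂.1 (ht (mem_univ x))
    refine Finset.sum_pos' (fun j _ => le_max_left _ _) ⟨i, hi, ?_⟩
    exact lt_max_of_lt_right (sub_pos.2 hxi)
  refine ⟨t, fun i x => max 0 (ε - dist x i) / ∑ j ∈ t, max 0 (ε - dist x j), fun i => ?_,
    fun i x => div_nonneg (le_max_left _ _) (hpos x).le, fun x => ?_, fun i x h => ?_⟩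
  · exact Continuous.div (by fun_prop) (by fun_prop) fun x => (hpos x).ne'
  · rw [← Finset.sum_div, div_self (hpos x).ne']
  · by_contra hlt
    exact h (by simp only; rw [max_eq_left (by linarith), zero_div])

section Compactness

variable {X : Type*} [MetricSpace X] [MeasurableSpace X] [CompactSpace X] [BorelSpace X]

/-- Total variation bound for `W2`: only the masses that are not shared have to be moved. -/
lemma W2_sq_add_le {θ μ ν : Measure X} (hμ : IsProbabilityMeasure (θ + μ))
    (hν : IsProbabilityMeasure (θ + ν)) {D : ℝ} (hD : ∀ x y : X, dist x y ≤ D) :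
    W2 (θ + μ) (θ + ν) ^ 2 ≤ D ^ 2 * (μ univ).toReal := by
  have hθfin : θ univ ≠ ⊤ := fun h => by
    simpa [h] using (Measure.add_apply _ _ _).symm.trans hμ.measure_univ
  have hfin : μ univ ≠ ⊤ := fun h => by
    simpa [h] using (Measure.add_apply _ _ _).symm.trans hμ.measure_univ
  have hfin' : ν univ ≠ ⊤ := fun h => by
    simpa [h] using (Measure.add_apply _ _ _).symm.trans hν.measure_univ
  have hθi : IsFiniteMeasure θ := ⟨hθfin.lt_top⟩
  have hμi : IsFiniteMeasure μ := ⟨hfin.lt_top⟩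
  have hνi : IsFiniteMeasure ν := ⟨hfin'.lt_top⟩
  have heq : μ univ = ν univ := by
    have h : θ univ + μ univ = θ univ + ν univ := by
      rw [← Measure.add_apply, ← Measure.add_apply, hμ.measure_univ, hν.measure_univ]
    exact (ENNReal.add_right_inj hθfin).1 h
  rcases eq_or_ne (μ univ) 0 with h0 | h0
  · obtain rfl := Measure.measure_univ_eq_zero.1 h0
    obtain rfl := Measure.measure_univ_eq_zero.1 (heq ▸ h0)
    rw [W2_self]
    simp
  have hm : Measurable fun x : X => (x, x) := by fun_prop
  have hc : IsCoupling (θ + μ) (θ + ν)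
      (θ.map (fun x => (x, x)) + (μ univ)⁻¹ • μ.prod ν) := by
    have h1 : (θ.map (fun x => (x, x)) + (μ univ)⁻¹ • μ.prod ν).map Prod.fst = θ + μ := by
      rw [Measure.map_add _ _ measurable_fst, Measure.map_map measurable_fst hm,
        Measure.map_smul, Measure.map_fst_prod, smul_smul, ← heq,
        ENNReal.inv_mul_cancel h0 hfin, one_smul]
      congr 1
      exact Measure.map_id
    have h2 : (θ.map (fun x => (x, x)) + (μ univ)⁻¹ • μ.prod ν).map Prod.snd = θ + ν := by
      rw [Measure.map_add _ _ measurable_snd, Measure.map_map measurable_snd hm,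
        Measure.map_smul, Measure.map_snd_prod, smul_smul,
        ENNReal.inv_mul_cancel h0 hfin, one_smul]
      congr 1
      exact Measure.map_id
    refine ⟨⟨?_⟩, h1, h2⟩
    rw [← hμ.measure_univ, ← h1, Measure.map_apply measurable_fst MeasurableSet.univ, preimage_univ]
  refine W2_sq_le_of_lintegral_le hc (by positivity) ?_
  rw [lintegral_add_measure, lintegral_map (by fun_prop) hm, lintegral_smul_measure]
  simp only [dist_self, ne_eq, OfNat.ofNat_ne_zero, not_false_eq_true, zero_pow,
    ENNReal.ofReal_zero, lintegral_zero, zero_add, smul_eq_mul]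
  calc (μ univ)⁻¹ * ∫⁻ p, ENNReal.ofReal (dist p.1 p.2 ^ 2) ∂(μ.prod ν)
      ≤ (μ univ)⁻¹ * ∫⁻ _, ENNReal.ofReal (D ^ 2) ∂(μ.prod ν) := by
        gcongr with p
        exact hD _ _
    _ = (μ univ)⁻¹ * (ENNReal.ofReal (D ^ 2) * (μ univ * μ univ)) := by
        rw [lintegral_const, ← univ_prod_univ, Measure.prod_prod, heq]
    _ = ENNReal.ofReal (D ^ 2) * ((μ univ)⁻¹ * μ univ * μ univ) := by ring
    _ = ENNReal.ofReal (D ^ 2 * (μ univ).toReal) := by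
        rw [ENNReal.inv_mul_cancel h0 hfin, one_mul, ENNReal.ofReal_mul (by positivity),
          ENNReal.ofReal_toReal hfin]

/-- Transporting the mass of each function of a partition of unity to the centre of its support. -/
lemma W2_discretization_le {ε : ℝ} (hε : 0 < ε) {t : Finset X} {φ : X → X → ℝ}
    (hφ : ∀ i, Continuous (φ i)) (hφ0 : ∀ i x, 0 ≤ φ i x) (hφ1 : ∀ x, ∑ i ∈ t, φ i x = 1)
    (hφε : ∀ i x, φ i x ≠ 0 → dist x i ≤ ε) (μ : Measure X) [IsProbabilityMeasure μ] :
    W2 μ (∑ i ∈ t, ENNReal.ofReal (∫ x, φ i x ∂μ) • Measure.dirac i) ≤ ε := by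
  have hm : ∀ i, Measurable fun x : X => ENNReal.ofReal (φ i x) := fun i =>
    (hφ i).measurable.ennreal_ofReal
  have hp : ∀ i : X, Measurable fun x : X => (x, i) := fun i => by fun_prop
  have hone : ∀ x, ∑ i ∈ t, ENNReal.ofReal (φ i x) = 1 := fun x => by
    rw [← ENNReal.ofReal_sum_of_nonneg fun i _ => hφ0 i x, hφ1, ENNReal.ofReal_one]
  have hintegral : ∀ i, ENNReal.ofReal (∫ x, φ i x ∂μ) = ∫⁻ x, ENNReal.ofReal (φ i x) ∂μ := fun i =>
    ofReal_integral_eq_lintegral_ofReal (integrable_of_continuous_of_compactSpace μ (hφ i))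
      (Eventually.of_forall (hφ0 i))
  have hc : IsCoupling μ (∑ i ∈ t, ENNReal.ofReal (∫ x, φ i x ∂μ) • Measure.dirac i)
      (∑ i ∈ t, (μ.withDensity fun x => ENNReal.ofReal (φ i x)).map fun x => (x, i)) := by
    have h1 : (∑ i ∈ t, (μ.withDensity fun x => ENNReal.ofReal (φ i x)).map
        fun x => (x, i)).map Prod.fst = μ := by
      ext s hs
      rw [Measure.map_apply measurable_fst hs, Measure.finsetSum_apply]
      calc ∑ i ∈ t, ((μ.withDensity fun x => ENNReal.ofReal (φ i x)).map fun x => (x, i))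
            (Prod.fst ⁻¹' s) = ∑ i ∈ t, ∫⁻ x in s, ENNReal.ofReal (φ i x) ∂μ := by
            refine Finset.sum_congr rfl fun i _ => ?_
            rw [Measure.map_apply (hp i) (measurable_fst hs)]
            exact withDensity_apply _ hs
        _ = μ s := by
            rw [← lintegral_finsetSum _ fun i _ => hm i]
            simp [hone]
    refine ⟨⟨?_⟩, h1, ?_⟩
    · rw [← measure_univ (μ := μ), ← congrArg (fun ν : Measure X => ν univ) h1]
      rw [Measure.map_apply measurable_fst MeasurableSet.univ, preimage_univ]
    · ext s hs
      rw [Measure.map_apply measurable_snd hs, Measure.finsetSum_apply, Measure.finsetSum_apply]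
      refine Finset.sum_congr rfl fun i _ => ?_
      rw [Measure.map_apply (hp i) (measurable_snd hs), Measure.smul_apply,
        Measure.dirac_apply' _ hs, hintegral]
      by_cases his : i ∈ s
      · have : (fun x : X => (x, i)) ⁻¹' (Prod.snd ⁻¹' s) = univ := by ext x; simpa using his
        rw [this, withDensity_apply _ MeasurableSet.univ]
        simp [his]
      · have : (fun x : X => (x, i)) ⁻¹' (Prod.snd ⁻¹' s) = ∅ := by ext x; simpa using his
        simp [this, his]
  refine abs_le_of_sq_le_sq' (W2_sq_le_of_lintegral_le hc (by positivity) ?_) hε.le |>.2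
  rw [lintegral_finsetSum_measure]
  calc ∑ i ∈ t, ∫⁻ p, ENNReal.ofReal (dist p.1 p.2 ^ 2)
        ∂((μ.withDensity fun x => ENNReal.ofReal (φ i x)).map fun x => (x, i))
      ≤ ∑ i ∈ t, ∫⁻ x, ENNReal.ofReal (φ i x) * ENNReal.ofReal (ε ^ 2) ∂μ := by
        refine Finset.sum_le_sum fun i _ => ?_
        rw [lintegral_map (by fun_prop) (hp i), lintegral_withDensity_eq_lintegral_mul _ (hm i)
          (by fun_prop)]
        refine lintegral_mono fun x => ?_
        simp only [Pi.mul_apply]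
        rcases eq_or_ne (φ i x) 0 with h | h
        · simp [h]
        · gcongr
          exact hφε i x h
    _ = ENNReal.ofReal (ε ^ 2) := by
        rw [← lintegral_finsetSum _ fun i _ => (hm i).mul_const _]
        simp_rw [← Finset.sum_mul, hone]
        simp

/-- Atomic measures depend continuously on their weights. -/
lemma W2_sq_sum_dirac_le {t : Finset X} {a b : X → ℝ} (ha : ∀ i, 0 ≤ a i) (hb : ∀ i, 0 ≤ b i)
    (ha1 : ∑ i ∈ t, a i = 1) (hb1 : ∑ i ∈ t, b i = 1) {D : ℝ} (hD : ∀ x y : X, dist x y ≤ D) :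
    W2 (∑ i ∈ t, ENNReal.ofReal (a i) • Measure.dirac i)
      (∑ i ∈ t, ENNReal.ofReal (b i) • Measure.dirac i) ^ 2 ≤ D ^ 2 * ∑ i ∈ t, |a i - b i| := by
  have hprob : ∀ a : X → ℝ, (∀ i, 0 ≤ a i) → ∑ i ∈ t, a i = 1 →
      IsProbabilityMeasure (∑ i ∈ t, ENNReal.ofReal (a i) • Measure.dirac i) := by
    intro a ha ha1
    refine ⟨?_⟩
    rw [Measure.finsetSum_apply]
    simp only [Measure.smul_apply, measure_univ, smul_eq_mul, mul_one]
    rw [← ENNReal.ofReal_sum_of_nonneg fun i _ => ha i, ha1, ENNReal.ofReal_one]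
  have hsplit : ∀ a b : X → ℝ, (∀ i, 0 ≤ a i) → (∀ i, 0 ≤ b i) →
      ∑ i ∈ t, ENNReal.ofReal (a i) • Measure.dirac i =
        ∑ i ∈ t, ENNReal.ofReal (min (a i) (b i)) • Measure.dirac i +
        ∑ i ∈ t, ENNReal.ofReal (a i - min (a i) (b i)) • Measure.dirac i := by
    intro a b ha hb
    rw [← Finset.sum_add_distrib]
    refine Finset.sum_congr rfl fun i _ => ?_
    rw [← add_smul, ← ENNReal.ofReal_add (le_min (ha i) (hb i)) (by simp)]
    congr 2
    ring
  have hpa := hprob a ha ha1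
  have hpb := hprob b hb hb1
  have hsa := hsplit a b ha hb
  have hsb := hsplit b a hb ha
  simp_rw [min_comm (b _) (a _)] at hsb
  rw [hsa] at hpa ⊢
  rw [hsb] at hpb ⊢
  refine (W2_sq_add_le hpa hpb hD).trans ?_
  gcongr
  rw [Measure.finsetSum_apply]
  simp only [Measure.smul_apply, measure_univ, smul_eq_mul, mul_one]
  rw [← ENNReal.ofReal_sum_of_nonneg fun i _ => sub_nonneg.2 (min_le_left _ _),
    ENNReal.toReal_ofReal (Finset.sum_nonneg fun i _ => sub_nonneg.2 (min_le_left _ _))]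
  refine Finset.sum_le_sum fun i _ => ?_
  rcases le_total (a i) (b i) with h | h
  · rw [min_eq_left h, sub_self]; positivity
  · rw [min_eq_right h]; exact le_abs_self _

/-- The space of Borel probability measures, to be endowed with the distance `W2`. -/
@[ext]
structure WassersteinSpace (X : Type*) [MeasurableSpace X] where
  /-- The underlying measure. -/
  toMeasure : Measure X
  isProbabilityMeasure : IsProbabilityMeasure toMeasure

instance (μ : WassersteinSpace X) : IsProbabilityMeasure μ.1 := μ.2

noncomputable instance : MetricSpace (WassersteinSpace X) where
  dist μ ν := W2 μ.1 ν.1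
  dist_self μ := W2_self μ.1
  dist_comm μ ν := W2_comm μ.1 ν.1
  dist_triangle μ ν ρ := by
    have : Nonempty X := nonempty_of_isProbabilityMeasure μ.1
    exact W2_triangle μ.1 ν.1 ρ.1
  eq_of_dist_eq_zero h := WassersteinSpace.ext (eq_of_W2_eq_zero h)

lemma WassersteinSpace.dist_eq (μ ν : WassersteinSpace X) : dist μ ν = W2 μ.1 ν.1 := rfl

/-- Weak convergence implies convergence in `W2`. -/
lemma continuous_toWassersteinSpace :
    Continuous fun μ : ProbabilityMeasure X => (⟨μ.1, μ.2⟩ : WassersteinSpace X) := by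
  refine continuous_iff_continuousAt.2 fun μ => ?_
  rw [ContinuousAt, Metric.tendsto_nhds]
  intro ε hε
  have : Nonempty X := nonempty_of_isProbabilityMeasure (μ : Measure X)
  obtain ⟨t, φ, hφ, hφ0, hφ1, hφε⟩ := exists_partition_of_unity_ball (X := X)
    (show 0 < ε / 4 by positivity)
  have hD : ∀ x y : X, dist x y ≤ Metric.diam (univ : Set X) := fun x y =>
    Metric.dist_le_diam_of_mem isCompact_univ.isBounded (mem_univ x) (mem_univ y)
  set D := Metric.diam (univ : Set X)
  have hlim : Tendsto (fun ν : ProbabilityMeasure X =>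
      D ^ 2 * ∑ i ∈ t, |∫ x, φ i x ∂(ν : Measure X) - ∫ x, φ i x ∂(μ : Measure X)|)
      (𝓝 μ) (𝓝 0) := by
    have h1 : Tendsto (fun ν : ProbabilityMeasure X =>
        ∑ i ∈ t, |∫ x, φ i x ∂(ν : Measure X) - ∫ x, φ i x ∂(μ : Measure X)|)
        (𝓝 μ) (𝓝 (∑ i ∈ t, 0)) := by
      refine tendsto_finsetSum _ fun i _ => ?_
      have h2 := ProbabilityMeasure.tendsto_iff_forall_integral_tendsto.1
        (tendsto_id (x := 𝓝 μ)) (BoundedContinuousFunction.mkOfCompact ⟨φ i, hφ i⟩)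
      have h3 := (h2.sub_const (∫ x, φ i x ∂(μ : Measure X))).abs
      simpa using h3
    simpa using h1.const_mul (D ^ 2)
  filter_upwards [hlim.eventually_lt_const (show 0 < (ε / 4) ^ 2 by positivity)] with ν hν
  have hsum : ∀ ν : ProbabilityMeasure X, ∑ i ∈ t, ∫ x, φ i x ∂(ν : Measure X) = 1 := by
    intro ν
    rw [← integral_finsetSum _ fun i _ => integrable_of_continuous_of_compactSpace _ (hφ i)]
    simp [hφ1]
  have hnn : ∀ (ν : ProbabilityMeasure X) i, 0 ≤ ∫ x, φ i x ∂(ν : Measure X) := fun ν i =>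
    integral_nonneg (hφ0 i)
  have hdisc : ∀ ν : ProbabilityMeasure X, IsProbabilityMeasure
      (∑ i ∈ t, ENNReal.ofReal (∫ x, φ i x ∂(ν : Measure X)) • Measure.dirac i) := by
    intro ν
    refine ⟨?_⟩
    rw [Measure.finsetSum_apply]
    simp only [Measure.smul_apply, measure_univ, smul_eq_mul, mul_one]
    rw [← ENNReal.ofReal_sum_of_nonneg fun i _ => hnn ν i, hsum, ENNReal.ofReal_one]
  have hdν := hdisc ν
  have hdμ := hdisc μ
  have e1 := W2_discretization_le (by positivity) hφ hφ0 hφ1 hφε (ν : Measure X)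
  have e2 := W2_discretization_le (by positivity) hφ hφ0 hφ1 hφε (μ : Measure X)
  have e3 := abs_le_of_sq_le_sq'
    ((W2_sq_sum_dirac_le (hnn ν) (hnn μ) (hsum ν) (hsum μ) hD).trans hν.le) (by positivity) |>.2
  rw [W2_comm] at e2
  have t1 := W2_triangle (ν : Measure X)
    (∑ i ∈ t, ENNReal.ofReal (∫ x, φ i x ∂(ν : Measure X)) • Measure.dirac i) (μ : Measure X)
  have t2 := W2_triangle
    (∑ i ∈ t, ENNReal.ofReal (∫ x, φ i x ∂(ν : Measure X)) • Measure.dirac i)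
    (∑ i ∈ t, ENNReal.ofReal (∫ x, φ i x ∂(μ : Measure X)) • Measure.dirac i) (μ : Measure X)
  rw [WassersteinSpace.dist_eq]
  change W2 (ν : Measure X) (μ : Measure X) < ε
  linarith

instance : CompactSpace (WassersteinSpace X) := by
  have hs : Function.Surjective
      fun μ : ProbabilityMeasure X => (⟨μ.1, μ.2⟩ : WassersteinSpace X) :=
    fun μ => ⟨⟨μ.1, μ.2⟩, rfl⟩
  exact hs.compactSpace continuous_toWassersteinSpace

end Compactness

section Entropy

open InformationTheory

variable {X : Type*} [MeasurableSpace X]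

lemma Ent_eq_klDiv (m ρ : Measure X) [IsFiniteMeasure m] [IsFiniteMeasure ρ] :
    Ent m ρ = klDiv ρ m := by
  have h : entFun = klFun := by ext z; rw [entFun, klFun_apply]; ring
  rw [klDiv_eq_lintegral_klFun, Ent, h]

lemma isProbabilityMeasure_half_add (μ ν : Measure X) [IsProbabilityMeasure μ]
    [IsProbabilityMeasure ν] : IsProbabilityMeasure ((2 : ℝ≥0∞)⁻¹ • (μ + ν)) := by
  refine ⟨?_⟩
  simp only [Measure.smul_apply, Measure.add_apply, measure_univ, smul_eq_mul]
  rw [one_add_one_eq_two, ENNReal.inv_mul_cancel (by simp) (by simp)]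

lemma absolutelyContinuous_half_add_left (μ ν : Measure X) :
    μ ≪ (2 : ℝ≥0∞)⁻¹ • (μ + ν) := by
  refine Measure.AbsolutelyContinuous.mk fun s _ h => ?_
  simp only [Measure.smul_apply, Measure.add_apply, smul_eq_mul, mul_eq_zero, ENNReal.inv_eq_zero,
    ENNReal.ofNat_ne_top, false_or, add_eq_zero] at h
  exact h.1

lemma absolutelyContinuous_half_add_right (μ ν : Measure X) :
    ν ≪ (2 : ℝ≥0∞)⁻¹ • (μ + ν) := by
  rw [add_comm]
  exact absolutelyContinuous_half_add_left ν μ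

lemma klFun_add_klFun {f₀ f₁ g₀ g₁ s : ℝ} (h₀ : g₀ * s = f₀) (h₁ : g₁ * s = f₁)
    (hs : f₀ + f₁ = 2 * s) :
    klFun f₀ + klFun f₁ = 2 * klFun s + (s * klFun g₀ + s * klFun g₁) := by
  have key : ∀ g : ℝ, klFun (g * s) = g * s * Real.log s + s * klFun g + 1 - s := by
    intro g
    rcases eq_or_ne g 0 with rfl | hg
    · simp [klFun_apply]
    rcases eq_or_ne s 0 with rfl | hs
    · simp [klFun_apply]
    rw [klFun_apply, klFun_apply, Real.log_mul hg hs]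
    ring
  rw [← h₀, ← h₁, key, key, klFun_apply s]
  rw [← h₀, ← h₁] at hs
  linear_combination Real.log s * hs

/-- The parallelogram-type identity for the relative entropy. -/
lemma klDiv_add_klDiv (m μ ν : Measure X) [IsProbabilityMeasure m] [IsProbabilityMeasure μ]
    [IsProbabilityMeasure ν] (hμ : μ ≪ m) (hν : ν ≪ m) :
    klDiv μ m + klDiv ν m = 2 * klDiv ((2 : ℝ≥0∞)⁻¹ • (μ + ν)) m +
      (klDiv μ ((2 : ℝ≥0∞)⁻¹ • (μ + ν)) + klDiv ν ((2 : ℝ≥0∞)⁻¹ • (μ + ν))) := by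
  have hp := isProbabilityMeasure_half_add μ ν
  have hμσ := absolutelyContinuous_half_add_left μ ν
  have hνσ := absolutelyContinuous_half_add_right μ ν
  have hd : ((2 : ℝ≥0∞)⁻¹ • (μ + ν)).rnDeriv m =ᵐ[m]
      (2 : ℝ≥0∞)⁻¹ • (μ.rnDeriv m + ν.rnDeriv m) := by
    filter_upwards [Measure.rnDeriv_smul_left_of_ne_top (μ + ν) m
      (r := (2 : ℝ≥0∞)⁻¹) (by simp), Measure.rnDeriv_add μ ν m] with x h1 h2
    rw [h1, Pi.smul_apply, h2, Pi.smul_apply]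
  have hσ : (2 : ℝ≥0∞)⁻¹ • (μ + ν) ≪ m := (hμ.add_left hν).smul_left _
  set σ := (2 : ℝ≥0∞)⁻¹ • (μ + ν)
  have hkl : ∀ α β : Measure X, Measurable fun x =>
      ENNReal.ofReal (klFun (α.rnDeriv β x).toReal) := fun α β =>
    (measurable_klFun.comp (Measure.measurable_rnDeriv α β).ennreal_toReal).ennreal_ofReal
  have hmul : Measurable fun x =>
      σ.rnDeriv m x * ENNReal.ofReal (klFun (μ.rnDeriv σ x).toReal) :=
    (Measure.measurable_rnDeriv σ m).mul (hkl μ σ)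
  rw [klDiv_eq_lintegral_klFun_of_ac hμ, klDiv_eq_lintegral_klFun_of_ac hν,
    klDiv_eq_lintegral_klFun_of_ac hσ, klDiv_eq_lintegral_klFun_of_ac hμσ,
    klDiv_eq_lintegral_klFun_of_ac hνσ,
    ← lintegral_rnDeriv_mul hσ (hkl μ σ).aemeasurable,
    ← lintegral_rnDeriv_mul hσ (hkl ν σ).aemeasurable,
    ← lintegral_add_left (hkl μ m), ← lintegral_const_mul _ (hkl σ m),
    ← lintegral_add_left hmul,
    ← lintegral_add_left ((hkl σ m).const_mul 2)]
  refine lintegral_congr_ae ?_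
  filter_upwards [hd, Measure.rnDeriv_mul_rnDeriv (κ := m) hμσ,
    Measure.rnDeriv_mul_rnDeriv (κ := m) hνσ, σ.rnDeriv_ne_top m, μ.rnDeriv_ne_top m,
    ν.rnDeriv_ne_top m] with x h1 h2 h3 h4 h5 h6
  have nn : ∀ z : ℝ≥0∞, 0 ≤ klFun z.toReal := fun z => klFun_nonneg ENNReal.toReal_nonneg
  have e := klFun_add_klFun (f₀ := (μ.rnDeriv m x).toReal) (f₁ := (ν.rnDeriv m x).toReal)
    (g₀ := (μ.rnDeriv σ x).toReal) (g₁ := (ν.rnDeriv σ x).toReal)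
    (s := (σ.rnDeriv m x).toReal) (by rw [← h2, Pi.mul_apply, ENNReal.toReal_mul])
    (by rw [← h3, Pi.mul_apply, ENNReal.toReal_mul])
    (by
      rw [h1, Pi.smul_apply, smul_eq_mul, ENNReal.toReal_mul, Pi.add_apply,
        ENNReal.toReal_add h5 h6]
      simp)
  rw [← ENNReal.ofReal_add (nn _) (nn _), e, ENNReal.ofReal_add (by linarith [nn (σ.rnDeriv m x)])
    (add_nonneg (mul_nonneg ENNReal.toReal_nonneg (nn _))
      (mul_nonneg ENNReal.toReal_nonneg (nn _))),
    ENNReal.ofReal_add (mul_nonneg ENNReal.toReal_nonneg (nn _))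
      (mul_nonneg ENNReal.toReal_nonneg (nn _)),
    ENNReal.ofReal_mul (by norm_num), ENNReal.ofReal_mul ENNReal.toReal_nonneg,
    ENNReal.ofReal_mul ENNReal.toReal_nonneg, ENNReal.ofReal_toReal h4]
  simp

lemma mul_le_klFun_add_exp {f : ℝ} (hf : 0 ≤ f) (φ : ℝ) :
    f * φ - (Real.exp φ - 1) ≤ klFun f := by
  rw [klFun_apply]
  rcases hf.eq_or_lt with rfl | hf
  · simpa using (Real.exp_pos φ).le
  have h1 := Real.add_one_le_exp (φ - Real.log f)
  rw [Real.exp_sub, Real.exp_log hf, le_div_iff₀ hf] at h1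
  linarith

/-- The easy half of the Donsker–Varadhan duality formula. -/
lemma ofReal_integral_sub_le_klDiv (m ρ : Measure X) [IsProbabilityMeasure m]
    [IsProbabilityMeasure ρ] {φ : X → ℝ} (hφ : Integrable φ ρ)
    (he : Integrable (fun x => Real.exp (φ x)) m) :
    ENNReal.ofReal (∫ x, φ x ∂ρ - ∫ x, (Real.exp (φ x) - 1) ∂m) ≤ klDiv ρ m := by
  rcases eq_or_ne (klDiv ρ m) ⊤ with h | h
  · simp [h]
  obtain ⟨hac, hintegral⟩ := klDiv_ne_top_iff.1 h
  refine ENNReal.ofReal_le_of_le_toReal ?_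
  have he' : Integrable (fun x => Real.exp (φ x) - 1) m := he.sub (integrable_const 1)
  rw [toReal_klDiv_eq_integral_klFun hac, ← integral_rnDeriv_smul hac,
    ← integral_sub ((integrable_rnDeriv_smul_iff hac).2 hφ) he']
  refine integral_mono (((integrable_rnDeriv_smul_iff hac).2 hφ).sub he')
    ((integrable_klFun_rnDeriv_iff hac).2 hintegral) fun x => ?_
  exact mul_le_klFun_add_exp ENNReal.toReal_nonneg _

/-- The clipping of `z` to the interval `[exp (-k), exp k]`. -/
noncomputable def expClip (k : ℕ) (z : ℝ) : ℝ := max (Real.exp (-k)) (min (Real.exp k) z)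

lemma expClip_pos (k : ℕ) (z : ℝ) : 0 < expClip k z := lt_max_of_lt_left (Real.exp_pos _)

lemma measurable_expClip (k : ℕ) : Measurable (expClip k) := by
  unfold expClip; fun_prop

lemma abs_log_expClip_le (k : ℕ) (z : ℝ) : |Real.log (expClip k z)| ≤ k := by
  have h1 : Real.exp (-k) ≤ expClip k z := le_max_left _ _
  have h2 : expClip k z ≤ Real.exp k :=
    max_le (Real.exp_le_exp.2 (by linarith [k.cast_nonneg (α := ℝ)])) (min_le_left _ _)
  rw [abs_le, Real.le_log_iff_exp_le (expClip_pos k z), Real.log_le_iff_le_exp (expClip_pos k z)]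
  exact ⟨h1, h2⟩

lemma mul_log_expClip_nonneg (k : ℕ) {z : ℝ} :
    0 ≤ z * Real.log (expClip k z) - (expClip k z - 1) := by
  have hk := klFun_nonneg (expClip_pos k z).le
  rw [klFun_apply] at hk
  suffices h : 0 ≤ (z - expClip k z) * Real.log (expClip k z) by linarith
  have hle : Real.exp (-k) ≤ Real.exp k :=
    Real.exp_le_exp.2 (by linarith [k.cast_nonneg (α := ℝ)])
  rcases le_total z (Real.exp k) with h1 | h1
  · rcases le_total z (Real.exp (-k)) with h2 | h2
    · have : expClip k z = Real.exp (-k) := by rw [expClip, min_eq_right h1, max_eq_left h2]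
      rw [this, Real.log_exp]
      exact mul_nonneg_of_nonpos_of_nonpos (by linarith) (by simp)
    · have : expClip k z = z := by rw [expClip, min_eq_right h1, max_eq_right h2]
      simp [this]
  · have : expClip k z = Real.exp k := by rw [expClip, min_eq_left h1, max_eq_right hle]
    rw [this, Real.log_exp]
    exact mul_nonneg (by linarith) (by simp)

lemma tendsto_mul_log_expClip {z : ℝ} (hz : 0 ≤ z) :
    Tendsto (fun k : ℕ => z * Real.log (expClip k z) - (expClip k z - 1)) atTop
      (𝓝 (klFun z)) := by
  have h0 : Tendsto (fun k : ℕ => Real.exp (-(k : ℝ))) atTop (𝓝 0) :=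
    Real.tendsto_exp_neg_atTop_nhds_zero.comp tendsto_natCast_atTop_atTop
  have h1 : Tendsto (fun k : ℕ => Real.exp (k : ℝ)) atTop atTop :=
    Real.tendsto_exp_atTop.comp tendsto_natCast_atTop_atTop
  rcases hz.eq_or_lt with rfl | hz
  · have : (fun k : ℕ => (0 : ℝ) * Real.log (expClip k 0) - (expClip k 0 - 1)) =
        fun k : ℕ => 1 - Real.exp (-(k : ℝ)) := by
      ext k
      rw [expClip, min_eq_right (Real.exp_pos _).le, max_eq_left (Real.exp_pos _).le]
      ring
    rw [this, klFun_zero]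
    simpa using h0.const_sub 1
  · refine tendsto_const_nhds.congr' ?_
    filter_upwards [h0.eventually_lt_const hz, h1.eventually_ge_atTop z] with k hk1 hk2
    rw [expClip, min_eq_right hk2, max_eq_right hk1.le, klFun_apply]
    ring

/-- The nontrivial half of the Donsker–Varadhan duality formula, with bounded test functions. -/
lemma exists_lt_integral_sub (m ρ : Measure X) [IsProbabilityMeasure m] [IsProbabilityMeasure ρ]
    {c : ℝ} (hc : ENNReal.ofReal c < klDiv ρ m) :
    ∃ (φ : X → ℝ) (B : ℝ), Measurable φ ∧ (∀ x, |φ x| ≤ B) ∧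
      c < ∫ x, φ x ∂ρ - ∫ x, (Real.exp (φ x) - 1) ∂m := by
  by_cases hac : ρ ≪ m
  · rw [klDiv_eq_lintegral_klFun_of_ac hac] at hc
    set f : X → ℝ := fun x => (ρ.rnDeriv m x).toReal with hf
    have hfm : Measurable f := (Measure.measurable_rnDeriv ρ m).ennreal_toReal
    have hgm : ∀ k, Measurable fun x => expClip k (f x) := fun k =>
      (measurable_expClip k).comp hfm
    have hφm : ∀ k, Measurable fun x => Real.log (expClip k (f x)) := fun k =>
      Real.measurable_log.comp (hgm k)
    have hh : ∀ k, Measurable fun x =>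
        ENNReal.ofReal (f x * Real.log (expClip k (f x)) - (expClip k (f x) - 1)) := fun k =>
      ((hfm.mul (hφm k)).sub ((hgm k).sub_const 1)).ennreal_ofReal
    have hlim : ∀ x, liminf (fun k : ℕ => ENNReal.ofReal
        (f x * Real.log (expClip k (f x)) - (expClip k (f x) - 1))) atTop =
        ENNReal.ofReal (klFun (f x)) := fun x =>
      (ENNReal.tendsto_ofReal (tendsto_mul_log_expClip ENNReal.toReal_nonneg)).liminf_eq
    have hfatou := lintegral_liminf_le (μ := m) (u := atTop) hh
    simp_rw [hlim] at hfatou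
    obtain ⟨k, hk⟩ := (eventually_lt_of_lt_liminf (hc.trans_le hfatou)).exists
    have i1 : Integrable (fun x => Real.log (expClip k (f x))) ρ :=
      Integrable.of_bound (hφm k).aestronglyMeasurable k
        (Eventually.of_forall fun x => abs_log_expClip_le k (f x))
    have i2 : Integrable (fun x => f x * Real.log (expClip k (f x))) m :=
      (integrable_rnDeriv_smul_iff hac).2 i1
    have i3 : Integrable (fun x => expClip k (f x) - 1) m := by
      refine (Integrable.of_bound (hgm k).aestronglyMeasurable (Real.exp k)
        (Eventually.of_forall fun x => ?_)).sub (integrable_const 1)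
      rw [Real.norm_of_nonneg (expClip_pos k _).le,
        ← Real.log_le_iff_le_exp (expClip_pos k _)]
      exact (abs_le.1 (abs_log_expClip_le k (f x))).2
    have i4 : Integrable (fun x =>
        f x * Real.log (expClip k (f x)) - (expClip k (f x) - 1)) m := i2.sub i3
    refine ⟨fun x => Real.log (expClip k (f x)), k, hφm k, fun x => abs_log_expClip_le k _, ?_⟩
    rw [← ofReal_integral_eq_lintegral_ofReal i4
      (Eventually.of_forall fun x => mul_log_expClip_nonneg k), integral_sub i2 i3,
      ENNReal.ofReal_lt_ofReal_iff'] at hk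
    simp_rw [Real.exp_log (expClip_pos k _)]
    rw [← integral_rnDeriv_smul hac]
    exact hk.1
  · obtain ⟨s, hs, hms, hρs⟩ : ∃ s, MeasurableSet s ∧ m s = 0 ∧ ρ s ≠ 0 := by
      by_contra! h
      exact hac (Measure.AbsolutelyContinuous.mk h)
    have hpos : 0 < ρ.real s := ENNReal.toReal_pos hρs (measure_ne_top _ _)
    refine ⟨s.indicator fun _ => (|c| + 1) / ρ.real s, (|c| + 1) / ρ.real s,
      measurable_const.indicator hs, fun x => ?_, ?_⟩
    · by_cases hx : x ∈ s
      · rw [indicator_of_mem hx, abs_of_nonneg (by positivity)]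
      · rw [indicator_of_notMem hx, abs_zero]; positivity
    · have h0 : ∫ x, (Real.exp (s.indicator (fun _ => (|c| + 1) / ρ.real s) x) - 1) ∂m = 0 := by
        refine integral_eq_zero_of_ae ?_
        filter_upwards [measure_eq_zero_iff_ae_notMem.1 hms] with x hx
        simp [hx]
      rw [h0, integral_indicator_const _ hs, smul_eq_mul, mul_div_cancel₀ _ hpos.ne']
      linarith [le_abs_self c]

end Entropy

section LowerSemicontinuity

open InformationTheory

variable {X : Type*} [MetricSpace X] [MeasurableSpace X] [CompactSpace X] [BorelSpace X]

lemma abs_exp_sub_exp_le {a b B : ℝ} (ha : a ≤ B) (hb : b ≤ B) :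
    |Real.exp a - Real.exp b| ≤ Real.exp B * |a - b| := by
  have key : ∀ a b : ℝ, a ≤ B → b ≤ a → Real.exp a - Real.exp b ≤ Real.exp B * (a - b) := by
    intro a b ha hba
    have h1 := Real.add_one_le_exp (b - a)
    rw [Real.exp_sub, le_div_iff₀ (Real.exp_pos a)] at h1
    have h2 := mul_le_mul_of_nonneg_right (Real.exp_le_exp.2 ha) (sub_nonneg.2 hba)
    linarith
  rcases le_total b a with h | h
  · rw [abs_of_nonneg (sub_nonneg.2 (Real.exp_le_exp.2 h)), abs_of_nonneg (sub_nonneg.2 h)]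
    exact key a b ha h
  · rw [abs_sub_comm, abs_sub_comm a, abs_of_nonneg (sub_nonneg.2 (Real.exp_le_exp.2 h)),
      abs_of_nonneg (sub_nonneg.2 h)]
    exact key b a hb h

lemma abs_clip_sub_le {B a b : ℝ} (ha : |a| ≤ B) :
    |a - max (-B) (min B b)| ≤ |a - b| := by
  obtain ⟨h1, h2⟩ := abs_le.1 ha
  rcases le_total b B with h | h
  · rw [min_eq_right h]
    rcases le_total (-B) b with h' | h'
    · rw [max_eq_right h']
    · rw [max_eq_left h', abs_of_nonneg (by linarith), abs_of_nonneg (by linarith)]; linarith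
  · rw [min_eq_left h, max_eq_right (by linarith), abs_of_nonpos (by linarith),
      abs_of_nonpos (by linarith)]
    linarith

/-- The Donsker–Varadhan duality formula with continuous test functions. -/
lemma exists_continuous_lt_integral_sub (m ρ : Measure X) [IsProbabilityMeasure m]
    [IsProbabilityMeasure ρ] {c : ℝ} (hc : ENNReal.ofReal c < klDiv ρ m) :
    ∃ φ : X → ℝ, Continuous φ ∧ c < ∫ x, φ x ∂ρ - ∫ x, (Real.exp (φ x) - 1) ∂m := by
  obtain ⟨φ, B, hφ, hB, hlt⟩ := exists_lt_integral_sub m ρ hc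
  set J := ∫ x, φ x ∂ρ - ∫ x, (Real.exp (φ x) - 1) ∂m with hJ
  have hi : ∀ (α : Measure X) [IsFiniteMeasure α], Integrable φ α := fun α _ =>
    Integrable.of_bound hφ.aestronglyMeasurable B (Eventually.of_forall hB)
  have hie : Integrable (fun x => Real.exp (φ x)) m := by
    refine Integrable.of_bound (Real.measurable_exp.comp hφ).aestronglyMeasurable (Real.exp B)
      (Eventually.of_forall fun x => ?_)
    rw [Real.norm_of_nonneg (Real.exp_pos _).le]
    exact Real.exp_le_exp.2 (abs_le.1 (hB x)).2
  have hε : 0 < (J - c) / (2 * (1 + Real.exp B)) := by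
    have := Real.exp_pos B
    have := sub_pos.2 hlt
    positivity
  set ε := (J - c) / (2 * (1 + Real.exp B)) with hεdef
  obtain ⟨g, hg, -⟩ := (hi (ρ + m)).exists_boundedContinuous_integral_sub_le hε
  have hψc : Continuous fun x => max (-B) (min B (g x)) := by fun_prop
  set ψ : X → ℝ := fun x => max (-B) (min B (g x)) with hψ
  have hψB : ∀ x, ψ x ≤ B := fun x =>
    max_le (by linarith [(abs_nonneg _).trans (hB x)]) (min_le_left _ _)
  have jψ : ∀ (α : Measure X) [IsFiniteMeasure α], Integrable ψ α := fun α _ =>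
    integrable_of_continuous_of_compactSpace α hψc
  have je : Integrable (fun x => Real.exp (ψ x)) m :=
    integrable_of_continuous_of_compactSpace m (by fun_prop)
  have hdi : ∀ (α : Measure X) [IsFiniteMeasure α], Integrable (fun x => |φ x - ψ x|) α :=
    fun α _ => ((hi α).sub (jψ α)).abs
  have hφe : Integrable (fun x => Real.exp (φ x) - 1) m := hie.sub (integrable_const 1)
  have hψe : Integrable (fun x => Real.exp (ψ x) - 1) m := je.sub (integrable_const 1)
  have hd : ∫ x, |φ x - ψ x| ∂ρ + ∫ x, |φ x - ψ x| ∂m ≤ ε := by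
    rw [← integral_add_measure (hdi ρ) (hdi m)]
    refine le_trans (integral_mono (hdi _)
      ((hi _).sub (integrable_of_continuous_of_compactSpace _ g.continuous)).abs fun x => ?_) hg
    exact abs_clip_sub_le (hB x)
  have nn1 : 0 ≤ ∫ x, |φ x - ψ x| ∂ρ := integral_nonneg fun x => abs_nonneg _
  have nn2 : 0 ≤ ∫ x, |φ x - ψ x| ∂m := integral_nonneg fun x => abs_nonneg _
  have e1 : ∫ x, φ x ∂ρ - ∫ x, ψ x ∂ρ ≤ ε := by
    rw [← integral_sub (hi ρ) (jψ ρ)]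
    exact (le_abs_self _).trans (abs_integral_le_integral_abs.trans (by linarith))
  have e2 : ∫ x, (Real.exp (ψ x) - 1) ∂m - ∫ x, (Real.exp (φ x) - 1) ∂m ≤ Real.exp B * ε := by
    rw [← integral_sub hψe hφe]
    calc ∫ x, (Real.exp (ψ x) - 1 - (Real.exp (φ x) - 1)) ∂m
        ≤ ∫ x, Real.exp B * |φ x - ψ x| ∂m := by
          refine integral_mono (hψe.sub hφe) ((hdi m).const_mul _) fun x => ?_
          have := abs_exp_sub_exp_le (hψB x) (abs_le.1 (hB x)).2
          rw [abs_sub_comm (ψ x)] at this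
          simp only
          linarith [le_abs_self (Real.exp (ψ x) - Real.exp (φ x))]
      _ = Real.exp B * ∫ x, |φ x - ψ x| ∂m := integral_const_mul _ _
      _ ≤ Real.exp B * ε := by gcongr; linarith
  refine ⟨ψ, hψc, ?_⟩
  have e3 : (1 + Real.exp B) * ε = (J - c) / 2 := by
    rw [hεdef]
    have := Real.exp_pos B
    field_simp
  have : 0 < J - c := sub_pos.2 hlt
  linarith

/-- The relative entropy is lower semicontinuous with respect to `W2`. -/
lemma lowerSemicontinuous_Ent (m : Measure X) [IsProbabilityMeasure m] :
    LowerSemicontinuous fun μ : WassersteinSpace X => Ent m μ.1 := by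
  refine lowerSemicontinuous_iff.2 fun μ c hc => ?_
  have hcfin : c ≠ ⊤ := hc.ne_top
  lift c to ℝ≥0 using hcfin
  rw [Ent_eq_klDiv, ← ENNReal.ofReal_coe_nnreal] at hc
  obtain ⟨φ, hφ, hlt⟩ := exists_continuous_lt_integral_sub m μ.1 hc
  set I := ∫ x, (Real.exp (φ x) - 1) ∂m
  set δ := ∫ x, φ x ∂μ.1 - I - c with hδ
  have hδpos : 0 < δ := by rw [hδ]; linarith
  obtain ⟨C, hC, hCle⟩ := exists_abs_integral_sub_le hφ (half_pos hδpos)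
  have hlim : Tendsto (fun ν : WassersteinSpace X => C * dist μ ν ^ 2) (𝓝 μ) (𝓝 0) := by
    have : Continuous fun ν : WassersteinSpace X => C * dist μ ν ^ 2 := by fun_prop
    simpa using this.tendsto μ
  filter_upwards [hlim.eventually_lt_const (half_pos hδpos)] with ν hν
  rw [WassersteinSpace.dist_eq] at hν
  have h1 := hCle μ.1 ν.1 inferInstance inferInstance
  have h2 := le_abs_self (∫ x, φ x ∂μ.1 - ∫ x, φ x ∂ν.1)
  have h3 : (c : ℝ) < ∫ x, φ x ∂ν.1 - I := by linarith
  rw [Ent_eq_klDiv]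
  refine lt_of_lt_of_le ?_ (ofReal_integral_sub_le_klDiv m ν.1
    (integrable_of_continuous_of_compactSpace _ hφ)
    (integrable_of_continuous_of_compactSpace _ (by fun_prop)))
  rw [← ENNReal.ofReal_coe_nnreal]
  exact (ENNReal.ofReal_lt_ofReal_iff_of_nonneg c.2).2 h3

end LowerSemicontinuity

section Convexity

lemma half_add_mul_le_sqrt_mul_sqrt {s t x y c : ℝ} (hc : x ^ 2 + y ^ 2 ≤ 2 * c) :
    (s * x + t * y) / 2 ≤ √((s ^ 2 + t ^ 2) / 2) * √c := by
  rw [← Real.sqrt_mul (by positivity)]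
  refine Real.le_sqrt_of_sq_le ?_
  have h1 : (s * x + t * y) ^ 2 ≤ (s ^ 2 + t ^ 2) * (x ^ 2 + y ^ 2) := by
    nlinarith [sq_nonneg (s * y - t * x)]
  have h2 := mul_le_mul_of_nonneg_left hc (show 0 ≤ s ^ 2 + t ^ 2 by positivity)
  nlinarith

open InformationTheory ProbabilityTheory

variable {X : Type*} [MeasurableSpace X]

namespace WassersteinSpace

/-- The average of two probability measures. -/
noncomputable def avg (μ ν : WassersteinSpace X) : WassersteinSpace X :=
  ⟨(2 : ℝ≥0∞)⁻¹ • (μ.1 + ν.1), isProbabilityMeasure_half_add μ.1 ν.1⟩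

lemma avg_self (μ : WassersteinSpace X) : avg μ μ = μ := by
  refine WassersteinSpace.ext ?_
  change (2 : ℝ≥0∞)⁻¹ • (μ.1 + μ.1) = μ.1
  rw [← two_smul ℝ≥0∞ μ.1, smul_smul, ENNReal.inv_mul_cancel (by simp) (by simp), one_smul]

lemma absolutelyContinuous_of_Ent_lt_top {m ρ : Measure X} (h : Ent m ρ < ⊤) : ρ ≪ m := by
  by_contra hn
  simp [Ent, hn] at h

variable (m : Measure X) [IsProbabilityMeasure m]

lemma Ent_add_Ent {a b : WassersteinSpace X} (ha : a.1 ≪ m) (hb : b.1 ≪ m) :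
    Ent m a.1 + Ent m b.1 =
      2 * Ent m (avg a b).1 + (klDiv a.1 (avg a b).1 + klDiv b.1 (avg a b).1) := by
  simp_rw [Ent_eq_klDiv]
  exact klDiv_add_klDiv m a.1 b.1 ha hb

variable {m}

lemma Ent_avg_lt_top {a b : WassersteinSpace X} (ha : Ent m a.1 < ⊤) (hb : Ent m b.1 < ⊤) :
    Ent m (avg a b).1 < ⊤ ∧ klDiv a.1 (avg a b).1 < ⊤ ∧ klDiv b.1 (avg a b).1 < ⊤ := by
  have h := Ent_add_Ent m (absolutelyContinuous_of_Ent_lt_top ha)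
    (absolutelyContinuous_of_Ent_lt_top hb)
  have hlt := h ▸ ENNReal.add_lt_top.2 ⟨ha, hb⟩
  rw [ENNReal.add_lt_top, ENNReal.add_lt_top] at hlt
  refine ⟨?_, hlt.2⟩
  by_contra hn
  simp [not_lt_top_iff.1 hn] at hlt

lemma toReal_Ent_add_Ent {a b : WassersteinSpace X} (ha : Ent m a.1 < ⊤) (hb : Ent m b.1 < ⊤) :
    (Ent m a.1).toReal + (Ent m b.1).toReal = 2 * (Ent m (avg a b).1).toReal +
      ((klDiv a.1 (avg a b).1).toReal + (klDiv b.1 (avg a b).1).toReal) := by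
  obtain ⟨h1, h2, h3⟩ := Ent_avg_lt_top ha hb
  have h := Ent_add_Ent m (absolutelyContinuous_of_Ent_lt_top ha)
    (absolutelyContinuous_of_Ent_lt_top hb)
  have h' := congrArg ENNReal.toReal h
  rwa [ENNReal.toReal_add ha.ne hb.ne, ENNReal.toReal_add
    (ENNReal.mul_lt_top (by simp) h1).ne (ENNReal.add_lt_top.2 ⟨h2, h3⟩).ne,
    ENNReal.toReal_add h2.ne h3.ne, ENNReal.toReal_mul, ENNReal.toReal_ofNat] at h'

lemma Ent_avg_le {a b : WassersteinSpace X} (ha : Ent m a.1 < ⊤) (hb : Ent m b.1 < ⊤) :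
    (Ent m (avg a b).1).toReal ≤ ((Ent m a.1).toReal + (Ent m b.1).toReal) / 2 := by
  have h := toReal_Ent_add_Ent ha hb
  linarith [(klDiv a.1 (avg a b).1).toReal_nonneg, (klDiv b.1 (avg a b).1).toReal_nonneg]

variable [MetricSpace X] [CompactSpace X] [BorelSpace X]

lemma dist_avg_sq_le (a b a' b' : WassersteinSpace X) :
    dist (avg a b) (avg a' b') ^ 2 ≤ (dist a a' ^ 2 + dist b b' ^ 2) / 2 :=
  W2_sq_half_add_le a.1 b.1 a'.1 b'.1

lemma Ent_avg_lt {a b : WassersteinSpace X} (ha : Ent m a.1 < ⊤) (hb : Ent m b.1 < ⊤)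
    (hab : a ≠ b) :
    (Ent m (avg a b).1).toReal < ((Ent m a.1).toReal + (Ent m b.1).toReal) / 2 := by
  have h := toReal_Ent_add_Ent ha hb
  obtain ⟨-, h2, -⟩ := Ent_avg_lt_top ha hb
  have hne : klDiv a.1 (avg a b).1 ≠ 0 := by
    rw [ne_eq, klDiv_eq_zero_iff]
    intro heq
    refine hab (dist_eq_zero.1 ?_)
    have heq' : a = avg a b := WassersteinSpace.ext heq
    have hd := dist_avg_sq_le a b b b
    have hd' := dist_avg_sq_le a a a b
    rw [avg_self, ← heq'] at hd hd'
    simp only [dist_self] at hd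
    nlinarith [sq_nonneg (dist a b), dist_nonneg (x := a) (y := b)]
  linarith [ENNReal.toReal_pos hne h2.ne, (klDiv b.1 (avg a b).1).toReal_nonneg]

/-- A coupling starting from an average splits into couplings starting from the two measures, in
such a way that the convexity defect of the entropy does not increase. -/
lemma exists_split {a b z : WassersteinSpace X} (ha : Ent m a.1 < ⊤) (hb : Ent m b.1 < ⊤)
    (hz : Ent m z.1 < ⊤) {γ : Measure (X × X)} (hγ : IsCoupling (avg a b).1 z.1 γ) :
    ∃ a' b' : WassersteinSpace X, Ent m a'.1 < ⊤ ∧ Ent m b'.1 < ⊤ ∧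
      dist a a' ^ 2 + dist b b' ^ 2 ≤ 2 * ∫ p, dist p.1 p.2 ^ 2 ∂γ ∧
      2 * ((Ent m (avg a b).1).toReal - (Ent m z.1).toReal) ≤
        ((Ent m a.1).toReal - (Ent m a'.1).toReal) +
        ((Ent m b.1).toReal - (Ent m b'.1).toReal) := by
  have : Nonempty X := nonempty_of_isProbabilityMeasure a.1
  obtain ⟨hp, h1, h2⟩ := hγ
  set κ := γ.condKernel
  have hdis : (avg a b).1 ⊗ₘ κ = γ := by
    rw [← h1]; exact γ.disintegrate κ
  have hcomp : κ ∘ₘ (avg a b).1 = z.1 := by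
    rw [← h2, ← Measure.snd_compProd, hdis]; rfl
  have hsum : (2 : ℝ≥0∞)⁻¹ • (a.1 ⊗ₘ κ + b.1 ⊗ₘ κ) = γ := by
    rw [← hdis, ← Measure.compProd_add_left, ← Measure.compProd_smul_left]; rfl
  have hcpl : ∀ c : WassersteinSpace X, IsCoupling c.1 (κ ∘ₘ c.1) (c.1 ⊗ₘ κ) := fun c =>
    ⟨inferInstance, Measure.fst_compProd c.1 κ, Measure.snd_compProd c.1 κ⟩
  let push : WassersteinSpace X → WassersteinSpace X := fun c =>
    ⟨κ ∘ₘ c.1, (hcpl c).isProbabilityMeasure.2⟩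
  have hz' : avg (push a) (push b) = z := by
    refine WassersteinSpace.ext ?_
    rw [← hcomp]
    change (2 : ℝ≥0∞)⁻¹ • (κ ∘ₘ a.1 + κ ∘ₘ b.1) = κ ∘ₘ ((2 : ℝ≥0∞)⁻¹ • (a.1 + b.1))
    rw [Measure.comp_smul, Measure.comp_add]
  have hda : klDiv (push a).1 z.1 ≤ klDiv a.1 (avg a b).1 := by
    rw [← hcomp]; exact klDiv_comp_right_le _ _ κ
  have hdb : klDiv (push b).1 z.1 ≤ klDiv b.1 (avg a b).1 := by
    rw [← hcomp]; exact klDiv_comp_right_le _ _ κ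
  obtain ⟨-, fa, fb⟩ := Ent_avg_lt_top ha hb
  have hzm := absolutelyContinuous_of_Ent_lt_top hz
  have hfin : Ent m (push a).1 + Ent m (push b).1 < ⊤ := by
    rw [Ent_add_Ent m, hz']
    · exact ENNReal.add_lt_top.2 ⟨ENNReal.mul_lt_top (by simp) hz,
        ENNReal.add_lt_top.2 ⟨hda.trans_lt fa, hdb.trans_lt fb⟩⟩
    · refine Measure.AbsolutelyContinuous.trans ?_ hzm
      rw [← hz']
      exact absolutelyContinuous_half_add_left _ _
    · refine Measure.AbsolutelyContinuous.trans ?_ hzm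
      rw [← hz']
      exact absolutelyContinuous_half_add_right _ _
  obtain ⟨fa', fb'⟩ := ENNReal.add_lt_top.1 hfin
  refine ⟨push a, push b, fa', fb', ?_, ?_⟩
  · have e1 := W2_sq_le (hcpl a)
    have e2 := W2_sq_le (hcpl b)
    rw [← hsum, integral_smul_measure, integral_add_measure (integrable_dist_sq _)
      (integrable_dist_sq _)]
    simp only [ENNReal.toReal_inv, ENNReal.toReal_ofNat, smul_eq_mul]
    change W2 a.1 (κ ∘ₘ a.1) ^ 2 + W2 b.1 (κ ∘ₘ b.1) ^ 2 ≤ _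
    linarith
  · have e1 := toReal_Ent_add_Ent ha hb
    have e2 := toReal_Ent_add_Ent fa' fb'
    rw [hz'] at e2
    have e3 := ENNReal.toReal_mono fa.ne hda
    have e4 := ENNReal.toReal_mono fb.ne hdb
    linarith

/-- Convexity of the squared slope of the entropy along averages. -/
lemma Ent_avg_sub_le {K : ℝ}
    (hE : IsGeodesicallyConvex (fun μ : WassersteinSpace X => Ent m μ.1) K)
    {a b z : WassersteinSpace X} (ha : Ent m a.1 < ⊤) (hb : Ent m b.1 < ⊤) (hz : Ent m z.1 < ⊤)
    (hSa : descSlope (fun μ : WassersteinSpace X => Ent m μ.1) a ≠ ⊤)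
    (hSb : descSlope (fun μ : WassersteinSpace X => Ent m μ.1) b ≠ ⊤) :
    (Ent m (avg a b).1).toReal - (Ent m z.1).toReal ≤
      √(((descSlope (fun μ : WassersteinSpace X => Ent m μ.1) a).toReal ^ 2 +
        (descSlope (fun μ : WassersteinSpace X => Ent m μ.1) b).toReal ^ 2) / 2) *
        dist (avg a b) z + |K| / 2 * dist (avg a b) z ^ 2 := by
  set Sa := (descSlope (fun μ : WassersteinSpace X => Ent m μ.1) a).toReal
  set Sb := (descSlope (fun μ : WassersteinSpace X => Ent m μ.1) b).toReal
  set F : ℝ → ℝ := fun c => √((Sa ^ 2 + Sb ^ 2) / 2) * √c + |K| / 2 * c with hF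
  have hFc : Continuous F := by fun_prop
  have key : ∀ c, dist (avg a b) z ^ 2 < c →
      (Ent m (avg a b).1).toReal - (Ent m z.1).toReal ≤ F c := by
    intro c hc
    obtain ⟨γ, hγ, hlt⟩ := exists_isCoupling_lt (μ := (avg a b).1) (ν := z.1) hc
    obtain ⟨a', b', fa, fb, hd, he⟩ := exists_split ha hb hz hγ
    have h1 := hE.sub_le_descSlope_mul ha fa hSa
    have h2 := hE.sub_le_descSlope_mul hb fb hSb
    have hd' : dist a a' ^ 2 + dist b b' ^ 2 ≤ 2 * c := by linarith
    have h3 := half_add_mul_le_sqrt_mul_sqrt (s := Sa) (t := Sb) hd'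
    have h4 := mul_le_mul_of_nonneg_left hd' (abs_nonneg K)
    simp only [hF]
    linarith
  have hlim : Tendsto F (𝓝[>] (dist (avg a b) z ^ 2)) (𝓝 (F (dist (avg a b) z ^ 2))) :=
    hFc.continuousAt.tendsto.mono_left nhdsWithin_le_nhds
  have := ge_of_tendsto hlim (eventually_nhdsWithin_of_forall key)
  simpa only [hF, Real.sqrt_sq dist_nonneg] using this

end WassersteinSpace

end Convexity

section Flow

variable {X : Type*} [MetricSpace X] [MeasurableSpace X] [CompactSpace X] [BorelSpace X]
  {m : Measure X}

open WassersteinSpace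

lemma IsCDKinf.isGeodesicallyConvex {K : ℝ} (h : IsCDKinf m K) :
    IsGeodesicallyConvex (fun μ : WassersteinSpace X => Ent m μ.1) K := by
  intro x z hx hz
  obtain ⟨μ, hp, h0, h1, hd, he⟩ := h x.1 z.1 x.2 z.2 hx hz
  classical
  let γ : ℝ → WassersteinSpace X := fun t =>
    if ht : t ∈ Icc (0 : ℝ) 1 then ⟨μ t, hp t ht⟩ else x
  have hγ : ∀ t ∈ Icc (0 : ℝ) 1, (γ t).1 = μ t := fun t ht => by
    simp only [γ, dif_pos ht]
  refine ⟨γ, WassersteinSpace.ext ?_, WassersteinSpace.ext ?_, fun s hs t ht => ?_,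
    fun t ht => ?_⟩
  · rw [hγ 0 (by simp), h0]
  · rw [hγ 1 (by simp), h1]
  · rw [WassersteinSpace.dist_eq, hγ s hs, hγ t ht]
    exact hd s hs t ht
  · simp only [hγ t ht]
    exact he t ht

lemma W2nbhd_eq_map (μ : WassersteinSpace X) :
    W2nbhd μ.1 = map WassersteinSpace.toMeasure (𝓝[≠] μ) := by
  have hb : (W2nbhd μ.1).HasBasis (fun ε : ℝ => ε ∈ Ioi (0 : ℝ))
      fun ε => {ν | IsProbabilityMeasure ν ∧ 0 < W2 μ.1 ν ∧ W2 μ.1 ν < ε} := by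
    refine hasBasis_biInf_principal ?_ ⟨1, mem_Ioi.2 one_pos⟩
    intro a ha b hb
    refine ⟨min a b, mem_Ioi.2 (lt_min ha hb), ?_, ?_⟩
    · exact fun ν hν => ⟨hν.1, hν.2.1, hν.2.2.trans_le (min_le_left _ _)⟩
    · exact fun ν hν => ⟨hν.1, hν.2.1, hν.2.2.trans_le (min_le_right _ _)⟩
  have hb' := (nhdsWithin_hasBasis (Metric.nhds_basis_ball (x := μ)) {μ}ᶜ).map
    WassersteinSpace.toMeasure
  refine hb.ext hb' (fun ε hε => ⟨ε, hε, ?_⟩) fun ε hε => ⟨ε, hε, ?_⟩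
  · rintro _ ⟨ν, ⟨hν, hne⟩, rfl⟩
    rw [Metric.mem_ball, dist_comm] at hν
    exact ⟨ν.2, dist_pos.2 (Ne.symm hne), hν⟩
  · rintro ν ⟨hp, hpos, hlt⟩
    refine ⟨⟨ν, hp⟩, ⟨?_, ?_⟩, rfl⟩
    · rw [Metric.mem_ball, dist_comm]; exact hlt
    · exact (dist_pos (x := μ) (y := ⟨ν, hp⟩).1 hpos).symm

lemma entSlope_eq_descSlope (m : Measure X) (μ : WassersteinSpace X) :
    entSlope m μ.1 = descSlope (fun ν : WassersteinSpace X => Ent m ν.1) μ := by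
  rw [entSlope, W2nbhd_eq_map]
  rfl

lemma IsEDEFlow.isEntGradientFlow {y : ℝ → WassersteinSpace X}
    (hy : IsEDEFlow (fun μ : WassersteinSpace X => Ent m μ.1) y) :
    IsEntGradientFlow m (fun t => (y t).1) (y 0).1 := by
  refine ⟨fun t _ => (y t).2, rfl, fun t _ => hy.lt_top t, fun t _ ε hε => ?_,
    hy.exists_integrable, fun t s ht hts => ?_⟩
  · obtain ⟨δ, hδ, h⟩ := Metric.continuous_iff.1 hy.continuous t ε hε
    exact ⟨δ, hδ, fun s _ hs => h s hs⟩
  · simp_rw [entSlope_eq_descSlope]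
    exact hy.energy_eq t s ht hts

/-- A gradient flow of the entropy, stopped at time `0` for negative times. -/
lemma IsEntGradientFlow.exists_isEDEFlow {ν : ℝ → Measure X} {μ : Measure X}
    (h : IsEntGradientFlow m ν μ) :
    ∃ y : ℝ → WassersteinSpace X, IsEDEFlow (fun μ : WassersteinSpace X => Ent m μ.1) y ∧
      ∀ t, 0 ≤ t → (y t).1 = ν t := by
  obtain ⟨hp, -, hfin, hcont, hac, hen⟩ := h
  let y : ℝ → WassersteinSpace X := fun t => ⟨ν (max t 0), hp _ (le_max_right _ _)⟩
  have hy : ∀ t, 0 ≤ t → (y t).1 = ν t := fun t ht => by simp [y, ht]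
  have hspeed : ∀ r, 0 < r → metricSpeed y r = W2speed ν r := by
    intro r hr
    refine limsup_congr ?_
    have : ∀ᶠ h in 𝓝[≠] (0 : ℝ), -r < h := nhdsWithin_le_nhds (lt_mem_nhds (by linarith))
    filter_upwards [this] with h hh
    rw [WassersteinSpace.dist_eq, hy _ hr.le, hy _ (by linarith)]
  refine ⟨y, ⟨⟨?_, fun a b ha hab => ?_⟩, fun t => hfin _ (le_max_right _ _), fun t ht => ?_,
    fun t s ht hts => ?_⟩, hy⟩
  · refine Metric.continuous_iff.2 fun t ε hε => ?_
    obtain ⟨δ, hδ, h⟩ := hcont (max t 0) (le_max_right _ _) ε hε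
    refine ⟨δ, hδ, fun s hs => h _ (le_max_right _ _) (lt_of_le_of_lt ?_ hs)⟩
    exact abs_max_sub_max_le_abs s t 0
  · obtain ⟨g, hg, hgi, hgle⟩ := hac a b ha hab
    refine ⟨g, hg, hgi, fun t s hat hts hsb => ?_⟩
    rw [WassersteinSpace.dist_eq, hy t (by linarith), hy s (by linarith)]
    exact hgle t s hat hts hsb
  · refine WassersteinSpace.ext ?_
    simp [y, ht]
  · have e1 : ∫⁻ r in Ioc t s, ENNReal.ofReal (metricSpeed y r ^ 2) =
        ∫⁻ r in Ioc t s, ENNReal.ofReal (W2speed ν r ^ 2) :=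
      setLIntegral_congr_fun measurableSet_Ioc fun r hr => by
        simp only [hspeed r (ht.trans_lt hr.1)]
    have e2 : ∫⁻ r in Ioc t s, descSlope (fun μ : WassersteinSpace X => Ent m μ.1) (y r) ^ 2 =
        ∫⁻ r in Ioc t s, entSlope m (ν r) ^ 2 :=
      setLIntegral_congr_fun measurableSet_Ioc fun r hr => by
        simp only [← entSlope_eq_descSlope, hy r (ht.trans hr.1.le)]
    rw [e1, e2, hy t ht, hy s (ht.trans hts)]
    exact hen t s ht hts

end Flow

/-- **Existence and uniqueness of the gradient flow of the entropy** (Theorem 5.7, after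
Theorem 5.5): on a compact normalized `CD(K,∞)` space, every `μ ∈ D(Ent_m)` is the
starting point of a unique gradient flow (in the EDE sense) of `Ent_m` in `(P(X),W₂)`. -/
theorem stmt19 {X : Type*} [MetricSpace X] [CompactSpace X] [Nonempty X]
    [MeasurableSpace X] [BorelSpace X]
    (m : Measure X) [IsProbabilityMeasure m]
    (K : ℝ) (hcd : IsCDKinf m K)
    (μ : Measure X) [IsProbabilityMeasure μ] (hμ : Ent m μ < ⊤) :
    ∃ ν : ℝ → Measure X, IsEntGradientFlow m ν μ ∧
      ∀ ν' : ℝ → Measure X, IsEntGradientFlow m ν' μ → ∀ t : ℝ, 0 ≤ t → ν' t = ν t := by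
  have hE := hcd.isGeodesicallyConvex
  have hlsc := lowerSemicontinuous_Ent m
  obtain ⟨y, hy, hy0⟩ := hE.exists_isEDEFlow hlsc (y₀ := ⟨μ, inferInstance⟩) hμ
  refine ⟨fun t => (y t).1, ?_, fun ν' hν' t ht => ?_⟩
  · have := hy.isEntGradientFlow
    rwa [hy0] at this
  · obtain ⟨u, hu, huν⟩ := hν'.exists_isEDEFlow
    have h0 : u 0 = y 0 := by
      rw [hy0]
      refine WassersteinSpace.ext ?_
      rw [huν 0 le_rfl]
      exact hν'.2.1
    rw [← huν t ht]
    congr 1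
    exact hu.eq_of_average hE hlsc WassersteinSpace.avg WassersteinSpace.avg_self
      WassersteinSpace.dist_avg_sq_le
      (fun a b ha hb => ⟨(WassersteinSpace.Ent_avg_lt_top ha hb).1,
        WassersteinSpace.Ent_avg_le ha hb⟩)
      (fun a b ha hb hab => WassersteinSpace.Ent_avg_lt ha hb hab)
      (fun a b z ha hb hz hSa hSb => WassersteinSpace.Ent_avg_sub_le hE ha hb hz hSa hSb)
      hy h0 ht
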